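/- arXiv:1210.0190 — 7 statements merged into one kernel-verified Lean document; each statement's English description precedes it below -/
import Mathlib

section
/- Let W₁ and W₂ be finite-dimensional irreducible 𝔤-modules over k such that W₁ ⊗_k F and W₂ ⊗_k F are semisimple as (𝔤 ⊗_k F)-modules, and let V_α ⊆ W₁ ⊗_k F and V_β ⊆ W₂ ⊗_k F be irreducible (𝔤 ⊗_k F)-submodules. Then W₁ and W₂ are isomorphic as 𝔤-modules if and only if there exist σ, τ ∈ S such that σ(V_α) and τ(V_β) are isomorphic as (𝔤 ⊗_k F)-modules. -/
open scoped TensorProduct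

section

variable (k F : Type*) [Field k] [Field F] [Algebra k F]

private lemma galMap_aux (σ : F ≃ₐ[k] F) (W : Type*) [AddCommGroup W] [Module k W]
    (c : F) (x : F ⊗[k] W) :
    LinearMap.rTensor W σ.toLinearMap (c • x) = σ c • LinearMap.rTensor W σ.toLinearMap x := by
  induction x using TensorProduct.induction_on with
  | zero => simp
  | tmul f w => simp [TensorProduct.smul_tmul', smul_eq_mul, map_mul]
  | add x y hx hy => rw [smul_add, map_add, map_add, smul_add, hx, hy]

/-- The `σ`-semilinear Galois action `id_W ⊗ σ` on the base change `F ⊗[k] W`. -/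
noncomputable def galMap (σ : F ≃ₐ[k] F) (W : Type*) [AddCommGroup W] [Module k W] :
    (F ⊗[k] W) →ₛₗ[(σ.toRingEquiv : F →+* F)] (F ⊗[k] W) where
  toFun := LinearMap.rTensor W σ.toLinearMap
  map_add' := map_add _
  map_smul' := galMap_aux k F σ W

/-- The image `σ(V)` of an `F`-subspace of `F ⊗[k] W` under the Galois action:
again an `F`-subspace. -/
noncomputable def galSub (σ : F ≃ₐ[k] F) {W : Type*} [AddCommGroup W] [Module k W]
    (V : Submodule F (F ⊗[k] W)) : Submodule F (F ⊗[k] W) :=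
  Submodule.map (galMap k F σ W) V

variable (𝔤 : Type*) [LieRing 𝔤] [LieAlgebra k 𝔤]

/-- `σ(V_α)` and `τ(V_β)` are isomorphic as `(𝔤 ⊗_k F)`-modules; since the Galois
images are a priori only `F`-subspaces, we phrase this via the (unique) Lie submodules
having these subspaces as underlying `F`-subspaces. -/
def GalConjIso (σ τ : F ≃ₐ[k] F)
    {W₁ W₂ : Type*} [AddCommGroup W₁] [Module k W₁] [LieRingModule 𝔤 W₁] [LieModule k 𝔤 W₁]
    [AddCommGroup W₂] [Module k W₂] [LieRingModule 𝔤 W₂] [LieModule k 𝔤 W₂]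
    (Vα : LieSubmodule F (F ⊗[k] 𝔤) (F ⊗[k] W₁))
    (Vβ : LieSubmodule F (F ⊗[k] 𝔤) (F ⊗[k] W₂)) : Prop :=
  ∃ (Vα' : LieSubmodule F (F ⊗[k] 𝔤) (F ⊗[k] W₁))
    (Vβ' : LieSubmodule F (F ⊗[k] 𝔤) (F ⊗[k] W₂)),
    (Vα' : Submodule F (F ⊗[k] W₁)) = galSub k F σ (Vα : Submodule F (F ⊗[k] W₁)) ∧
    (Vβ' : Submodule F (F ⊗[k] W₂)) = galSub k F τ (Vβ : Submodule F (F ⊗[k] W₂)) ∧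
    Nonempty (Vα' ≃ₗ⁅F, F ⊗[k] 𝔤⁆ Vβ')

/-- A Lie module is semisimple if it is a direct sum of irreducible submodules. -/
def IsSemisimpleLieModule (R L M : Type*) [CommRing R] [LieRing L] [LieAlgebra R L]
    [AddCommGroup M] [Module R M] [LieRingModule L M] : Prop :=
  ∃ (ι : Type) (p : ι → LieSubmodule R L M),
    (∀ i, IsAtom (p i)) ∧ iSupIndep p ∧ (⨆ i, p i) = ⊤

end

section helpers

variable {R L M N : Type*} [CommRing R] [LieRing L] [LieAlgebra R L]
    [AddCommGroup M] [Module R M] [LieRingModule L M] [LieModule R L M]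
    [AddCommGroup N] [Module R N] [LieRingModule L N] [LieModule R L N]

theorem hp_schur (hM : LieModule.IsIrreducible R L M) (hN : LieModule.IsIrreducible R L N)
    (f : M →ₗ⁅R,L⁆ N) (m : M) (hm : f m ≠ 0) : Nonempty (M ≃ₗ⁅R,L⁆ N) := by
  have hk : f.ker = ⊥ := by
    rcases hM.eq_bot_or_eq_top f.ker with h | h
    · exact h
    · exfalso
      have : m ∈ f.ker := by rw [h]; exact LieSubmodule.mem_top m
      exact hm (by simpa using this)
  have hr : f.range = ⊤ := by
    rcases hN.eq_bot_or_eq_top f.range with h | h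
    · exfalso
      have : f m ∈ f.range := (LieModuleHom.mem_range f (f m)).2 ⟨m, rfl⟩
      rw [h] at this
      exact hm (by simpa using this)
    · exact h
  have hb : Function.Bijective (f : M →ₗ[R] N) :=
    ⟨(LieModuleHom.ker_eq_bot f).1 hk, (LieModuleHom.range_eq_top f).1 hr⟩
  exact ⟨{ f, LinearEquiv.ofBijective (f : M →ₗ[R] N) hb with }⟩

theorem hp_irr (V : LieSubmodule R L M) (hV : IsAtom V) : LieModule.IsIrreducible R L V := by
  have hnt : Nontrivial V := (LieSubmodule.nontrivial_iff_ne_bot R L M).2 hV.1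
  apply LieModule.IsIrreducible.mk
  intro P hP
  have h1 : P.map V.incl ≤ V := LieSubmodule.map_incl_le
  rcases hV.le_iff.1 h1 with h | h
  · exfalso
    apply hP
    rw [LieSubmodule.eq_bot_iff]
    intro m hm
    have : V.incl m ∈ P.map V.incl := LieSubmodule.mem_map_of_mem hm
    rw [h] at this
    exact Subtype.ext ((LieSubmodule.mem_bot _).1 this)
  · rw [eq_top_iff]
    intro m _
    have : (m : M) ∈ P.map V.incl := by rw [h]; exact m.2
    obtain ⟨n, hn, hnm⟩ := (LieSubmodule.mem_map _).1 this
    rwa [← Subtype.ext (a1 := n) (a2 := m) hnm]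

theorem hp_ne_bot (V : LieSubmodule R L M) (hV : V ≠ ⊥) : ∃ m ∈ V, m ≠ 0 := by
  by_contra! h
  exact hV ((LieSubmodule.eq_bot_iff V).2 h)

theorem hp_proj (h : IsSemisimpleLieModule R L M) (V : LieSubmodule R L M) :
    ∃ p : M →ₗ⁅R,L⁆ V, ∀ v : V, p v = v := by
  obtain ⟨ι, q, hq, -, htop⟩ := h
  have hs : sSup {a : LieSubmodule R L M | IsAtom a} = ⊤ := by
    rw [eq_top_iff, ← htop]
    exact iSup_le fun i => le_sSup (hq i)
  have := complementedLattice_of_sSup_atoms_eq_top hs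
  obtain ⟨C, hC⟩ := exists_isCompl V
  have hC' : IsCompl (V : Submodule R M) (C : Submodule R M) := LieSubmodule.isCompl_toSubmodule.2 hC
  let p0 : M →ₗ[R] V := Submodule.projectionOnto (V : Submodule R M) (C : Submodule R M) hC'
  have hl : ∀ v : V, p0 v = v := fun v => Submodule.projectionOnto_apply_left hC' v
  have hr : ∀ c ∈ C, p0 c = 0 := fun c hc => Submodule.projectionOnto_apply_right hC' ⟨c, hc⟩
  refine ⟨{ p0 with map_lie' := ?_ }, hl⟩
  intro x m
  change p0 ⁅x, m⁆ = ⁅x, p0 m⁆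
  have hm : m ∈ V ⊔ C := by rw [hC.sup_eq_top]; exact LieSubmodule.mem_top m
  obtain ⟨v, hv, c, hc, rfl⟩ := (LieSubmodule.mem_sup V C m).1 hm
  rw [lie_add, map_add, map_add, hr c hc, hr _ (C.lie_mem hc), hl ⟨v, hv⟩, add_zero, add_zero]
  exact hl ⁅x, (⟨v, hv⟩ : V)⁆

end helpers

section helpers2

variable {k F : Type*} [Field k] [Field F] [Algebra k F]
  {𝔤 : Type*} [LieRing 𝔤] [LieAlgebra k 𝔤]
  {W : Type*} [AddCommGroup W] [Module k W] [LieRingModule 𝔤 W] [LieModule k 𝔤 W]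

theorem hp_add_lie (x y : F ⊗[k] 𝔤) (m : F ⊗[k] W) : ⁅x + y, m⁆ = ⁅x, m⁆ + ⁅y, m⁆ :=
  add_lie x y m

theorem hp_zero_lie (m : F ⊗[k] W) : ⁅(0 : F ⊗[k] 𝔤), m⁆ = 0 :=
  zero_lie m

theorem hp_gal_zero (σ : F ≃ₐ[k] F) : galMap k F σ W 0 = 0 := map_zero _

theorem hp_gal_tmul (σ : F ≃ₐ[k] F) (a : F) (w : W) :
    galMap k F σ W (a ⊗ₜ w) = σ a ⊗ₜ w := rfl

theorem hp_gal_lie (σ : F ≃ₐ[k] F) (x : F ⊗[k] 𝔤) (m : F ⊗[k] W) :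
    galMap k F σ W ⁅x, m⁆ = ⁅galMap k F σ 𝔤 x, galMap k F σ W m⁆ := by
  induction x using TensorProduct.induction_on with
  | zero => rw [hp_zero_lie, hp_gal_zero, hp_gal_zero, hp_zero_lie]
  | add x y hx hy => rw [hp_add_lie, map_add, map_add, hp_add_lie, hx, hy]
  | tmul a x =>
    induction m using TensorProduct.induction_on with
    | zero => rw [lie_zero, hp_gal_zero, lie_zero]
    | add m n hm hn => rw [lie_add, map_add, map_add, lie_add, hm, hn]
    | tmul b w =>
      rw [LieAlgebra.ExtendScalars.bracket_tmul, hp_gal_tmul, hp_gal_tmul, hp_gal_tmul,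
        LieAlgebra.ExtendScalars.bracket_tmul, map_mul]

theorem hp_gal_gal (σ τ : F ≃ₐ[k] F) (h : ∀ a, σ (τ a) = a) (m : F ⊗[k] W) :
    galMap k F σ W (galMap k F τ W m) = m := by
  induction m using TensorProduct.induction_on with
  | zero => rw [hp_gal_zero, hp_gal_zero]
  | add m n hm hn => rw [map_add, map_add, hm, hn]
  | tmul b w => rw [hp_gal_tmul, hp_gal_tmul, h]

/-- Galois image as Lie submodule. -/
noncomputable def hpGal (σ : F ≃ₐ[k] F) (V : LieSubmodule F (F ⊗[k] 𝔤) (F ⊗[k] W)) :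
    LieSubmodule F (F ⊗[k] 𝔤) (F ⊗[k] W) :=
  { galSub k F σ (V : Submodule F (F ⊗[k] W)) with
    lie_mem := by
      rintro x _ ⟨m, hm, rfl⟩
      refine ⟨⁅galMap k F σ.symm 𝔤 x, m⁆, V.lie_mem hm, ?_⟩
      rw [hp_gal_lie, hp_gal_gal σ σ.symm (by simp)] }

theorem hp_mem (σ : F ≃ₐ[k] F) (V : LieSubmodule F (F ⊗[k] 𝔤) (F ⊗[k] W)) (m : F ⊗[k] W) :
    m ∈ hpGal σ V ↔ galMap k F σ.symm W m ∈ V := by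
  constructor
  · rintro ⟨n, hn, rfl⟩
    rw [hp_gal_gal σ.symm σ (by simp)]
    exact hn
  · intro h
    exact ⟨_, h, hp_gal_gal σ σ.symm (by simp) m⟩

theorem hp_atom (σ : F ≃ₐ[k] F) (V : LieSubmodule F (F ⊗[k] 𝔤) (F ⊗[k] W)) (hV : IsAtom V) :
    IsAtom (hpGal σ V) := by
  let e : LieSubmodule F (F ⊗[k] 𝔤) (F ⊗[k] W) ≃o LieSubmodule F (F ⊗[k] 𝔤) (F ⊗[k] W) :=
    { toFun := hpGal σ
      invFun := hpGal σ.symm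
      left_inv := by
        intro P
        ext m
        rw [hp_mem, hp_mem, hp_gal_gal _ _ (by simp)]
      right_inv := by
        intro P
        ext m
        rw [hp_mem, hp_mem, hp_gal_gal _ _ (by simp)]
      map_rel_iff' := by
        intro P Q
        constructor
        · intro h m hm
          have := h ((hp_mem σ P (galMap k F σ W m)).2 (by
            rwa [hp_gal_gal _ _ (by simp)]))
          rw [Equiv.coe_fn_mk, hp_mem, hp_gal_gal _ _ (by simp)] at this
          exact this
        · intro h m hm
          exact (hp_mem σ Q m).2 (h ((hp_mem σ P m).1 hm)) }
  exact (e.isAtom_iff V).2 hV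

/-- Contraction against a functional. -/
noncomputable def hpC (W : Type*) [AddCommGroup W] [Module k W] (c : F →ₗ[k] k) :
    F ⊗[k] W →ₗ[k] W :=
  (TensorProduct.lid k W).toLinearMap ∘ₗ LinearMap.rTensor W c

theorem hpC_tmul (c : F →ₗ[k] k) (a : F) (w : W) : hpC W c (a ⊗ₜ w) = c a • w := by
  simp [hpC]

theorem hpC_lie (c : F →ₗ[k] k) (x : 𝔤) (m : F ⊗[k] W) :
    hpC W c ⁅(1 : F) ⊗ₜ[k] x, m⁆ = ⁅x, hpC W c m⁆ := by
  induction m using TensorProduct.induction_on with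
  | zero => simp
  | add m n hm hn => rw [lie_add, map_add, map_add, lie_add, hm, hn]
  | tmul b w => simp [LieAlgebra.ExtendScalars.bracket_tmul, hpC_tmul]

theorem hpC_ne [FiniteDimensional k F] (m : F ⊗[k] W) (hm : m ≠ 0) :
    ∃ c : F →ₗ[k] k, hpC W c m ≠ 0 := by
  by_contra! h
  apply hm
  let b := Module.finBasis k F
  have key : m = ∑ i, b i ⊗ₜ[k] hpC W (b.coord i) m := by
    clear h hm
    induction m using TensorProduct.induction_on with
    | zero => simp
    | add m n hm hn =>
      conv_lhs => rw [hm, hn]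
      simp [TensorProduct.tmul_add, Finset.sum_add_distrib]
    | tmul a w =>
      simp only [hpC_tmul, TensorProduct.tmul_smul, ← TensorProduct.smul_tmul',
        ← TensorProduct.sum_tmul]
      simp only [TensorProduct.smul_tmul', ← TensorProduct.sum_tmul]
      congr 1
      exact (b.sum_repr a).symm
  rw [key]
  simp [h]

theorem hpC_trace_ne [FiniteDimensional k F] [IsGalois k F] (m : F ⊗[k] W) (hm : m ≠ 0) :
    ∃ a : F, hpC W (Algebra.trace k F) (a • m) ≠ 0 := by
  obtain ⟨c, hc⟩ := hpC_ne m hm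
  let a := ((Algebra.traceForm k F).toDual (traceForm_nondegenerate k F)).symm c
  have ha : ∀ b, Algebra.trace k F (a * b) = c b := by
    intro b
    have := LinearMap.BilinForm.apply_toDual_symm_apply
      (hB := traceForm_nondegenerate k F) c b
    rwa [Algebra.traceForm_apply] at this
  refine ⟨a, ?_⟩
  convert hc using 1
  clear hc hm
  induction m using TensorProduct.induction_on with
  | zero => simp
  | add m n hm hn => rw [smul_add, map_add, map_add, hm, hn]
  | tmul b w => rw [TensorProduct.smul_tmul', hpC_tmul, hpC_tmul, smul_eq_mul, ha]

theorem hpC_trace [FiniteDimensional k F] [IsGalois k F] (m : F ⊗[k] W) :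
    (1 : F) ⊗ₜ[k] hpC W (Algebra.trace k F) m = ∑ σ : F ≃ₐ[k] F, galMap k F σ W m := by
  induction m using TensorProduct.induction_on with
  | zero =>
    rw [map_zero, TensorProduct.tmul_zero]
    exact (Finset.sum_eq_zero fun σ _ => hp_gal_zero σ).symm
  | add m n hm hn =>
    simp only [map_add, TensorProduct.tmul_add, hm, hn, Finset.sum_add_distrib]
  | tmul b w =>
    have : ∀ σ : F ≃ₐ[k] F, galMap k F σ W (b ⊗ₜ w) = σ b ⊗ₜ w := fun σ => rfl
    simp only [this, ← TensorProduct.sum_tmul]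
    rw [← trace_eq_sum_automorphisms, hpC_tmul, TensorProduct.tmul_smul,
      TensorProduct.smul_tmul', Algebra.algebraMap_eq_smul_one]

theorem hp_sup [FiniteDimensional k F] [IsGalois k F] (hW : LieModule.IsIrreducible k 𝔤 W)
    (V : LieSubmodule F (F ⊗[k] 𝔤) (F ⊗[k] W)) (hV : V ≠ ⊥) :
    ⨆ σ : F ≃ₐ[k] F, hpGal σ V = ⊤ := by
  let T : LieSubmodule k 𝔤 W :=
    { ((V : Submodule F (F ⊗[k] W)).restrictScalars k).map (hpC W (Algebra.trace k F)) with
      lie_mem := by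
        rintro x _ ⟨m, hm, rfl⟩
        exact ⟨⁅(1 : F) ⊗ₜ[k] x, m⁆, V.lie_mem hm, hpC_lie _ _ _⟩ }
  have hT : T = ⊤ := by
    refine (hW.eq_bot_or_eq_top T).resolve_left fun h => ?_
    obtain ⟨m, hm, hm0⟩ := hp_ne_bot V hV
    obtain ⟨a, ha⟩ := hpC_trace_ne m hm0
    have : hpC W (Algebra.trace k F) (a • m) ∈ T := ⟨a • m, V.smul_mem a hm, rfl⟩
    rw [h] at this
    exact ha (by simpa using this)
  rw [eq_top_iff]
  intro m _
  induction m using TensorProduct.induction_on with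
  | zero => exact zero_mem _
  | add m n hm hn => exact add_mem (hm trivial) (hn trivial)
  | tmul a w =>
    have hw : w ∈ T := by rw [hT]; exact LieSubmodule.mem_top w
    obtain ⟨u, hu, rfl⟩ := hw
    have : a ⊗ₜ[k] hpC W (Algebra.trace k F) u
        = a • ((1 : F) ⊗ₜ[k] hpC W (Algebra.trace k F) u) := by
      rw [TensorProduct.smul_tmul', smul_eq_mul, mul_one]
    rw [this, hpC_trace]
    refine SMulMemClass.smul_mem a (sum_mem fun σ _ => ?_)
    exact le_iSup (fun σ : F ≃ₐ[k] F => hpGal σ V) σ ⟨u, hu, rfl⟩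

end helpers2

/-- Two finite-dimensional irreducible `𝔤`-modules over `k`, whose base
changes to `F` are semisimple, are isomorphic iff some Galois conjugates of irreducible
constituents of their base changes are isomorphic. -/
theorem stmt0
    (k F : Type*) [Field k] [Field F] [Algebra k F] [FiniteDimensional k F] [IsGalois k F]
    (𝔤 : Type*) [LieRing 𝔤] [LieAlgebra k 𝔤] [Module.Finite k 𝔤]
    (W₁ W₂ : Type*)
    [AddCommGroup W₁] [Module k W₁] [LieRingModule 𝔤 W₁] [LieModule k 𝔤 W₁] [Module.Finite k W₁]
    [AddCommGroup W₂] [Module k W₂] [LieRingModule 𝔤 W₂] [LieModule k 𝔤 W₂] [Module.Finite k W₂]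
    (hW₁ : LieModule.IsIrreducible k 𝔤 W₁) (hW₂ : LieModule.IsIrreducible k 𝔤 W₂)
    (hss₁ : IsSemisimpleLieModule F (F ⊗[k] 𝔤) (F ⊗[k] W₁))
    (hss₂ : IsSemisimpleLieModule F (F ⊗[k] 𝔤) (F ⊗[k] W₂))
    (Vα : LieSubmodule F (F ⊗[k] 𝔤) (F ⊗[k] W₁)) (hVα : IsAtom Vα)
    (Vβ : LieSubmodule F (F ⊗[k] 𝔤) (F ⊗[k] W₂)) (hVβ : IsAtom Vβ) :
    Nonempty (W₁ ≃ₗ⁅k, 𝔤⁆ W₂) ↔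
      ∃ σ τ : F ≃ₐ[k] F, GalConjIso k F 𝔤 σ τ Vα Vβ := by
  constructor
  · rintro ⟨φ⟩
    obtain ⟨p, hp⟩ := hp_proj hss₂ Vβ
    have hΦl : ∀ (x : F ⊗[k] 𝔤) (m : F ⊗[k] W₁),
        (φ : W₁ →ₗ[k] W₂).baseChange F ⁅x, m⁆ = ⁅x, (φ : W₁ →ₗ[k] W₂).baseChange F m⁆ := by
      intro x m
      induction x using TensorProduct.induction_on with
      | zero => rw [hp_zero_lie, hp_zero_lie, map_zero]
      | add x y hx hy => rw [hp_add_lie, map_add, hp_add_lie, hx, hy]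
      | tmul a x =>
        induction m using TensorProduct.induction_on with
        | zero => simp
        | add m n hm hn => rw [lie_add, map_add, map_add, lie_add, hm, hn]
        | tmul b w =>
          have h := LieModuleHom.map_lie (φ : W₁ →ₗ⁅k, 𝔤⁆ W₂) x w
          simp only [LieAlgebra.ExtendScalars.bracket_tmul, LinearMap.baseChange_tmul]
          exact congrArg _ h
    let Φ : F ⊗[k] W₁ →ₗ⁅F, F ⊗[k] 𝔤⁆ F ⊗[k] W₂ :=
      { (φ : W₁ →ₗ[k] W₂).baseChange F with map_lie' := fun {x m} => hΦl x m }
    have hΦs : Function.Surjective Φ := by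
      have : Function.Surjective ((φ : W₁ →ₗ[k] W₂).lTensor F) :=
        LinearMap.lTensor_surjective F φ.surjective
      exact this
    let g := p.comp Φ
    obtain ⟨v, hv, hv0⟩ := hp_ne_bot Vβ hVβ.1
    obtain ⟨u, hu⟩ := hΦs v
    have hgu : g u ≠ 0 := by
      intro h
      have h2 : p v = 0 := by rw [← hu]; exact h
      rw [hp ⟨v, hv⟩] at h2
      exact hv0 (congrArg Subtype.val h2)
    have hex : ∃ σ : F ≃ₐ[k] F, ∃ m ∈ hpGal σ Vα, g m ≠ 0 := by
      by_contra! hcon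
      have hle : ⨆ σ : F ≃ₐ[k] F, hpGal σ Vα ≤ g.ker :=
        iSup_le fun σ m hm => by simpa using hcon σ m hm
      rw [hp_sup hW₁ Vα hVα.1] at hle
      exact hgu (by simpa using hle (LieSubmodule.mem_top u))
    obtain ⟨σ, m, hm, hgm⟩ := hex
    have hβ := hp_atom (1 : F ≃ₐ[k] F) Vβ hVβ
    have h1 : (Vβ : Submodule F (F ⊗[k] W₂)) = galSub k F 1 (Vβ : Submodule F (F ⊗[k] W₂)) := by
      have : Vβ = hpGal (1 : F ≃ₐ[k] F) Vβ := by
        ext m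
        rw [hp_mem]
        have : galMap k F (1 : F ≃ₐ[k] F).symm W₂ m = m := by
          induction m using TensorProduct.induction_on with
          | zero => exact hp_gal_zero _
          | add m n hm hn => rw [map_add, hm, hn]
          | tmul b w => rfl
        rw [this]
      exact congrArg LieSubmodule.toSubmodule this
    exact ⟨σ, 1, hpGal σ Vα, Vβ, rfl, h1,
      hp_schur (hp_irr _ (hp_atom σ Vα hVα)) (hp_irr _ hVβ)
        (g.comp (hpGal σ Vα).incl) ⟨m, hm⟩ hgm⟩
  · rintro ⟨σ, τ, Vα', Vβ', hα, hβ, ⟨e⟩⟩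
    have hα' : Vα' = hpGal σ Vα := LieSubmodule.toSubmodule_injective hα
    have hat : IsAtom Vα' := hα' ▸ hp_atom σ Vα hVα
    obtain ⟨p, hp⟩ := hp_proj hss₁ Vα'
    obtain ⟨v, hv, hv0⟩ := hp_ne_bot Vα' hat.1
    let f : F ⊗[k] W₁ →ₗ⁅F, F ⊗[k] 𝔤⁆ F ⊗[k] W₂ :=
      Vβ'.incl.comp ((e : Vα' →ₗ⁅F, F ⊗[k] 𝔤⁆ Vβ').comp p)
    have hfv : f v ≠ 0 := by
      intro h
      have h2 : e (p v) = 0 := Subtype.ext h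
      rw [hp ⟨v, hv⟩] at h2
      have h3 : (⟨v, hv⟩ : Vα') = 0 := e.injective (h2.trans (map_zero (e : Vα' →ₗ⁅F, F ⊗[k] 𝔤⁆ Vβ')).symm)
      exact hv0 (congrArg Subtype.val h3)
    have hw : ∃ w : W₁, f ((1 : F) ⊗ₜ[k] w) ≠ 0 := by
      by_contra! hcon
      apply hfv
      clear hfv hv0 hv
      induction v using TensorProduct.induction_on with
      | zero => simp
      | add m n hm hn => rw [map_add, hm, hn, add_zero]
      | tmul b w =>
        rw [show b ⊗ₜ[k] w = b • ((1 : F) ⊗ₜ[k] w) by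
          rw [TensorProduct.smul_tmul', smul_eq_mul, mul_one], map_smul, hcon, smul_zero]
    obtain ⟨w, hw⟩ := hw
    obtain ⟨c, hc⟩ := hpC_ne _ hw
    let q : W₁ →ₗ⁅k, 𝔤⁆ W₂ :=
      { hpC W₂ c ∘ₗ ((f : F ⊗[k] W₁ →ₗ[F] F ⊗[k] W₂).restrictScalars k) ∘ₗ
          (TensorProduct.mk k F W₁ 1) with
        map_lie' := by
          intro x m
          change hpC W₂ c (f ((1 : F) ⊗ₜ[k] ⁅x, m⁆)) = ⁅x, hpC W₂ c (f ((1 : F) ⊗ₜ[k] m))⁆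
          rw [← hpC_lie, ← LieModuleHom.map_lie, LieAlgebra.ExtendScalars.bracket_tmul, mul_one] }
    exact hp_schur hW₁ hW₂ q w hc
end

section
/- Let V be an irreducible (𝔤 ⊗_k F)-module. If W and W' are finite-dimensional irreducible 𝔤-modules over k whose base changes W ⊗_k F and W' ⊗_k F are semisimple (𝔤 ⊗_k F)-modules and each contains a (𝔤 ⊗_k F)-submodule isomorphic to V, then W and W' are isomorphic as 𝔤-modules. In other words, there exists at most one irreducible 𝔤-module over k (up to isomorphism) whose base change to F contains V as a submodule. -/
open scoped TensorProduct

/-- There is at most one irreducible `𝔤`-module over `k` (up to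
isomorphism) whose base change to `F` contains a given irreducible `(𝔤 ⊗_k F)`-module `V`
as a submodule. -/
theorem stmt1
    (k F : Type*) [Field k] [Field F] [Algebra k F] [FiniteDimensional k F] [IsGalois k F]
    (𝔤 : Type*) [LieRing 𝔤] [LieAlgebra k 𝔤] [Module.Finite k 𝔤]
    (V : Type*) [AddCommGroup V] [Module F V]
    [LieRingModule (F ⊗[k] 𝔤) V] [LieModule F (F ⊗[k] 𝔤) V]
    (hV : LieModule.IsIrreducible F (F ⊗[k] 𝔤) V)
    (W W' : Type*)
    [AddCommGroup W] [Module k W] [LieRingModule 𝔤 W] [LieModule k 𝔤 W] [Module.Finite k W]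
    [AddCommGroup W'] [Module k W'] [LieRingModule 𝔤 W'] [LieModule k 𝔤 W'] [Module.Finite k W']
    (hW : LieModule.IsIrreducible k 𝔤 W) (hW' : LieModule.IsIrreducible k 𝔤 W')
    (hss : IsSemisimpleLieModule F (F ⊗[k] 𝔤) (F ⊗[k] W))
    (hss' : IsSemisimpleLieModule F (F ⊗[k] 𝔤) (F ⊗[k] W'))
    (hsub : ∃ N : LieSubmodule F (F ⊗[k] 𝔤) (F ⊗[k] W), Nonempty (N ≃ₗ⁅F, F ⊗[k] 𝔤⁆ V))
    (hsub' : ∃ N : LieSubmodule F (F ⊗[k] 𝔤) (F ⊗[k] W'), Nonempty (N ≃ₗ⁅F, F ⊗[k] 𝔤⁆ V)) :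
    Nonempty (W ≃ₗ⁅k, 𝔤⁆ W') := by
  obtain ⟨N, ⟨e⟩⟩ := hsub
  obtain ⟨N', ⟨e'⟩⟩ := hsub'
  -- nonzero vector of V
  have hVnt : ∃ v : V, v ≠ 0 := by
    by_contra! h
    exact (bot_ne_top (α := LieSubmodule F (F ⊗[k] 𝔤) V)) (by ext x; simp [h x])
  obtain ⟨v, hv⟩ := hVnt
  -- complement
  have hcl : ComplementedLattice (LieSubmodule F (F ⊗[k] 𝔤) (F ⊗[k] W)) := by
    obtain ⟨ι, p, hp, -, htop⟩ := hss
    apply complementedLattice_of_sSup_atoms_eq_top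
    rw [eq_top_iff, ← htop]
    exact iSup_le fun i => le_sSup (hp i)
  obtain ⟨C, hC⟩ := exists_isCompl N
  have hC' : IsCompl (N : Submodule F (F ⊗[k] W)) (C : Submodule F (F ⊗[k] W)) := by
    constructor
    · rw [LieSubmodule.disjoint_toSubmodule]; exact hC.disjoint
    · rw [LieSubmodule.codisjoint_toSubmodule]; exact hC.codisjoint
  let π := Submodule.projectionOnto _ _ hC'
  let φ : (F ⊗[k] W) →ₗ[F] (F ⊗[k] W') :=
    (N' : Submodule F (F ⊗[k] W')).subtype ∘ₗ ((e.trans e'.symm).toLinearEquiv.toLinearMap) ∘ₗ π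
  have hπ : ∀ (x : F ⊗[k] 𝔤) (m : F ⊗[k] W), π ⁅x, m⁆ = (⁅x, (π m : N)⁆ : N) := by
    intro x m
    have hm : m ∈ (N : Submodule F (F ⊗[k] W)) ⊔ (C : Submodule F (F ⊗[k] W)) := by
      rw [hC'.sup_eq_top]; trivial
    obtain ⟨n, hn, c, hc, rfl⟩ := Submodule.mem_sup.1 hm
    have h1 : ∀ n (hn : n ∈ N), π n = (⟨n, hn⟩ : N) := fun n hn =>
      Submodule.projectionOnto_apply_left hC' ⟨n, hn⟩
    have h2 : ∀ c (hc : c ∈ C), π c = 0 := fun c hc =>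
      Submodule.projectionOnto_apply_right hC' ⟨c, hc⟩
    rw [lie_add, map_add, map_add, h1 n hn, h2 c hc, h1 _ (N.lie_mem hn), h2 _ (C.lie_mem hc),
      add_zero, add_zero]
    rfl
  have hφ : ∀ (x : F ⊗[k] 𝔤) (m : F ⊗[k] W), φ ⁅x, m⁆ = ⁅x, φ m⁆ := by
    intro x m
    change (((e.trans e'.symm) (π ⁅x, m⁆) : N') : F ⊗[k] W') = ⁅x, (((e.trans e'.symm) (π m) : N') : F ⊗[k] W')⁆
    rw [hπ, ← LieSubmodule.coe_bracket]
    congr 1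
    exact (e.trans e'.symm).toLieModuleHom.map_lie x (π m)
  have hφ0 : φ ≠ 0 := by
    intro h0
    have : φ ((e.symm v : N) : F ⊗[k] W) = 0 := by rw [h0]; rfl
    have h1 : π ((e.symm v : N) : F ⊗[k] W) = e.symm v :=
      Submodule.projectionOnto_apply_left hC' (e.symm v)
    change (((e.trans e'.symm) (π _) : N') : F ⊗[k] W') = 0 at this
    rw [h1] at this
    have h2 : (e.trans e'.symm) (e.symm v) = 0 := Subtype.ext this
    have h3 : e.symm v = 0 := (e.trans e'.symm).injective (h2.trans (map_zero (e.trans e'.symm).toLieModuleHom).symm)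
    exact hv (e.symm.injective (h3.trans (map_zero e.symm.toLieModuleHom).symm))
  -- slice
  have hsl : ∃ (w : W) (l : F →ₗ[k] k), TensorProduct.lid k W' (l.rTensor W' (φ (1 ⊗ₜ w))) ≠ 0 := by
    by_contra! h
    apply hφ0
    ext w
    simp only [TensorProduct.AlgebraTensorModule.curry_apply, LinearMap.restrictScalars_self,
      TensorProduct.curry_apply, LinearMap.coe_restrictScalars, LinearMap.zero_apply]
    let b := Module.finBasis k F
    have := fun i => h w (b.coord i)
    generalize φ (1 ⊗ₜ w) = y at *
    apply (TensorProduct.equivFinsuppOfBasisLeft b).injective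
    ext i
    rw [map_zero]
    simpa [TensorProduct.equivFinsuppOfBasisLeft_apply] using this i
  obtain ⟨w, l, hwl⟩ := hsl
  let f : W →ₗ⁅k, 𝔤⁆ W' :=
    { (TensorProduct.lid k W').toLinearMap ∘ₗ l.rTensor W' ∘ₗ φ.restrictScalars k ∘ₗ
        TensorProduct.mk k F W 1 with
      map_lie' := by
        intro x m
        have h1 : (1 : F) ⊗ₜ[k] ⁅x, m⁆ = ⁅(1 : F) ⊗ₜ[k] x, (1 : F) ⊗ₜ[k] m⁆ := by simp
        change TensorProduct.lid k W' (l.rTensor W' (φ (1 ⊗ₜ ⁅x, m⁆))) =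
          ⁅x, TensorProduct.lid k W' (l.rTensor W' (φ (1 ⊗ₜ m)))⁆
        rw [h1, hφ]
        generalize φ (1 ⊗ₜ m) = y
        induction y using TensorProduct.induction_on with
        | zero => simp
        | tmul a u => simp
        | add a b ha hb => simp only [lie_add, map_add, ha, hb] }
  have hfw : f w ≠ 0 := hwl
  have hker : f.ker = ⊥ := by
    rcases eq_bot_or_eq_top f.ker with h | h
    · exact h
    · exact absurd (LieModuleHom.mem_ker.1 (h ▸ LieSubmodule.mem_top w : w ∈ f.ker)) hfw
  have hrange : f.range = ⊤ := by
    rcases eq_bot_or_eq_top f.range with h | h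
    · have : f w ∈ f.range := ⟨w, rfl⟩
      rw [h] at this
      exact absurd (by simpa using this) hfw
    · exact h
  have hbij : Function.Bijective f :=
    ⟨(LieModuleHom.ker_eq_bot f).1 hker, (LieModuleHom.range_eq_top f).1 hrange⟩
  exact ⟨{ f, (Equiv.ofBijective f hbij) with }⟩
end

section
/- Let W be a finite-dimensional 𝔤-module over k with a decomposition W = ⊕_{γ∈Γ} W_γ into irreducible 𝔤-submodules and a decomposition W ⊗_k F = ⊕_{α∈A} V_α into irreducible (𝔤 ⊗_k F)-submodules. Fix γ₀ ∈ Γ and α₀ ∈ A with V_{α₀} ⊆ W_{γ₀} ⊗_k F. Then, as subspaces of W ⊗_k F, one has the equality (⊕_{γ∈Γ : W_γ ≅ W_{γ₀}} W_γ) ⊗_k F = Σ_{α ∈ A'} V_α, where A' is the set of all α ∈ A for which there exist σ, τ ∈ S with τ(V_{α₀}) ≅ σ(V_α) as (𝔤 ⊗_k F)-modules; equivalently, ⊕_{γ : W_γ ≅ W_{γ₀}} W_γ equals the set of S-fixed points of Σ_{α ∈ A'} V_α. -/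
open scoped TensorProduct

theorem isoComp_le {R M ι : Type*} [Ring R] [AddCommGroup M] [Module R M]
    (p : ι → Submodule R M) (hp : ∀ i, IsSimpleModule R (p i)) (hsup : ⨆ i, p i = ⊤)
    (N : Submodule R M) [IsSimpleModule R N] :
    isotypicComponent R M N ≤ ⨆ i ∈ {i | Nonempty (p i ≃ₗ[R] N)}, p i := by
  set C := isotypicComponent R M N with hC
  set X := ⨆ i ∈ {i | Nonempty (p i ≃ₗ[R] N)}, p i with hX
  set s : Set (Submodule R M) := {q | ∃ i, ¬ Nonempty (p i ≃ₗ[R] N) ∧ q = p i} with hs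
  have hXC : X ≤ C := iSup₂_le fun i hi => le_sSup hi
  have hXY : X ⊔ sSup s = ⊤ := by
    rw [eq_top_iff, ← hsup]
    refine iSup_le fun i => ?_
    by_cases h : Nonempty (p i ≃ₗ[R] N)
    · exact le_trans (le_iSup₂_of_le i h le_rfl) le_sup_left
    · exact le_trans (le_sSup (show p i ∈ s from ⟨i, h, rfl⟩)) le_sup_right
  have hCY : C ⊓ sSup s = ⊥ := by
    have h1 : IsSemisimpleModule R (C ⊓ sSup s : Submodule R M) :=
      IsSemisimpleModule.of_injective _
        (Submodule.inclusion_injective (inf_le_left : C ⊓ sSup s ≤ C))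
    by_contra ne
    obtain ⟨T, le, hT⟩ := (IsSemisimpleModule.eq_bot_or_exists_simple_le _).resolve_left ne
    obtain ⟨e⟩ := isIsotypicOfType_submodule_iff.mp (.isotypicComponent R M N) T
      (le.trans inf_le_left)
    have hsim : ∀ m : s, IsSimpleModule R m := by
      rintro ⟨_, i, _, rfl⟩
      exact hp i
    obtain ⟨_, ⟨i, hi, rfl⟩, ⟨e'⟩⟩ := T.linearEquiv_of_le_sSup s (le.trans inf_le_right)
    exact hi ⟨e'.symm.trans e⟩
  have : C = X ⊔ (C ⊓ sSup s) := by
    rw [inf_comm, ← sup_inf_assoc_of_le _ hXC, hXY, top_inf_eq]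
  rw [this, hCY, sup_bot_eq]

section rep
variable {K L X Y : Type*} [Field K] [AddCommGroup X] [Module K X] [AddCommGroup Y] [Module K Y]

theorem lift_comm (ρ : L → Module.End K X) (η : L → Module.End K Y) (f : X →ₗ[K] Y)
    (hf : ∀ l x, f (ρ l x) = η l (f x)) (r : FreeAlgebra K L) (x : X) :
    f (FreeAlgebra.lift K ρ r x) = FreeAlgebra.lift K η r (f x) := by
  induction r using FreeAlgebra.induction generalizing x with
  | grade0 c => simp
  | grade1 l => simp [hf]
  | mul a b ha hb => simp [ha, hb]
  | add a b ha hb => simp [ha, hb]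

theorem lift_mem (ρ : L → Module.End K X) (N : Submodule K X)
    (hN : ∀ l, ∀ x ∈ N, ρ l x ∈ N) (r : FreeAlgebra K L) (x : X) (hx : x ∈ N) :
    FreeAlgebra.lift K ρ r x ∈ N := by
  induction r using FreeAlgebra.induction generalizing x with
  | grade0 c => simpa using N.smul_mem _ hx
  | grade1 l => simpa using hN _ _ hx
  | mul a b ha hb => simpa using ha _ (hb _ hx)
  | add a b ha hb => simpa using N.add_mem (ha _ hx) (hb _ hx)

/-- module over the free algebra from a family of operators -/
abbrev repMod (ρ : L → Module.End K X) : Module (FreeAlgebra K L) X :=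
  Module.compHom X (FreeAlgebra.lift K ρ).toRingHom

end rep

section key
variable {K L W : Type*} [Field K] [LieRing L] [LieAlgebra K L] [AddCommGroup W] [Module K W]
    [LieRingModule L W] [LieModule K L W]

/-- Lie submodules are submodules over the free algebra. -/
def toFree : letI := repMod (fun l : L => LieModule.toEnd K L W l)
    LieSubmodule K L W ≃o Submodule (FreeAlgebra K L) W :=
  letI := repMod (fun l : L => LieModule.toEnd K L W l)
  { toFun := fun N =>
      { carrier := N
        add_mem' := fun ha hb => N.add_mem ha hb
        zero_mem' := N.zero_mem
        smul_mem' := fun r x hx => lift_mem (fun l : L => LieModule.toEnd K L W l) N.toSubmodule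
          (fun l x hx => N.lie_mem hx) r x hx }
    invFun := fun P =>
      { carrier := P
        add_mem' := fun ha hb => P.add_mem ha hb
        zero_mem' := P.zero_mem
        smul_mem' := fun c x hx => by
          have h : FreeAlgebra.lift K (fun l : L => LieModule.toEnd K L W l)
            (algebraMap K _ c) x ∈ P := P.smul_mem (algebraMap K (FreeAlgebra K L) c) hx
          simpa using h
        lie_mem := fun {l x} hx => by
          have h : FreeAlgebra.lift K (fun l : L => LieModule.toEnd K L W l)
            (FreeAlgebra.ι K l) x ∈ P := P.smul_mem (FreeAlgebra.ι K l) hx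
          simpa using h }
    left_inv := fun N => rfl
    right_inv := fun P => rfl
    map_rel_iff' := Iff.rfl }

theorem key {X Γ ι : Type*} [Finite ι] [AddCommGroup X] [Module K X] (η : L → Module.End K X)
    (p : Γ → LieSubmodule K L W) (hp : ∀ γ, IsAtom (p γ)) (hsup : ⨆ γ, p γ = ⊤)
    (S : LieSubmodule K L W) (hS : IsAtom S)
    (f : ι → X →ₗ[K] W) (hf : ∀ i l x, f i (η l x) = ⁅l, f i x⁆) (hfS : ∀ i x, f i x ∈ S)
    (hinj : ∀ x, (∀ i, f i x = 0) → x = 0)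
    (g : X →ₗ[K] W) (hg : ∀ l x, g (η l x) = ⁅l, g x⁆) (x : X) :
    g x ∈ ⨆ γ ∈ {γ | Nonempty (p γ ≃ₗ⁅K, L⁆ S)}, p γ := by
  let m1 : Module (FreeAlgebra K L) W := repMod (fun l : L => LieModule.toEnd K L W l)
  let m2 : Module (FreeAlgebra K L) X := repMod η
  let T := toFree (K := K) (L := L) (W := W)
  have hsimp : ∀ N : LieSubmodule K L W, IsAtom N → IsSimpleModule (FreeAlgebra K L) (T N) :=
    fun N hN => isSimpleModule_iff_isAtom.mpr ((OrderIso.isAtom_iff T N).mpr hN)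
  have := hsimp S hS
  have hsup' : ⨆ γ, T (p γ) = ⊤ := by rw [← T.map_iSup, hsup, T.map_top]
  have h1 := isoComp_le (fun γ => T (p γ)) (fun γ => hsimp _ (hp γ)) hsup' (T S)
  let G : X →ₗ[FreeAlgebra K L] W :=
    { toFun := g, map_add' := map_add g
      map_smul' := fun r x => lift_comm η (fun l : L => LieModule.toEnd K L W l) g hg r x }
  let Fi : ι → (X →ₗ[FreeAlgebra K L] T S) := fun i => LinearMap.codRestrict (T S)
    { toFun := f i, map_add' := map_add (f i)
      map_smul' := fun r x => lift_comm η (fun l : L => LieModule.toEnd K L W l) (f i) (hf i) r x }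
    (fun x => hfS i x)
  let FF : X →ₗ[FreeAlgebra K L] (ι → T S) := LinearMap.pi Fi
  have hFF : Function.Injective FF := by
    rw [injective_iff_map_eq_zero]
    intro x hx
    exact hinj x fun i => congrArg Subtype.val (congrFun hx i)
  have hss : IsSemisimpleModule (FreeAlgebra K L) X := IsSemisimpleModule.of_injective FF hFF
  -- every simple submodule of X maps to the isotypic component
  have h2 : ∀ m : Submodule (FreeAlgebra K L) X, IsSimpleModule (FreeAlgebra K L) m →
      Nonempty (m ≃ₗ[FreeAlgebra K L] T S) := by
    intro m hm
    have : ∃ i, (Fi i).comp m.subtype ≠ 0 := by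
      by_contra hc
      push Not at hc
      have := IsSimpleModule.nontrivial (FreeAlgebra K L) m
      obtain ⟨y, hy⟩ := exists_ne (0 : m)
      refine hy (Subtype.ext (hinj _ fun i => ?_))
      exact congrArg Subtype.val (LinearMap.congr_fun (hc i) y)
    obtain ⟨i, hi⟩ := this
    exact ⟨LinearEquiv.ofBijective _ (LinearMap.bijective_of_ne_zero hi)⟩
  have h3 : (⊤ : Submodule (FreeAlgebra K L) X) ≤
      (isotypicComponent (FreeAlgebra K L) W (T S)).comap G := by
    rw [← IsSemisimpleModule.sSup_simples_eq_top (FreeAlgebra K L) X]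
    refine sSup_le fun m hm => ?_
    obtain ⟨e⟩ := h2 m hm
    exact le_trans (le_sSup (show m ∈ {m : Submodule (FreeAlgebra K L) X | Nonempty (m ≃ₗ[FreeAlgebra K L] T S)} from ⟨e⟩)) (LinearMap.le_comap_isotypicComponent (T S) G)
  have h4 : G x ∈ ⨆ γ ∈ {γ | Nonempty (T (p γ) ≃ₗ[FreeAlgebra K L] T S)}, T (p γ) :=
    h1 (h3 Submodule.mem_top)
  have h5 : (⨆ γ ∈ {γ | Nonempty (T (p γ) ≃ₗ[FreeAlgebra K L] T S)}, T (p γ)) ≤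
      T (⨆ γ ∈ {γ | Nonempty (p γ ≃ₗ⁅K, L⁆ S)}, p γ) := by
    refine iSup₂_le fun γ ⟨e⟩ => T.monotone (le_iSup₂_of_le γ ?_ le_rfl)
    refine ⟨{ toFun := fun y => e y, invFun := fun y => e.symm y, map_add' := fun a b => e.map_add a b, map_smul' := ?_, map_lie' := ?_, left_inv := e.left_inv, right_inv := e.right_inv }⟩
    · intro c y
      have h := e.map_smul (algebraMap K (FreeAlgebra K L) c) y
      have e1 : algebraMap K (FreeAlgebra K L) c • (show T (p γ) from y) = (c • (y : p γ) : p γ) := by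
        apply Subtype.ext
        change FreeAlgebra.lift K (fun l : L => LieModule.toEnd K L W l) (algebraMap K _ c) (y : W) = c • (y : W)
        simp
      rw [e1] at h
      refine h.trans ?_
      apply Subtype.ext
      change FreeAlgebra.lift K (fun l : L => LieModule.toEnd K L W l) (algebraMap K _ c) (e y : W) = c • (e y : W)
      simp
    · intro l y
      have h := e.map_smul (FreeAlgebra.ι K l) y
      have e1 : FreeAlgebra.ι K l • (show T (p γ) from y) = (⁅l, (y : p γ)⁆ : p γ) := by
        apply Subtype.ext
        change FreeAlgebra.lift K (fun l : L => LieModule.toEnd K L W l) (FreeAlgebra.ι K l) (y : W) = ⁅l, (y : W)⁆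
        simp
      rw [e1] at h
      refine h.trans ?_
      apply Subtype.ext
      change FreeAlgebra.lift K (fun l : L => LieModule.toEnd K L W l) (FreeAlgebra.ι K l) (e y : W) = ⁅l, (e y : W)⁆
      simp
  exact h5 h4

end key

section gal
variable {k F : Type*} [Field k] [Field F] [Algebra k F]

theorem galMap_tmul (σ : F ≃ₐ[k] F) {W : Type*} [AddCommGroup W] [Module k W] (a : F) (w : W) :
    galMap k F σ W (a ⊗ₜ w) = σ a ⊗ₜ w := rfl

theorem galMap_mul (σ τ : F ≃ₐ[k] F) {W : Type*} [AddCommGroup W] [Module k W] (x : F ⊗[k] W) :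
    galMap k F σ W (galMap k F τ W x) = galMap k F (σ * τ) W x := by
  change LinearMap.rTensor W σ.toLinearMap (LinearMap.rTensor W τ.toLinearMap x) =
    LinearMap.rTensor W (σ * τ).toLinearMap x
  induction x using TensorProduct.induction_on with
  | zero => simp
  | tmul f w => simp
  | add x y hx hy => simp [hx, hy]

theorem galMap_one {W : Type*} [AddCommGroup W] [Module k W] (x : F ⊗[k] W) :
    galMap k F 1 W x = x := by
  change LinearMap.rTensor W (LinearMap.id : F →ₗ[k] F) x = x
  simp

theorem galMap_ksmul (σ : F ≃ₐ[k] F) {W : Type*} [AddCommGroup W] [Module k W] (c : k)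
    (x : F ⊗[k] W) : galMap k F σ W (c • x) = c • galMap k F σ W x :=
  (LinearMap.rTensor W σ.toLinearMap).map_smul c x

/-- contraction with a functional -/
noncomputable def contr (φ : F →ₗ[k] k) (W : Type*) [AddCommGroup W] [Module k W] :
    F ⊗[k] W →ₗ[k] W :=
  (TensorProduct.lid k W).toLinearMap ∘ₗ LinearMap.rTensor W φ

theorem contr_tmul (φ : F →ₗ[k] k) {W : Type*} [AddCommGroup W] [Module k W] (a : F) (w : W) :
    contr φ W (a ⊗ₜ w) = φ a • w := by simp [contr]

theorem sum_contr {ι W : Type*} [Fintype ι] (b : Module.Basis ι k F) [AddCommGroup W] [Module k W]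
    (x : F ⊗[k] W) : ∑ i, b i ⊗ₜ[k] contr (b.coord i) W x = x := by
  induction x using TensorProduct.induction_on with
  | zero => simp
  | tmul f w =>
    simp_rw [contr_tmul, ← TensorProduct.smul_tmul, ← TensorProduct.sum_tmul]
    congr 1
    simp [b.sum_repr]
  | add x y hx hy => simp [TensorProduct.tmul_add, Finset.sum_add_distrib, hx, hy]

theorem contr_mem (φ : F →ₗ[k] k) {W : Type*} [AddCommGroup W] [Module k W] (S : Submodule k W)
    (x : F ⊗[k] W) (hx : x ∈ S.baseChange F) : contr φ W x ∈ S := by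
  have hx' : x ∈ LinearMap.range (S.subtype.baseChange F) := hx
  obtain ⟨y, rfl⟩ := hx'
  clear hx
  induction y using TensorProduct.induction_on with
  | zero => simp
  | tmul f w => simpa [contr_tmul] using S.smul_mem _ w.2
  | add x y hx hy => rw [map_add, map_add]; exact S.add_mem hx hy

theorem mem_baseChange_of_contr [FiniteDimensional k F] {W : Type*} [AddCommGroup W] [Module k W]
    (S : Submodule k W) (x : F ⊗[k] W)
    (h : ∀ i, contr ((Module.finBasis k F).coord i) W x ∈ S) : x ∈ S.baseChange F := by
  rw [← sum_contr (Module.finBasis k F) x]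
  exact Submodule.sum_mem _ fun i _ => Submodule.tmul_mem_baseChange_of_mem _ (h i)

theorem sum_gal [FiniteDimensional k F] [IsGalois k F] {W : Type*} [AddCommGroup W] [Module k W]
    (x : F ⊗[k] W) :
    ∑ σ : F ≃ₐ[k] F, galMap k F σ W x = 1 ⊗ₜ contr (Algebra.trace k F) W x := by
  change ∑ σ : F ≃ₐ[k] F, LinearMap.rTensor W σ.toLinearMap x = _
  induction x using TensorProduct.induction_on with
  | zero => simp
  | tmul f w =>
    simp_rw [LinearMap.rTensor_tmul, AlgEquiv.toLinearMap_apply, contr_tmul, ← TensorProduct.sum_tmul, ← trace_eq_sum_automorphisms,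
      ← TensorProduct.smul_tmul, Algebra.smul_def, mul_one]
  | add x y hx hy => simp [TensorProduct.tmul_add, Finset.sum_add_distrib, hx, hy]

theorem exists_trace_eq [FiniteDimensional k F] [IsGalois k F] (φ : F →ₗ[k] k) :
    ∃ c : F, ∀ a, Algebra.trace k F (c * a) = φ a := by
  obtain ⟨c, hc⟩ := ((Algebra.traceForm k F).toDual (traceForm_nondegenerate k F)).surjective φ
  refine ⟨c, fun a => ?_⟩
  rw [← hc]
  simp [LinearMap.BilinForm.toDual_def, Algebra.traceForm_apply]

theorem contr_trace [FiniteDimensional k F] (φ : F →ₗ[k] k) (c : F)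
    (hc : ∀ a, Algebra.trace k F (c * a) = φ a) {W : Type*} [AddCommGroup W] [Module k W]
    (x : F ⊗[k] W) : contr (Algebra.trace k F) W (c • x) = contr φ W x := by
  induction x using TensorProduct.induction_on with
  | zero => simp
  | tmul f w => simp [TensorProduct.smul_tmul', contr_tmul, hc]
  | add x y hx hy => simp [hx, hy]

variable {𝔤 : Type*} [LieRing 𝔤] [LieAlgebra k 𝔤]
  {W : Type*} [AddCommGroup W] [Module k W] [LieRingModule 𝔤 W] [LieModule k 𝔤 W]

theorem zlie (x : F ⊗[k] W) : ⁅(0 : F ⊗[k] 𝔤), x⁆ = 0 := zero_lie x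

theorem alie (y z : F ⊗[k] 𝔤) (x : F ⊗[k] W) : ⁅y + z, x⁆ = ⁅y, x⁆ + ⁅z, x⁆ := add_lie y z x

theorem galMap_lie (σ : F ≃ₐ[k] F) (l : F ⊗[k] 𝔤) (x : F ⊗[k] W) :
    galMap k F σ W ⁅l, x⁆ = ⁅galMap k F σ 𝔤 l, galMap k F σ W x⁆ := by
  change LinearMap.rTensor W σ.toLinearMap ⁅l, x⁆ =
    ⁅LinearMap.rTensor 𝔤 σ.toLinearMap l, LinearMap.rTensor W σ.toLinearMap x⁆
  induction l using TensorProduct.induction_on with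
  | zero =>
    rw [map_zero, zlie, zlie, map_zero]
  | tmul a l =>
    induction x using TensorProduct.induction_on with
    | zero => simp
    | tmul f w => simp
    | add x y hx hy => simp [hx, hy]
  | add y z hy hz =>
    rw [map_add, alie, alie, map_add, hy, hz]

theorem galMap_lie_one (σ : F ≃ₐ[k] F) (l : 𝔤) (x : F ⊗[k] W) :
    galMap k F σ W ⁅(1 : F) ⊗ₜ[k] l, x⁆ = ⁅(1 : F) ⊗ₜ[k] l, galMap k F σ W x⁆ := by
  rw [galMap_lie, galMap_tmul, map_one]

theorem contr_lie (φ : F →ₗ[k] k) (l : 𝔤) (x : F ⊗[k] W) :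
    contr φ W ⁅(1 : F) ⊗ₜ[k] l, x⁆ = ⁅l, contr φ W x⁆ := by
  induction x using TensorProduct.induction_on with
  | zero => simp
  | tmul f w => simp [contr_tmul]
  | add x y hx hy => simp [hx, hy]

/-- Galois conjugate as a Lie submodule -/
noncomputable def galLie (σ : F ≃ₐ[k] F) (V : LieSubmodule F (F ⊗[k] 𝔤) (F ⊗[k] W)) :
    LieSubmodule F (F ⊗[k] 𝔤) (F ⊗[k] W) :=
  { galSub k F σ (V : Submodule F (F ⊗[k] W)) with
    lie_mem := by
      rintro l _ ⟨x, hx, rfl⟩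
      refine ⟨⁅galMap k F σ⁻¹ 𝔤 l, x⁆, V.lie_mem hx, ?_⟩
      rw [galMap_lie, galMap_mul, mul_inv_cancel, galMap_one] }

theorem galLie_coe (σ : F ≃ₐ[k] F) (V : LieSubmodule F (F ⊗[k] 𝔤) (F ⊗[k] W)) :
    (galLie σ V : Submodule F (F ⊗[k] W)) = galSub k F σ (V : Submodule F (F ⊗[k] W)) := rfl

theorem mem_galLie (σ : F ≃ₐ[k] F) (V : LieSubmodule F (F ⊗[k] 𝔤) (F ⊗[k] W)) (x : F ⊗[k] W) :
    x ∈ galLie σ V ↔ galMap k F σ⁻¹ W x ∈ V := by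
  constructor
  · rintro ⟨y, hy, rfl⟩
    rw [galMap_mul, inv_mul_cancel, galMap_one]
    exact hy
  · intro h
    refine ⟨_, h, ?_⟩
    rw [galMap_mul, mul_inv_cancel, galMap_one]

/-- as an order isomorphism -/
noncomputable def galIso (σ : F ≃ₐ[k] F) :
    LieSubmodule F (F ⊗[k] 𝔤) (F ⊗[k] W) ≃o LieSubmodule F (F ⊗[k] 𝔤) (F ⊗[k] W) where
  toFun := galLie σ
  invFun := galLie σ⁻¹
  left_inv V := by
    ext x
    rw [mem_galLie, mem_galLie, galMap_mul, inv_inv, inv_mul_cancel, galMap_one]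
  right_inv V := by
    ext x
    rw [mem_galLie, mem_galLie, galMap_mul, inv_inv, mul_inv_cancel, galMap_one]
  map_rel_iff' {V V'} := by
    constructor
    · intro h x hx
      have := h (show galMap k F σ W x ∈ galLie σ V from ⟨x, hx, rfl⟩)
      change galMap k F σ W x ∈ galLie σ V' at this
      rw [mem_galLie, galMap_mul, inv_mul_cancel, galMap_one] at this
      exact this
    · rintro h _ ⟨x, hx, rfl⟩
      exact ⟨x, h hx, rfl⟩

theorem galLie_atom (σ : F ≃ₐ[k] F) (V : LieSubmodule F (F ⊗[k] 𝔤) (F ⊗[k] W)) (hV : IsAtom V) :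
    IsAtom (galLie σ V) := ((galIso σ).isAtom_iff V).mpr hV

theorem galLie_one (V : LieSubmodule F (F ⊗[k] 𝔤) (F ⊗[k] W)) : galLie 1 V = V := by
  ext x
  rw [mem_galLie, inv_one, galMap_one]

theorem galMap_mem_baseChange (σ : F ≃ₐ[k] F) (S : Submodule k W) (x : F ⊗[k] W)
    (hx : x ∈ S.baseChange F) : galMap k F σ W x ∈ S.baseChange F := by
  have hx' : x ∈ LinearMap.range (S.subtype.baseChange F) := hx
  obtain ⟨y, rfl⟩ := hx'
  clear hx
  induction y using TensorProduct.induction_on with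
  | zero => rw [map_zero, map_zero]; exact Submodule.zero_mem _
  | tmul f w => exact Submodule.tmul_mem_baseChange_of_mem _ w.2
  | add x y hx hy => rw [map_add, map_add]; exact Submodule.add_mem _ hx hy

/-- contraction of a Lie submodule to `W` -/
def pull (T : LieSubmodule F (F ⊗[k] 𝔤) (F ⊗[k] W)) : LieSubmodule k 𝔤 W :=
  { (T.toSubmodule.restrictScalars k).comap (TensorProduct.mk k F W 1) with
    lie_mem := by
      intro l w hw
      have h : ⁅(1 : F) ⊗ₜ[k] l, (1 : F) ⊗ₜ[k] w⁆ ∈ T := T.lie_mem hw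
      simp only [LieAlgebra.ExtendScalars.bracket_tmul, mul_one] at h
      exact h }

theorem baseChange_le_iff {S : LieSubmodule k 𝔤 W} {T : LieSubmodule F (F ⊗[k] 𝔤) (F ⊗[k] W)} :
    S.baseChange F ≤ T ↔ S ≤ pull T := by
  constructor
  · intro h w hw
    exact h (Submodule.tmul_mem_baseChange_of_mem _ hw)
  · intro h
    change (S.toSubmodule.baseChange F) ≤ T.toSubmodule
    rw [Submodule.baseChange_eq_span, Submodule.span_le]
    rintro _ ⟨w, hw, rfl⟩
    exact h hw

variable [FiniteDimensional k F] [IsGalois k F]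

theorem baseChange_le_conj (S : LieSubmodule k 𝔤 W) (hS : IsAtom S)
    (V : LieSubmodule F (F ⊗[k] 𝔤) (F ⊗[k] W)) (hV : V ≠ ⊥) (hVS : V ≤ S.baseChange F) :
    S.baseChange F ≤ ⨆ σ : F ≃ₐ[k] F, galLie σ V := by
  set T := ⨆ σ : F ≃ₐ[k] F, galLie σ V with hT
  let U := pull T
  have hU : ∀ w, w ∈ U ↔ (1 : F) ⊗ₜ[k] w ∈ T := fun w => Iff.rfl
  have hne : S ⊓ U ≠ ⊥ := by
    intro hbot
    rw [Ne, LieSubmodule.eq_bot_iff] at hV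
    push Not at hV
    obtain ⟨v, hv, hv0⟩ := hV
    apply hv0
    rw [← sum_contr (Module.finBasis k F) v]
    refine Finset.sum_eq_zero fun i _ => ?_
    obtain ⟨c, hc⟩ := exists_trace_eq ((Module.finBasis k F).coord i)
    have hm : contr ((Module.finBasis k F).coord i) W v ∈ S ⊓ U := by
      refine ⟨contr_mem _ S.toSubmodule v (hVS hv), ?_⟩
      rw [← contr_trace _ c hc]
      change _ ∈ U
      rw [hU, ← sum_gal]
      refine T.toSubmodule.sum_mem fun σ _ => ?_
      exact (le_iSup (fun σ : F ≃ₐ[k] F => galLie σ V) σ) ⟨_, V.smul_mem c hv, rfl⟩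
    rw [hbot, LieSubmodule.mem_bot] at hm
    rw [hm, TensorProduct.tmul_zero]
  have hSU : S ≤ U := by
    by_contra h
    exact hne (hS.2 _ (inf_lt_left.mpr h))
  exact baseChange_le_iff.mpr hSU

theorem mem_map_iff_fixed (U : LieSubmodule k 𝔤 W) (x : F ⊗[k] W) :
    (x ∈ U.baseChange F ∧ ∀ σ : F ≃ₐ[k] F, galMap k F σ W x = x) ↔
      x ∈ Submodule.map (TensorProduct.mk k F W 1) (U : Submodule k W) := by
  constructor
  · rintro ⟨hx, hfix⟩
    obtain ⟨c, hc⟩ := Algebra.trace_surjective k F 1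
    refine ⟨contr (Algebra.trace k F) W (c • x), contr_mem _ _ _
      (Submodule.smul_mem _ c hx), ?_⟩
    change (1 : F) ⊗ₜ[k] _ = x
    rw [← sum_gal]
    simp_rw [map_smulₛₗ, hfix, ← Finset.sum_smul]
    have : ∑ σ : F ≃ₐ[k] F, σ c = 1 := by rw [← trace_eq_sum_automorphisms, hc, map_one]
    refine Eq.trans ?_ (one_smul F x)
    rw [← this]
    rfl
  · rintro ⟨w, hw, rfl⟩
    exact ⟨Submodule.tmul_mem_baseChange_of_mem _ hw, fun σ => (galMap_tmul σ 1 w).trans (by rw [map_one]; rfl)⟩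

end gal

section final
variable {k F : Type*} [Field k] [Field F] [Algebra k F] [FiniteDimensional k F] [IsGalois k F]
  {𝔤 : Type*} [LieRing 𝔤] [LieAlgebra k 𝔤]
  {W : Type*} [AddCommGroup W] [Module k W] [LieRingModule 𝔤 W] [LieModule k 𝔤 W]

/-- the action of `𝔤` on a Lie submodule of the base change -/
def actX (V : LieSubmodule F (F ⊗[k] 𝔤) (F ⊗[k] W)) (l : 𝔤) :
    Module.End k (V.toSubmodule.restrictScalars k) where
  toFun x := ⟨⁅(1 : F) ⊗ₜ[k] l, (x : F ⊗[k] W)⁆, V.lie_mem x.2⟩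
  map_add' x y := Subtype.ext (lie_add _ _ _)
  map_smul' c x := by
    apply Subtype.ext
    change ⁅(1 : F) ⊗ₜ[k] l, c • (x : F ⊗[k] W)⁆ = c • ⁅(1 : F) ⊗ₜ[k] l, (x : F ⊗[k] W)⁆
    rw [← algebraMap_smul F c, lie_smul, algebraMap_smul]

theorem superset_part {Γ : Type*} (p : Γ → LieSubmodule k 𝔤 W) (hp : ∀ γ, IsAtom (p γ))
    (hsup : ⨆ γ, p γ = ⊤) (S : LieSubmodule k 𝔤 W) (hS : IsAtom S)
    (V₀ V : LieSubmodule F (F ⊗[k] 𝔤) (F ⊗[k] W)) (hV₀ : V₀ ≤ S.baseChange F)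
    (σ τ : F ≃ₐ[k] F) (h : GalConjIso k F 𝔤 τ σ V₀ V) :
    V ≤ (⨆ γ ∈ {γ | Nonempty (p γ ≃ₗ⁅k, 𝔤⁆ S)}, p γ).baseChange F := by
  obtain ⟨V₀', V', h₀, h₁, ⟨e⟩⟩ := h
  have h₀' : V₀' = galLie τ V₀ := LieSubmodule.toSubmodule_injective h₀
  have h₁' : V' = galLie σ V := LieSubmodule.toSubmodule_injective h₁
  subst h₀' h₁'
  let u : (V.toSubmodule.restrictScalars k) →ₗ[k] F ⊗[k] W :=
    { toFun := fun x => galMap k F τ⁻¹ W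
        (e.symm ⟨galMap k F σ W (x : F ⊗[k] W), ⟨x, x.2, rfl⟩⟩ : F ⊗[k] W)
      map_add' := fun x y => by
        rw [← map_add, ← LieSubmodule.coe_add, ← map_add]
        congr 3
        exact Subtype.ext (map_add _ _ _)
      map_smul' := fun c x => by
        rw [RingHom.id_apply, ← galMap_ksmul, ← algebraMap_smul F c (Subtype.val (e.symm _)), ← LieSubmodule.coe_smul,
          ← map_smul]
        congr 3
        apply Subtype.ext
        change galMap k F σ W (c • (x : F ⊗[k] W)) = algebraMap k F c • galMap k F σ W x
        rw [galMap_ksmul, algebraMap_smul] }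
  have hu : ∀ l x, u (actX V l x) = ⁅(1 : F) ⊗ₜ[k] l, u x⁆ := by
    intro l x
    change galMap k F τ⁻¹ W (e.symm ⟨galMap k F σ W ⁅(1 : F) ⊗ₜ[k] l, (x : F ⊗[k] W)⁆, _⟩ : F ⊗[k] W) = ⁅(1 : F) ⊗ₜ[k] l, galMap k F τ⁻¹ W
        (e.symm ⟨galMap k F σ W (x : F ⊗[k] W), ⟨x, x.2, rfl⟩⟩ : F ⊗[k] W)⁆
    rw [← galMap_lie_one, ← LieSubmodule.coe_bracket, ← LieModuleEquiv.coe_toLieModuleHom,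
      ← LieModuleHom.map_lie]
    congr 3
    exact Subtype.ext (galMap_lie_one σ l _)
  have huinj : ∀ x, u x = 0 → x = 0 := by
    intro x hx
    have h1 := congrArg (galMap k F τ W) hx
    change galMap k F τ W (galMap k F τ⁻¹ W _) = _ at h1
    rw [galMap_mul, mul_inv_cancel, galMap_one, map_zero] at h1
    have h2 : e.symm ⟨galMap k F σ W (x : F ⊗[k] W), ⟨x, x.2, rfl⟩⟩ = 0 := Subtype.ext h1
    have h3 := congrArg e h2
    rw [LieModuleEquiv.apply_symm_apply, map_zero] at h3
    have h4 := congrArg (galMap k F σ⁻¹ W) (congrArg Subtype.val h3)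
    change galMap k F σ⁻¹ W (galMap k F σ W _) = galMap k F σ⁻¹ W 0 at h4
    rw [galMap_mul, inv_mul_cancel, galMap_one, map_zero] at h4
    exact Subtype.ext h4
  have huS : ∀ x, u x ∈ S.baseChange F := fun x =>
    hV₀ ((mem_galLie τ V₀ _).mp (Subtype.property _))
  intro x hx
  refine mem_baseChange_of_contr _ x fun i => ?_
  exact key (actX V) p hp hsup S hS
    (fun i => contr ((Module.finBasis k F).coord i) W ∘ₗ u)
    (fun i l x => by
      change contr _ W (u _) = ⁅l, contr _ W (u x)⁆
      rw [hu, contr_lie])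
    (fun i x => contr_mem _ S.toSubmodule _ (huS x))
    (fun x hx => huinj x (by
      rw [← sum_contr (Module.finBasis k F) (u x)]
      refine Finset.sum_eq_zero fun i _ => ?_
      have h : contr ((Module.finBasis k F).coord i) W (u x) = 0 := hx i
      rw [h, TensorProduct.tmul_zero]))
    (contr ((Module.finBasis k F).coord i) W ∘ₗ (V.toSubmodule.restrictScalars k).subtype)
    (fun l x => contr_lie _ l (x : F ⊗[k] W)) ⟨x, hx⟩

theorem subset_part {A : Type*} (q : A → LieSubmodule F (F ⊗[k] 𝔤) (F ⊗[k] W))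
    (hq : ∀ α, IsAtom (q α)) (hsup : ⨆ α, q α = ⊤) (S S' : LieSubmodule k 𝔤 W) (hS : IsAtom S)
    (e : S' ≃ₗ⁅k, 𝔤⁆ S)
    (V₀ : LieSubmodule F (F ⊗[k] 𝔤) (F ⊗[k] W)) (hV : IsAtom V₀) (hV₀ : V₀ ≤ S.baseChange F) :
    S'.baseChange F ≤ ⨆ α ∈ {α | ∃ σ τ : F ≃ₐ[k] F, GalConjIso k F 𝔤 τ σ V₀ (q α)}, q α := by
  set Q := ⨆ α ∈ {α | ∃ σ τ : F ≃ₐ[k] F, GalConjIso k F 𝔤 τ σ V₀ (q α)}, q α with hQ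
  obtain ⟨h, hh⟩ := LinearMap.exists_extend
    (p := S.toSubmodule) (S'.toSubmodule.subtype ∘ₗ (e.symm : S →ₗ[k] S'))
  have hh' : ∀ s : S, h s = e.symm s := fun s => LinearMap.congr_fun hh s
  let H := h.baseChange F
  have hH : ∀ (l : F ⊗[k] 𝔤) (x : F ⊗[k] W), x ∈ S.baseChange F → H ⁅l, x⁆ = ⁅l, H x⁆ := by
    intro l x hx
    have hx' : x ∈ LinearMap.range (S.toSubmodule.subtype.baseChange F) := hx
    obtain ⟨y, rfl⟩ := hx'
    clear hx
    have key1 : ∀ (a : F) (m : 𝔤), H ⁅a ⊗ₜ[k] m, S.toSubmodule.subtype.baseChange F y⁆ =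
        ⁅a ⊗ₜ[k] m, H (S.toSubmodule.subtype.baseChange F y)⁆ := by
      intro a m
      induction y using TensorProduct.induction_on with
      | zero => simp
      | tmul f w =>
        have h1 := hh' ⁅m, (w : S)⁆
        have h2 := hh' w
        rw [← LieModuleEquiv.coe_toLieModuleHom, LieModuleHom.map_lie] at h1
        simp only [LinearMap.baseChange_tmul, LieAlgebra.ExtendScalars.bracket_tmul, H]
        congr 1
        refine h1.trans ?_
        change ⁅m, ((e.symm w : S') : W)⁆ = ⁅m, h w⁆
        rw [h2]
      | add x y hx hy => simp [hx, hy]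
    induction l using TensorProduct.induction_on with
    | zero =>
      rw [zlie, zlie, map_zero]
    | tmul a m => exact key1 a m
    | add y z hy hz =>
      rw [alie, alie, map_add, hy, hz]
  have hconj : ∀ σ : F ≃ₐ[k] F, ∀ x ∈ galLie σ V₀, H x ∈ Q := by
    intro σ x hx
    have hle : galLie σ V₀ ≤ S.baseChange F := by
      rintro _ ⟨y, hy, rfl⟩
      exact galMap_mem_baseChange σ S.toSubmodule y (hV₀ hy)
    have h1 := key (K := F) (L := F ⊗[k] 𝔤) (X := galLie σ V₀) (ι := Unit)
      (fun l => LieModule.toEnd F (F ⊗[k] 𝔤) (galLie σ V₀) l) q hq hsup (galLie σ V₀)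
      (galLie_atom σ V₀ hV) (fun _ => (galLie σ V₀).toSubmodule.subtype) (fun _ l x => rfl)
      (fun _ x => x.2) (fun x hx => Subtype.ext (hx ()))
      (H ∘ₗ (galLie σ V₀).toSubmodule.subtype) (fun l x => hH l x (hle x.2)) ⟨x, hx⟩
    refine (iSup₂_le ?_ : _ ≤ Q) h1
    rintro α ⟨e'⟩
    refine le_iSup₂_of_le (f := fun α _ => q α) α ?_ le_rfl
    refine ⟨1, σ, galLie σ V₀, q α, rfl, ?_, ⟨e'.symm⟩⟩
    rw [← galLie_coe, galLie_one]
  rw [baseChange_le_iff]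
  intro w hw
  change (1 : F) ⊗ₜ[k] w ∈ Q
  have hT := baseChange_le_conj S hS V₀ hV.1 hV₀
  have h2 : (⨆ σ : F ≃ₐ[k] F, galLie σ V₀).toSubmodule ≤ Q.toSubmodule.comap H := by
    rw [LieSubmodule.iSup_toSubmodule]
    exact iSup_le fun σ x hx => hconj σ x hx
  have h3 := h2 (hT (Submodule.tmul_mem_baseChange_of_mem (1 : F) (e ⟨w, hw⟩).2))
  have h4 : H ((1 : F) ⊗ₜ[k] ((e ⟨w, hw⟩ : S) : W)) = (1 : F) ⊗ₜ[k] w := by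
    simp only [H, LinearMap.baseChange_tmul]
    rw [hh', LieModuleEquiv.symm_apply_apply]
  change H _ ∈ Q at h3
  rwa [h4] at h3

end final

/-- Given a decomposition `W = ⊕_γ W_γ` into irreducible `𝔤`-submodules
and a decomposition `W ⊗_k F = ⊕_α V_α` into irreducible `(𝔤 ⊗_k F)`-submodules, with
`V_{α₀} ⊆ W_{γ₀} ⊗_k F`, the base change of the sum of all `W_γ ≅ W_{γ₀}` equals the sum
of all `V_α` Galois-conjugate-isomorphic to `V_{α₀}`; equivalently, the former sum is the
set of Galois-fixed points of the latter. -/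
theorem stmt3
    (k F : Type*) [Field k] [Field F] [Algebra k F] [FiniteDimensional k F] [IsGalois k F]
    (𝔤 : Type*) [LieRing 𝔤] [LieAlgebra k 𝔤] [Module.Finite k 𝔤]
    (W : Type*)
    [AddCommGroup W] [Module k W] [LieRingModule 𝔤 W] [LieModule k 𝔤 W] [Module.Finite k W]
    (Γ A : Type)
    (Wfam : Γ → LieSubmodule k 𝔤 W)
    (hWatom : ∀ γ, IsAtom (Wfam γ)) (hWindep : iSupIndep Wfam) (hWsup : (⨆ γ, Wfam γ) = ⊤)
    (Vfam : A → LieSubmodule F (F ⊗[k] 𝔤) (F ⊗[k] W))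
    (hVatom : ∀ α, IsAtom (Vfam α)) (hVindep : iSupIndep Vfam) (hVsup : (⨆ α, Vfam α) = ⊤)
    (γ₀ : Γ) (α₀ : A) (hα₀ : Vfam α₀ ≤ (Wfam γ₀).baseChange F) :
    ((⨆ γ ∈ {γ' : Γ | Nonempty (↥(Wfam γ') ≃ₗ⁅k, 𝔤⁆ ↥(Wfam γ₀))}, Wfam γ).baseChange F
        = ⨆ α ∈ {α' : A | ∃ σ τ : F ≃ₐ[k] F, GalConjIso k F 𝔤 τ σ (Vfam α₀) (Vfam α')},
            Vfam α) ∧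
    (∀ x : F ⊗[k] W,
      (x ∈ (⨆ α ∈ {α' : A | ∃ σ τ : F ≃ₐ[k] F,
              GalConjIso k F 𝔤 τ σ (Vfam α₀) (Vfam α')}, Vfam α) ∧
        ∀ σ : F ≃ₐ[k] F, galMap k F σ W x = x) ↔
      x ∈ Submodule.map (TensorProduct.mk k F W 1)
        ((⨆ γ ∈ {γ' : Γ | Nonempty (↥(Wfam γ') ≃ₗ⁅k, 𝔤⁆ ↥(Wfam γ₀))}, Wfam γ :
          LieSubmodule k 𝔤 W) : Submodule k W)) := by
  have hmain : (⨆ γ ∈ {γ' : Γ | Nonempty (↥(Wfam γ') ≃ₗ⁅k, 𝔤⁆ ↥(Wfam γ₀))}, Wfam γ).baseChange F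
        = ⨆ α ∈ {α' : A | ∃ σ τ : F ≃ₐ[k] F, GalConjIso k F 𝔤 τ σ (Vfam α₀) (Vfam α')},
            Vfam α := by
    apply le_antisymm
    · rw [baseChange_le_iff]
      refine iSup₂_le ?_
      rintro γ ⟨e⟩
      rw [← baseChange_le_iff]
      exact subset_part Vfam hVatom hVsup _ _ (hWatom γ₀) e _ (hVatom α₀) hα₀
    · refine iSup₂_le ?_
      rintro α ⟨σ, τ, h⟩
      exact superset_part Wfam hWatom hWsup _ (hWatom γ₀) _ _ hα₀ σ τ h
  refine ⟨hmain, fun x => ?_⟩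
  rw [← hmain]
  exact mem_map_iff_fixed _ x
end

section
/- Let W be a finite-dimensional 𝔤-module over k with a decomposition W = ⊕_{γ∈Γ} W_γ into irreducible 𝔤-submodules and a decomposition W ⊗_k F = ⊕_{α∈A} V_α into irreducible (𝔤 ⊗_k F)-submodules. Fix γ₀ ∈ Γ and α₀ ∈ A with V_{α₀} ⊆ W_{γ₀} ⊗_k F, and let m be the number of indices γ ∈ Γ with W_γ ≅ W_{γ₀} (the multiplicity of W_{γ₀} in W). Then m · dim_k(W_{γ₀}) = Σ_{α ∈ A'} dim_F(V_α), where A' is the set of all α ∈ A for which there exist σ, τ ∈ S with τ(V_{α₀}) ≅ σ(V_α) as (𝔤 ⊗_k F)-modules. -/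
open scoped TensorProduct

section Helpers

lemma hlp_minStable {k ι M : Type*} [Field k] [AddCommGroup M] [Module k M] [Module.Finite k M]
    [Nontrivial M] (ρ : ι → M →ₗ[k] M) :
    ∃ P : Submodule k M, P ≠ ⊥ ∧ (∀ x, ∀ p ∈ P, ρ x p ∈ P) ∧
      ∀ Q ≤ P, (∀ x, ∀ p ∈ Q, ρ x p ∈ Q) → Q ≠ ⊥ → Q = P := by
  obtain ⟨P, ⟨h1, h2⟩, h3⟩ := (wellFounded_lt (α := Submodule k M)).has_min
    {P | P ≠ ⊥ ∧ (∀ x, ∀ p ∈ P, ρ x p ∈ P)} ⟨⊤, top_ne_bot, by simp⟩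
  refine ⟨P, h1, h2, fun Q hQ hs hb => ?_⟩
  by_contra hne
  exact h3 Q ⟨hb, hs⟩ (lt_of_le_of_ne hQ hne)

variable {k F : Type*} [Field k] [Field F] [Algebra k F]
  {𝔤 : Type*} [LieRing 𝔤] [LieAlgebra k 𝔤]

lemma hlp_tmul_lie {M : Type*} [AddCommGroup M] [Module F M]
    [LieRingModule (F ⊗[k] 𝔤) M] [LieModule F (F ⊗[k] 𝔤) M] (s : F) (x : 𝔤) (m : M) :
    ⁅(s ⊗ₜ[k] x : F ⊗[k] 𝔤), m⁆ = s • ⁅((1 : F) ⊗ₜ[k] x : F ⊗[k] 𝔤), m⁆ := by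
  rw [← smul_lie, TensorProduct.smul_tmul', smul_eq_mul, mul_one]

lemma hlp_span {M : Type*} [AddCommGroup M] [Module F M] [Module k M] [IsScalarTower k F M]
    [LieRingModule (F ⊗[k] 𝔤) M] [LieModule F (F ⊗[k] 𝔤) M]
    (hirr : ∀ N : LieSubmodule F (F ⊗[k] 𝔤) M, N = ⊥ ∨ N = ⊤)
    (P : Submodule k M) (hP : P ≠ ⊥)
    (hPs : ∀ x : 𝔤, ∀ p ∈ P, ⁅((1 : F) ⊗ₜ[k] x : F ⊗[k] 𝔤), p⁆ ∈ P)
    {U : Type*} [AddCommGroup U] [Module k U] (f : M →ₗ[k] U) (hf : f ≠ 0) :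
    ∃ c : F, ∃ p ∈ P, f (c • p) ≠ 0 := by
  let N : LieSubmodule F (F ⊗[k] 𝔤) M :=
    { Submodule.span F (P : Set M) with
      lie_mem := by
        intro z m hm
        change m ∈ Submodule.span F (P : Set M) at hm
        change _ ∈ Submodule.span F (P : Set M)
        induction hm using Submodule.span_induction with
        | zero => simp
        | add a b _ _ ha hb => rw [lie_add]; exact add_mem ha hb
        | smul c a _ ha => rw [lie_smul]; exact Submodule.smul_mem _ _ ha
        | mem p hp =>
          induction z using TensorProduct.induction_on with
          | zero => simp
          | add a b ha hb => rw [add_lie]; exact add_mem ha hb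
          | tmul s x =>
            rw [hlp_tmul_lie]
            exact Submodule.smul_mem _ _ (Submodule.subset_span (hPs x p hp)) }
  have hN : N = ⊤ := by
    refine (hirr N).resolve_left fun h => hP ?_
    rw [eq_bot_iff]
    intro p hp
    have : p ∈ N := Submodule.subset_span hp
    rw [h] at this
    simpa using this
  by_contra! hcon
  apply hf
  ext m
  have hm : m ∈ Submodule.span F (P : Set M) := by
    have : m ∈ N := by rw [hN]; trivial
    exact this
  have key : ∀ c : F, f (c • m) = 0 := by
    induction hm using Submodule.span_induction with
    | zero => simp
    | add a b _ _ ha hb => intro c; rw [smul_add, map_add, ha, hb, add_zero]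
    | smul d a _ ha => intro c; rw [smul_smul]; exact ha _
    | mem p hp => intro c; exact hcon c p hp
  simpa using key 1

lemma hlp_C {M : Type*} [AddCommGroup M] [Module F M] [Module k M] [IsScalarTower k F M]
    [LieRingModule (F ⊗[k] 𝔤) M] [LieModule F (F ⊗[k] 𝔤) M] [Module.Finite k M] [Nontrivial M]
    (hirr : ∀ N : LieSubmodule F (F ⊗[k] 𝔤) M, N = ⊥ ∨ N = ⊤)
    {U : Type*} [AddCommGroup U] [Module k U] [LieRingModule 𝔤 U] [LieModule k 𝔤 U]
    (hU : ∀ N : LieSubmodule k 𝔤 U, N = ⊥ ∨ N = ⊤)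
    (f : M →ₗ[k] U) (hf : f ≠ 0)
    (hfe : ∀ (x : 𝔤) m, f ⁅((1 : F) ⊗ₜ[k] x : F ⊗[k] 𝔤), m⁆ = ⁅x, f m⁆) :
    ∃ j : U →ₗ[k] M, Function.Injective j ∧
      ∀ (x : 𝔤) u, j ⁅x, u⁆ = ⁅((1 : F) ⊗ₜ[k] x : F ⊗[k] 𝔤), j u⁆ := by
  obtain ⟨P, hP, hPs, hPm⟩ := hlp_minStable (k := k) (M := M) (fun x : 𝔤 =>
    (LieModule.toEnd F (F ⊗[k] 𝔤) M ((1 : F) ⊗ₜ[k] x)).restrictScalars k)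
  have hPs' : ∀ x : 𝔤, ∀ p ∈ P, ⁅((1 : F) ⊗ₜ[k] x : F ⊗[k] 𝔤), p⁆ ∈ P := fun x p hp => by
    simpa using hPs x p hp
  obtain ⟨c, p, hp, hne⟩ := hlp_span hirr P hP hPs' f hf
  let g : M →ₗ[k] U := f ∘ₗ ((LinearMap.lsmul F M c).restrictScalars k)
  have hg : ∀ m, g m = f (c • m) := fun m => rfl
  have hge : ∀ (x : 𝔤) m, g ⁅((1 : F) ⊗ₜ[k] x : F ⊗[k] 𝔤), m⁆ = ⁅x, g m⁆ := fun x m => by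
    rw [hg, hg, ← lie_smul, hfe]
  have hinj : Function.Injective (g.domRestrict P) := by
    rw [← LinearMap.ker_eq_bot, eq_bot_iff]
    by_contra hcon
    have hQ := hPm (P ⊓ LinearMap.ker g) inf_le_left ?_ ?_
    · have : p ∈ P ⊓ LinearMap.ker g := by rw [hQ]; exact hp
      exact hne this.2
    · rintro x q ⟨hq1, hq2⟩
      refine ⟨hPs x q hq1, ?_⟩
      have h0 : g q = 0 := hq2
      change g ⁅((1 : F) ⊗ₜ[k] x : F ⊗[k] 𝔤), q⁆ = 0
      rw [hge, h0, lie_zero]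
    · intro hb
      apply hcon
      rintro ⟨q, hq⟩ hq2
      have : q ∈ P ⊓ LinearMap.ker g := ⟨hq, hq2⟩
      rw [hb] at this
      simpa using this
  let R : LieSubmodule k 𝔤 U :=
    { LinearMap.range (g.domRestrict P) with
      lie_mem := by
        rintro x _ ⟨⟨q, hq⟩, rfl⟩
        exact ⟨⟨_, hPs' x q hq⟩, hge x q⟩ }
  have hR : R = ⊤ := by
    refine (hU R).resolve_left fun h => hne ?_
    have : g p ∈ R := ⟨⟨p, hp⟩, rfl⟩
    rw [h] at this
    exact (LieSubmodule.mem_bot _).1 this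
  have hsurj : Function.Surjective (g.domRestrict P) := by
    intro u
    have : u ∈ R := by rw [hR]; trivial
    exact this
  let e := LinearEquiv.ofBijective (g.domRestrict P) ⟨hinj, hsurj⟩
  refine ⟨P.subtype ∘ₗ e.symm.toLinearMap, P.injective_subtype.comp e.symm.injective, ?_⟩
  intro x u
  obtain ⟨⟨q, hq⟩, rfl⟩ := e.surjective u
  have : ⁅x, e ⟨q, hq⟩⁆ = e ⟨_, hPs' x q hq⟩ := (hge x q).symm
  rw [this]
  simp

lemma hlp_schur {U Y : Type*} [AddCommGroup U] [Module k U] [LieRingModule 𝔤 U] [LieModule k 𝔤 U]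
    (hU : ∀ N : LieSubmodule k 𝔤 U, N = ⊥ ∨ N = ⊤)
    [AddCommGroup Y] [Module k Y] [LieRingModule 𝔤 Y] [LieModule k 𝔤 Y]
    (hY : ∀ N : LieSubmodule k 𝔤 Y, N = ⊥ ∨ N = ⊤)
    (f : U →ₗ⁅k, 𝔤⁆ Y) (u : U) (hu : f u ≠ 0) : Nonempty (U ≃ₗ⁅k, 𝔤⁆ Y) := by
  have h1 : f.ker = ⊥ := by
    refine (hU _).resolve_right fun h => hu ?_
    have : u ∈ f.ker := by rw [h]; trivial
    simpa using this
  have h2 : f.range = ⊤ := by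
    refine (hY _).resolve_left fun h => hu ?_
    have : f u ∈ f.range := by simp
    rw [h] at this
    simpa using this
  have b : Function.Bijective (f : U →ₗ[k] Y) := by
    constructor
    · rw [← LinearMap.ker_eq_bot, ← LieModuleHom.ker_toSubmodule, h1]; rfl
    · intro y
      have : y ∈ f.range := by rw [h2]; trivial
      simpa using this
  exact ⟨{ LinearEquiv.ofBijective (f : U →ₗ[k] Y) b with map_lie' := fun {x m} => f.map_lie x m }⟩

lemma hlp_C2 {M : Type*} [AddCommGroup M] [Module F M] [Module k M] [IsScalarTower k F M]
    [LieRingModule (F ⊗[k] 𝔤) M] [LieModule F (F ⊗[k] 𝔤) M] [Module.Finite k M] [Nontrivial M]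
    (hirr : ∀ N : LieSubmodule F (F ⊗[k] 𝔤) M, N = ⊥ ∨ N = ⊤)
    {U : Type*} [AddCommGroup U] [Module k U] [LieRingModule 𝔤 U] [LieModule k 𝔤 U]
    (hU : ∀ N : LieSubmodule k 𝔤 U, N = ⊥ ∨ N = ⊤)
    (f : M →ₗ[k] U) (hf : f ≠ 0)
    (hfe : ∀ (x : 𝔤) m, f ⁅((1 : F) ⊗ₜ[k] x : F ⊗[k] 𝔤), m⁆ = ⁅x, f m⁆)
    {Y : Type*} [AddCommGroup Y] [Module k Y] [LieRingModule 𝔤 Y] [LieModule k 𝔤 Y]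
    (hY : ∀ N : LieSubmodule k 𝔤 Y, N = ⊥ ∨ N = ⊤)
    (f' : M →ₗ[k] Y) (hf' : f' ≠ 0)
    (hfe' : ∀ (x : 𝔤) m, f' ⁅((1 : F) ⊗ₜ[k] x : F ⊗[k] 𝔤), m⁆ = ⁅x, f' m⁆) :
    Nonempty (U ≃ₗ⁅k, 𝔤⁆ Y) := by
  obtain ⟨j, hj, hje⟩ := hlp_C hirr hU f hf hfe
  obtain ⟨c, p, ⟨u, rfl⟩, hne⟩ := hlp_span hirr (LinearMap.range j) (by
      intro h
      apply hf
      ext m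
      have : j (f m) ∈ LinearMap.range j := ⟨_, rfl⟩
      rw [h, Submodule.mem_bot] at this
      simpa using hj (this.trans (map_zero j).symm))
    (by rintro x _ ⟨u, rfl⟩; exact ⟨⁅x, u⁆, hje x u⟩) f' hf'
  refine hlp_schur hU hY
    { f' ∘ₗ ((LinearMap.lsmul F M c).restrictScalars k) ∘ₗ j with
      map_lie' := ?_ } u hne
  intro x m
  change f' (c • j ⁅x, m⁆) = ⁅x, f' (c • j m)⁆
  rw [hje, ← lie_smul, hfe']

lemma hlp_atom {R L M : Type*} [CommRing R] [LieRing L] [LieAlgebra R L] [AddCommGroup M]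
    [Module R M] [LieRingModule L M] [LieModule R L M] (V : LieSubmodule R L M) (hV : IsAtom V)
    (N : LieSubmodule R L V) : N = ⊥ ∨ N = ⊤ := by
  have hle : N.map V.incl ≤ V := by
    intro m hm
    obtain ⟨v, _, rfl⟩ := (LieSubmodule.mem_map _).1 hm
    exact v.2
  rcases hV.le_iff.1 hle with h | h
  · left
    rw [eq_bot_iff]
    intro v hv
    have : V.incl v ∈ N.map V.incl := (LieSubmodule.mem_map _).2 ⟨v, hv, rfl⟩
    rw [h] at this
    simpa using this
  · right
    rw [eq_top_iff]
    intro v _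
    have : (v : M) ∈ N.map V.incl := by rw [h]; exact v.2
    obtain ⟨w, hw, hwv⟩ := (LieSubmodule.mem_map _).1 this
    have : w = v := Subtype.ext hwv
    exact this ▸ hw

lemma hlp_nontriv {R L M : Type*} [CommRing R] [LieRing L] [LieAlgebra R L] [AddCommGroup M]
    [Module R M] [LieRingModule L M] [LieModule R L M] (V : LieSubmodule R L M) (hV : IsAtom V) :
    Nontrivial V := LieSubmodule.nontrivial_iff_ne_bot R L M |>.2 hV.1

lemma hlp_add_lie {U : Type*} [AddCommGroup U] [Module k U] [LieRingModule 𝔤 U]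
    [LieModule k 𝔤 U] (a b : F ⊗[k] 𝔤) (v : F ⊗[k] U) : ⁅a + b, v⁆ = ⁅a, v⁆ + ⁅b, v⁆ :=
  add_lie a b v

lemma hlp_zero_lie {U : Type*} [AddCommGroup U] [Module k U] [LieRingModule 𝔤 U]
    [LieModule k 𝔤 U] (v : F ⊗[k] U) : ⁅(0 : F ⊗[k] 𝔤), v⁆ = 0 :=
  zero_lie v

lemma hlp_lie_smul {U : Type*} [AddCommGroup U] [Module k U] [LieRingModule 𝔤 U]
    [LieModule k 𝔤 U] (c : F) (z : F ⊗[k] 𝔤) (v : F ⊗[k] U) : ⁅z, c • v⁆ = c • ⁅z, v⁆ :=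
  lie_smul c z v

lemma hlp_gal_zero {U : Type*} [AddCommGroup U] [Module k U] (σ : F ≃ₐ[k] F) :
    galMap k F σ U 0 = 0 := map_zero _

/-- trace on the first factor -/
noncomputable def hlpT (k F U : Type*) [Field k] [Field F] [Algebra k F] [AddCommGroup U]
    [Module k U] : F ⊗[k] U →ₗ[k] U :=
  (TensorProduct.lid k U).toLinearMap ∘ₗ LinearMap.rTensor U (Algebra.trace k F)

lemma hlpT_tmul {U : Type*} [AddCommGroup U] [Module k U] (a : F) (u : U) :
    hlpT k F U (a ⊗ₜ u) = Algebra.trace k F a • u := by simp [hlpT]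

lemma hlpT_lie {U : Type*} [AddCommGroup U] [Module k U] [LieRingModule 𝔤 U] [LieModule k 𝔤 U]
    (x : 𝔤) (v : F ⊗[k] U) :
    hlpT k F U ⁅((1 : F) ⊗ₜ[k] x : F ⊗[k] 𝔤), v⁆ = ⁅x, hlpT k F U v⁆ := by
  induction v using TensorProduct.induction_on with
  | zero => simp
  | add a b ha hb => rw [lie_add, map_add, map_add, lie_add, ha, hb]
  | tmul a u => simp [hlpT_tmul]

lemma hlpT_nat {U Y : Type*} [AddCommGroup U] [Module k U] [AddCommGroup Y] [Module k Y]
    (q : U →ₗ[k] Y) (v : F ⊗[k] U) :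
    hlpT k F Y (q.baseChange F v) = q (hlpT k F U v) := by
  induction v using TensorProduct.induction_on with
  | zero => simp
  | add a b ha hb => simp only [map_add, ha, hb]
  | tmul a u => simp [hlpT_tmul]

lemma hlp_bc_lie {U Y : Type*} [AddCommGroup U] [Module k U] [LieRingModule 𝔤 U]
    [LieModule k 𝔤 U] [AddCommGroup Y] [Module k Y] [LieRingModule 𝔤 Y] [LieModule k 𝔤 Y]
    (q : U →ₗ⁅k, 𝔤⁆ Y) (z : F ⊗[k] 𝔤) (v : F ⊗[k] U) :
    (q : U →ₗ[k] Y).baseChange F ⁅z, v⁆ = ⁅z, (q : U →ₗ[k] Y).baseChange F v⁆ := by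
  induction v using TensorProduct.induction_on with
  | zero => simp
  | add a b ha hb => rw [lie_add, map_add, map_add, lie_add, ha, hb]
  | tmul a u =>
    induction z using TensorProduct.induction_on with
    | zero => rw [hlp_zero_lie, hlp_zero_lie, map_zero]
    | add a b ha hb => rw [hlp_add_lie, map_add, hlp_add_lie, ha, hb]
    | tmul s x => simp

lemma hlp_gal_tmul {U : Type*} [AddCommGroup U] [Module k U] (σ : F ≃ₐ[k] F) (a : F) (u : U) :
    galMap k F σ U (a ⊗ₜ u) = σ a ⊗ₜ u := rfl

lemma hlp_gal_lie {U : Type*} [AddCommGroup U] [Module k U] [LieRingModule 𝔤 U]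
    [LieModule k 𝔤 U] (σ : F ≃ₐ[k] F) (z : F ⊗[k] 𝔤) (v : F ⊗[k] U) :
    galMap k F σ U ⁅z, v⁆ = ⁅galMap k F σ 𝔤 z, galMap k F σ U v⁆ := by
  induction v using TensorProduct.induction_on with
  | zero => rw [lie_zero, hlp_gal_zero, lie_zero]
  | add a b ha hb => rw [lie_add, map_add, map_add, lie_add, ha, hb]
  | tmul a u =>
    induction z using TensorProduct.induction_on with
    | zero => rw [hlp_zero_lie, hlp_gal_zero, hlp_gal_zero, hlp_zero_lie]
    | add a b ha hb => rw [hlp_add_lie, map_add, map_add, hlp_add_lie, ha, hb]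
    | tmul s x =>
      rw [LieAlgebra.ExtendScalars.bracket_tmul, hlp_gal_tmul, hlp_gal_tmul, hlp_gal_tmul,
        LieAlgebra.ExtendScalars.bracket_tmul, map_mul]

lemma hlp_gal_inv {U : Type*} [AddCommGroup U] [Module k U] (σ τ : F ≃ₐ[k] F)
    (h : ∀ a, σ (τ a) = a) (v : F ⊗[k] U) :
    galMap k F σ U (galMap k F τ U v) = v := by
  induction v using TensorProduct.induction_on with
  | zero => rw [hlp_gal_zero, hlp_gal_zero]
  | add a b ha hb => rw [map_add, map_add, ha, hb]
  | tmul a u => rw [hlp_gal_tmul, hlp_gal_tmul, h]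

lemma hlp_gal_one {U : Type*} [AddCommGroup U] [Module k U] (v : F ⊗[k] U) :
    galMap k F (1 : F ≃ₐ[k] F) U v = v := by
  induction v using TensorProduct.induction_on with
  | zero => rw [hlp_gal_zero]
  | add a b ha hb => rw [map_add, ha, hb]
  | tmul a u => rw [hlp_gal_tmul, AlgEquiv.one_apply]

lemma hlp_gal_ksmul {U : Type*} [AddCommGroup U] [Module k U] (σ : F ≃ₐ[k] F) (c : k)
    (v : F ⊗[k] U) : galMap k F σ U (c • v) = c • galMap k F σ U v :=
  (LinearMap.rTensor U σ.toLinearMap).map_smul c v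

variable [FiniteDimensional k F] [IsGalois k F]

lemma hlpT_sum {U : Type*} [AddCommGroup U] [Module k U] (v : F ⊗[k] U) :
    (1 : F) ⊗ₜ[k] (hlpT k F U v) = ∑ σ : F ≃ₐ[k] F, galMap k F σ U v := by
  induction v using TensorProduct.induction_on with
  | zero => simp only [map_zero, TensorProduct.tmul_zero, hlp_gal_zero, Finset.sum_const_zero]
  | add a b ha hb => simp only [map_add, TensorProduct.tmul_add, ha, hb, Finset.sum_add_distrib]
  | tmul a u =>
    simp only [hlpT_tmul, hlp_gal_tmul]
    rw [← TensorProduct.sum_tmul, ← trace_eq_sum_automorphisms, ← TensorProduct.smul_tmul,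
      Algebra.algebraMap_eq_smul_one]

lemma hlpT_ne {U : Type*} [AddCommGroup U] [Module k U] (v : F ⊗[k] U) (hv : v ≠ 0) :
    ∃ c : F, hlpT k F U (c • v) ≠ 0 := by
  by_contra! h
  apply hv
  let b := Module.Free.chooseBasis k U
  let B := b.baseChange F
  apply B.ext_elem
  intro i
  rw [map_zero, Finsupp.zero_apply]
  apply (traceForm_nondegenerate k F).1
  intro c
  have key : ∀ w : F ⊗[k] U, Algebra.trace k F (B.repr w i) = b.repr (hlpT k F U w) i := by
    intro w
    induction w using TensorProduct.induction_on with
    | zero => simp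
    | add a b ha hb => simp only [map_add, Finsupp.add_apply, ha, hb]
    | tmul a u =>
      simp [hlpT_tmul, B, mul_comm]
  rw [Algebra.traceForm_apply, mul_comm, ← smul_eq_mul, ← Finsupp.smul_apply, ← map_smul, key, h]
  simp

/-- the map `v ↦ T (c • q v)` -/
noncomputable def hlpf {W U : Type*} [AddCommGroup W] [Module k W] [AddCommGroup U] [Module k U]
    (q : W →ₗ[k] U) (c : F) : F ⊗[k] W →ₗ[k] U :=
  hlpT k F U ∘ₗ (LinearMap.lsmul F (F ⊗[k] U) c).restrictScalars k ∘ₗ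
    (q.baseChange F).restrictScalars k

lemma hlpf_apply {W U : Type*} [AddCommGroup W] [Module k W] [AddCommGroup U] [Module k U]
    (q : W →ₗ[k] U) (c : F) (v) : hlpf q c v = hlpT k F U (c • q.baseChange F v) := rfl

lemma hlpf_lie {W U : Type*} [AddCommGroup W] [Module k W] [LieRingModule 𝔤 W]
    [LieModule k 𝔤 W] [AddCommGroup U] [Module k U] [LieRingModule 𝔤 U]
    [LieModule k 𝔤 U] (q : W →ₗ⁅k, 𝔤⁆ U) (c : F) (x : 𝔤) (v) :
    hlpf (q : W →ₗ[k] U) c ⁅((1 : F) ⊗ₜ[k] x : F ⊗[k] 𝔤), v⁆ = ⁅x, hlpf (q : W →ₗ[k] U) c v⁆ := by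
  rw [hlpf_apply, hlpf_apply, hlp_bc_lie, ← hlp_lie_smul, hlpT_lie]

lemma hlp_claim2 {W U : Type*} [AddCommGroup W] [Module k W] [LieRingModule 𝔤 W]
    [LieModule k 𝔤 W] [Module.Finite k W] [AddCommGroup U] [Module k U] [LieRingModule 𝔤 U]
    [LieModule k 𝔤 U] (hU : ∀ N : LieSubmodule k 𝔤 U, N = ⊥ ∨ N = ⊤)
    (V0 V : LieSubmodule F (F ⊗[k] 𝔤) (F ⊗[k] W)) (hV0 : IsAtom V0) (hV : IsAtom V)
    (q0 : W →ₗ⁅k, 𝔤⁆ U) (v0 : F ⊗[k] W) (hv0 : v0 ∈ V0)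
    (hq0 : (q0 : W →ₗ[k] U).baseChange F v0 ≠ 0)
    (f : V →ₗ[k] U) (hf : f ≠ 0)
    (hfe : ∀ (x : 𝔤) m, f ⁅((1 : F) ⊗ₜ[k] x : F ⊗[k] 𝔤), m⁆ = ⁅x, f m⁆) :
    ∃ σ τ : F ≃ₐ[k] F, GalConjIso k F 𝔤 τ σ V0 V := by
  have : Nontrivial V := hlp_nontriv V hV
  have : Module.Finite k V := Module.Finite.trans F V
  obtain ⟨j, hj, hje⟩ := hlp_C (hlp_atom V hV) hU f hf hfe
  let π : F ⊗[k] W →ₗ[F] V := LinearMap.liftBaseChange F (j ∘ₗ (q0 : W →ₗ[k] U))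
  have hπ : ∀ a w, π (a ⊗ₜ w) = a • j (q0 w) := fun a w => by simp [π]
  have hπl : ∀ (z : F ⊗[k] 𝔤) v, π ⁅z, v⁆ = ⁅z, π v⁆ := by
    intro z v
    induction v using TensorProduct.induction_on with
    | zero => simp
    | add a b ha hb => rw [lie_add, map_add, map_add, lie_add, ha, hb]
    | tmul a u =>
      induction z using TensorProduct.induction_on with
      | zero => rw [hlp_zero_lie, map_zero]; exact (zero_lie (L := F ⊗[k] 𝔤) (M := V) _).symm
      | add a b ha hb =>
        rw [hlp_add_lie, map_add, ha, hb]
        exact (add_lie (L := F ⊗[k] 𝔤) (M := V) _ _ _).symm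
      | tmul s x =>
        rw [LieAlgebra.ExtendScalars.bracket_tmul, hπ, hπ, LieModuleHom.map_lie, hje,
          hlp_tmul_lie s x, lie_smul, smul_smul]
  obtain ⟨τ, v1, hv1, hne⟩ : ∃ τ : F ≃ₐ[k] F, ∃ v ∈ V0, π (galMap k F τ W v) ≠ 0 := by
    by_contra! hcon
    obtain ⟨c, hc⟩ := hlpT_ne _ hq0
    apply hc
    rw [← map_smul, hlpT_nat]
    apply hj
    have h1 := hπ 1 (hlpT k F W (c • v0))
    rw [hlpT_sum, map_sum, Finset.sum_eq_zero (fun σ _ => hcon σ _ (V0.smul_mem c hv0)),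
      one_smul] at h1
    rw [map_zero]
    exact h1.symm
  have hτ : ∀ z : F ⊗[k] 𝔤, galMap k F τ 𝔤 (galMap k F τ.symm 𝔤 z) = z :=
    hlp_gal_inv _ _ (by simp)
  let V0' : LieSubmodule F (F ⊗[k] 𝔤) (F ⊗[k] W) :=
    { galSub k F τ (V0 : Submodule F (F ⊗[k] W)) with
      lie_mem := by
        rintro z _ ⟨v, hv, rfl⟩
        refine ⟨⁅galMap k F τ.symm 𝔤 z, v⁆, V0.lie_mem hv, ?_⟩
        rw [hlp_gal_lie, hτ] }
  let K : LieSubmodule F (F ⊗[k] 𝔤) (F ⊗[k] W) :=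
    { carrier := {v | v ∈ V0 ∧ π (galMap k F τ W v) = 0}
      add_mem' := by
        rintro a b ⟨ha, ha'⟩ ⟨hb, hb'⟩
        exact ⟨add_mem ha hb, by rw [map_add, map_add, ha', hb', add_zero]⟩
      zero_mem' := ⟨zero_mem _, by rw [hlp_gal_zero, map_zero]⟩
      smul_mem' := by
        rintro c a ⟨ha, ha'⟩
        exact ⟨V0.smul_mem c ha, by rw [LinearMap.map_smulₛₗ, map_smul, ha', smul_zero]⟩
      lie_mem := by
        rintro z a ⟨ha, ha'⟩
        exact ⟨V0.lie_mem ha, by rw [hlp_gal_lie, hπl, ha', lie_zero]⟩ }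
  have hK : K = ⊥ := by
    refine (hV0.le_iff.1 (show K ≤ V0 from fun v hv => hv.1)).resolve_right fun h => ?_
    have : v1 ∈ K := by rw [h]; exact hv1
    exact hne this.2
  let R : LieSubmodule F (F ⊗[k] 𝔤) V :=
    { (V0' : Submodule F (F ⊗[k] W)).map π with
      lie_mem := by
        rintro z _ ⟨v, hv, rfl⟩
        exact ⟨⁅z, v⁆, V0'.lie_mem hv, hπl z v⟩ }
  have hR : R = ⊤ := by
    refine (hlp_atom V hV R).resolve_left fun h => hne ?_
    have : π (galMap k F τ W v1) ∈ R := ⟨_, ⟨v1, hv1, rfl⟩, rfl⟩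
    rw [h] at this
    exact (LieSubmodule.mem_bot _).1 this
  have hbij : Function.Bijective (π ∘ₗ (V0' : Submodule F (F ⊗[k] W)).subtype) := by
    constructor
    · rw [injective_iff_map_eq_zero]
      rintro ⟨_, v, hv, rfl⟩ h
      have : v ∈ K := ⟨hv, h⟩
      rw [hK, LieSubmodule.mem_bot] at this
      subst this
      exact Subtype.ext (hlp_gal_zero τ)
    · intro v
      have : v ∈ R := by rw [hR]; trivial
      obtain ⟨w, hw, rfl⟩ := this
      exact ⟨⟨w, hw⟩, rfl⟩
  refine ⟨1, τ, V0', V, rfl, ?_, ⟨{ LinearEquiv.ofBijective _ hbij with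
    map_lie' := fun {z m} => hπl z m }⟩⟩
  ext v
  constructor
  · intro hv; exact ⟨v, hv, hlp_gal_one v⟩
  · rintro ⟨w, hw, rfl⟩; rw [hlp_gal_one]; exact hw

lemma hlp_claim1 {W U Y : Type*} [AddCommGroup W] [Module k W] [LieRingModule 𝔤 W]
    [LieModule k 𝔤 W] [Module.Finite k W] [AddCommGroup U] [Module k U] [LieRingModule 𝔤 U]
    [LieModule k 𝔤 U] (hU : ∀ N : LieSubmodule k 𝔤 U, N = ⊥ ∨ N = ⊤)
    [AddCommGroup Y] [Module k Y] [LieRingModule 𝔤 Y]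
    [LieModule k 𝔤 Y] (hY : ∀ N : LieSubmodule k 𝔤 Y, N = ⊥ ∨ N = ⊤)
    (V0 V : LieSubmodule F (F ⊗[k] 𝔤) (F ⊗[k] W)) (hV0 : IsAtom V0)
    (q0 : W →ₗ⁅k, 𝔤⁆ U) (v0 : F ⊗[k] W) (hv0 : v0 ∈ V0)
    (hq0 : (q0 : W →ₗ[k] U).baseChange F v0 ≠ 0)
    (q : W →ₗ⁅k, 𝔤⁆ Y) (v : F ⊗[k] W) (hv : v ∈ V)
    (hq : (q : W →ₗ[k] Y).baseChange F v ≠ 0)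
    (σ τ : F ≃ₐ[k] F) (h : GalConjIso k F 𝔤 τ σ V0 V) : Nonempty (U ≃ₗ⁅k, 𝔤⁆ Y) := by
  obtain ⟨V0', V', hV0', hV', ⟨e⟩⟩ := h
  have : Nontrivial V0 := hlp_nontriv V0 hV0
  have : Module.Finite k V0 := Module.Finite.trans F V0
  obtain ⟨c0, hc0⟩ := hlpT_ne _ hq0
  obtain ⟨c, hc⟩ := hlpT_ne _ hq
  have hm : ∀ w : V0, galMap k F τ W (w : F ⊗[k] W) ∈ V0' := fun w => by
    rw [← LieSubmodule.mem_toSubmodule, hV0']; exact ⟨w, w.2, rfl⟩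
  let i : V0 →ₗ[k] F ⊗[k] W := ((V0 : Submodule F (F ⊗[k] W)).subtype).restrictScalars k
  let g : V0 →ₗ[k] F ⊗[k] W :=
    { toFun := fun w => galMap k F σ.symm W (e ⟨_, hm w⟩ : V')
      map_add' := fun a b => by
        rw [← map_add]
        congr 1
        rw [← LieSubmodule.coe_add, ← map_add]
        congr 2
        ext
        exact map_add (galMap k F τ W) _ _
      map_smul' := fun c a => by
        rw [RingHom.id_apply, ← hlp_gal_ksmul]
        congr 1
        have : (⟨_, hm (c • a)⟩ : V0') = algebraMap k F c • ⟨_, hm a⟩ := by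
          ext
          change galMap k F τ W (c • (a : F ⊗[k] W)) = algebraMap k F c • galMap k F τ W a
          rw [hlp_gal_ksmul, algebraMap_smul]
        rw [this, map_smul, LieSubmodule.coe_smul, algebraMap_smul] }
  have hg : ∀ w : V0, g w = galMap k F σ.symm W (e ⟨_, hm w⟩ : V') := fun _ => rfl
  refine hlp_C2 (hlp_atom V0 hV0) hU (hlpf (q0 : W →ₗ[k] U) c0 ∘ₗ i) ?_ ?_ hY
    (hlpf (q : W →ₗ[k] Y) c ∘ₗ g) ?_ ?_
  · intro h
    exact hc0 (LinearMap.congr_fun h ⟨v0, hv0⟩)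
  · intro x m
    exact hlpf_lie q0 c0 x (m : F ⊗[k] W)
  · intro h
    have hv' : galMap k F σ W v ∈ V' := by
      rw [← LieSubmodule.mem_toSubmodule, hV']; exact ⟨v, hv, rfl⟩
    obtain ⟨⟨w', hw'⟩, hw⟩ := e.surjective ⟨_, hv'⟩
    have hw2 := hw'
    rw [← LieSubmodule.mem_toSubmodule, hV0'] at hw2
    obtain ⟨w, hwV, rfl⟩ := hw2
    apply hc
    have h2 := LinearMap.congr_fun h ⟨w, hwV⟩
    rw [LinearMap.comp_apply, hg] at h2
    dsimp only at h2
    rw [hw] at h2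
    dsimp only at h2
    rw [hlp_gal_inv _ _ (by simp)] at h2
    exact h2
  · intro x m
    rw [LinearMap.comp_apply, LinearMap.comp_apply, ← hlpf_lie]
    congr 1
    rw [hg, hg]
    have : (⟨_, hm ⁅((1 : F) ⊗ₜ[k] x : F ⊗[k] 𝔤), m⁆⟩ : V0')
        = ⁅((1 : F) ⊗ₜ[k] x : F ⊗[k] 𝔤), ⟨_, hm m⟩⁆ := by
      ext
      change galMap k F τ W ⁅((1 : F) ⊗ₜ[k] x : F ⊗[k] 𝔤), (m : F ⊗[k] W)⁆ = _
      rw [hlp_gal_lie, hlp_gal_tmul, map_one]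
      rfl
    have hem : ∀ (z : F ⊗[k] 𝔤) (m : V0'), e ⁅z, m⁆ = ⁅z, e m⁆ := fun z m =>
      e.toLieModuleHom.map_lie z m
    rw [this, hem, LieSubmodule.coe_bracket, hlp_gal_lie, hlp_gal_tmul, map_one]


lemma hlp_finrank_sum {K M ι : Type*} [Field K] [AddCommGroup M] [Module K M] [Module.Finite K M]
    [Fintype ι] (p : ι → Submodule K M) (hi : iSupIndep p) (hs : iSup p = ⊤) :
    ∑ i, Module.finrank K (p i) = Module.finrank K M := by
  classical
  have h := DirectSum.isInternal_submodule_of_iSupIndep_of_iSup_eq_top hi hs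
  rw [← (LinearEquiv.ofBijective (DirectSum.coeLinearMap p) h).finrank_eq,
    Module.finrank_directSum]

lemma hlp_proj {W : Type*} [AddCommGroup W] [Module k W] [LieRingModule 𝔤 W]
    [LieModule k 𝔤 W] {Γ : Type*} [Fintype Γ] (Wf : Γ → LieSubmodule k 𝔤 W)
    (hi : iSupIndep Wf) (hs : iSup Wf = ⊤) :
    ∃ q : (γ : Γ) → W →ₗ⁅k, 𝔤⁆ Wf γ, (∀ w, ∑ γ, (q γ w : W) = w) ∧
      ∀ γ (w : Wf γ), q γ w = w := by
  classical
  have h := DirectSum.isInternal_submodule_of_iSupIndep_of_iSup_eq_top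
    (LieSubmodule.iSupIndep_toSubmodule.mpr hi) (LieSubmodule.iSup_toSubmodule_eq_top.mpr hs)
  let e := LinearEquiv.ofBijective (DirectSum.coeLinearMap fun γ => (Wf γ : Submodule k W)) h
  have he : ∀ γ (w : Wf γ), e (DirectSum.lof k Γ (fun γ => (Wf γ : Submodule k W)) γ w) = w :=
    fun γ w => DirectSum.coeLinearMap_lof _ _ _
  have he' : ∀ γ (w : Wf γ), e.symm w = DirectSum.lof k Γ (fun γ => (Wf γ : Submodule k W)) γ w :=
    fun γ w => by rw [← he γ w, LinearEquiv.symm_apply_apply]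
  let q0 : (γ : Γ) → W →ₗ[k] Wf γ := fun γ =>
    DirectSum.component k Γ (fun γ => (Wf γ : Submodule k W)) γ ∘ₗ e.symm.toLinearMap
  have hq1 : ∀ γ (w : Wf γ), q0 γ w = w := fun γ w => by
    change DirectSum.component k Γ (fun γ => (Wf γ : Submodule k W)) γ (e.symm w) = w
    rw [he', DirectSum.component.lof_self]
  have hq2 : ∀ γ δ (w : Wf γ), γ ≠ δ → q0 δ w = 0 := fun γ δ w hne => by
    change DirectSum.component k Γ (fun γ => (Wf γ : Submodule k W)) δ (e.symm w) = 0
    rw [he', DirectSum.component.of, dif_neg hne]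
  have ind : ∀ (P : W → Prop), P 0 → (∀ a b, P a → P b → P (a + b)) →
      (∀ γ (w : Wf γ), P w) → ∀ w, P w := by
    intro P h0 ha hw w
    have : w ∈ ⨆ γ, (Wf γ : Submodule k W) := by
      rw [LieSubmodule.iSup_toSubmodule_eq_top.mpr hs]; trivial
    exact Submodule.iSup_induction _ (motive := P) this (fun γ x hx => hw γ ⟨x, hx⟩) h0 ha
  refine ⟨fun γ => { q0 γ with map_lie' := ?_ }, ?_, hq1⟩
  · intro x w
    change q0 γ ⁅x, w⁆ = ⁅x, q0 γ w⁆
    revert w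
    apply ind
    · simp
    · intro a b ha hb; rw [lie_add, map_add, map_add, lie_add, ha, hb]
    · intro δ w
      rw [← LieSubmodule.coe_bracket]
      by_cases hd : δ = γ
      · subst hd; rw [hq1, hq1]
      · rw [hq2 _ _ _ hd, hq2 _ _ _ hd, lie_zero]
  · change ∀ w, ∑ γ, (q0 γ w : W) = w
    apply ind
    · simp
    · intro a b ha hb
      simp only [map_add, LieSubmodule.coe_add, Finset.sum_add_distrib, ha, hb]
    · intro δ w
      rw [Finset.sum_eq_single δ, hq1]
      · intro γ _ hne; rw [hq2 _ _ _ hne.symm]; rfl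
      · simp

lemma hlp_bc_sum {W : Type*} [AddCommGroup W] [Module k W] [LieRingModule 𝔤 W]
    [LieModule k 𝔤 W] {Γ : Type*} [Fintype Γ] (Wf : Γ → LieSubmodule k 𝔤 W)
    (q : (γ : Γ) → W →ₗ⁅k, 𝔤⁆ Wf γ) (hq : ∀ w, ∑ γ, (q γ w : W) = w) (v : F ⊗[k] W)
    (hv : ∀ γ, (q γ : W →ₗ[k] Wf γ).baseChange F v = 0) : v = 0 := by
  have key : ∀ v : F ⊗[k] W, ∑ γ, ((Wf γ).incl : Wf γ →ₗ[k] W).baseChange F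
      ((q γ : W →ₗ[k] Wf γ).baseChange F v) = v := by
    intro v
    induction v using TensorProduct.induction_on with
    | zero => simp
    | add a b ha hb => simp only [map_add, Finset.sum_add_distrib, ha, hb]
    | tmul a w =>
      simp only [LinearMap.baseChange_tmul]
      rw [← TensorProduct.tmul_sum]
      congr 1
      exact hq w
  rw [← key v]
  simp [hv]

lemma hlp_dim {W : Type*} [AddCommGroup W] [Module k W] [LieRingModule 𝔤 W]
    [LieModule k 𝔤 W] [Module.Finite k W] {Γ : Type*} [Fintype Γ] (Wf : Γ → LieSubmodule k 𝔤 W)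
    (q : (γ : Γ) → W →ₗ⁅k, 𝔤⁆ Wf γ) (hq : ∀ w, ∑ γ, (q γ w : W) = w)
    {A : Type*} [Fintype A] (Vf : A → LieSubmodule F (F ⊗[k] 𝔤) (F ⊗[k] W))
    (hi : iSupIndep Vf) (S : A → Prop) (T : Γ → Prop) [DecidablePred S] [DecidablePred T]
    (h : ∀ α, S α → ∀ γ, ¬ T γ → ∀ v ∈ Vf α, (q γ : W →ₗ[k] Wf γ).baseChange F v = 0) :
    ∑ α : {α // S α}, Module.finrank F (Vf α) ≤ ∑ γ : {γ // T γ}, Module.finrank k (Wf γ) := by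
  classical
  let p : {α // S α} → Submodule F (F ⊗[k] W) := fun α => (Vf α : Submodule F (F ⊗[k] W))
  have hp : iSupIndep p := (LieSubmodule.iSupIndep_toSubmodule.mpr hi).comp Subtype.val_injective
  let Q : F ⊗[k] W →ₗ[F] (γ : {γ // T γ}) → F ⊗[k] Wf γ :=
    LinearMap.pi fun γ => (q γ : W →ₗ[k] Wf γ).baseChange F
  let L := DirectSum.coeLinearMap p
  have hL : Function.Injective L := hp.dfinsupp_lsum_injective
  have hinj : Function.Injective (Q ∘ₗ L) := by
    rw [← LinearMap.ker_eq_bot, eq_bot_iff]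
    intro x hx
    have hx' : Q (L x) = 0 := hx
    have h0 : L x = 0 := by
      apply hlp_bc_sum Wf q hq
      intro γ
      by_cases hT : T γ
      · exact congrFun hx' ⟨γ, hT⟩
      · have hm : L x ∈ ⨆ α, p α := by
          rw [← DirectSum.range_coeLinearMap]; exact ⟨x, rfl⟩
        refine Submodule.iSup_induction _
          (motive := fun v => (q γ : W →ₗ[k] Wf γ).baseChange F v = 0) hm ?_ ?_ ?_
        · intro α v hv; exact h α α.2 γ hT v hv
        · simp
        · intro a b ha hb; rw [map_add, ha, hb, add_zero]
    exact (Submodule.mem_bot F).2 (hL (h0.trans (map_zero L).symm))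
  have := LinearMap.finrank_le_finrank_of_injective hinj
  rw [Module.finrank_directSum, Module.finrank_pi_fintype] at this
  simp only [Module.finrank_baseChange] at this
  exact this

end Helpers

/-- With decompositions `W = ⊕_γ W_γ` (irreducible over `k`) and
`W ⊗_k F = ⊕_α V_α` (irreducible over `F`), `V_{α₀} ⊆ W_{γ₀} ⊗_k F`: the multiplicity `m`
of `W_{γ₀}` in `W` satisfies `m · dim_k W_{γ₀} = Σ_{α ∈ A'} dim_F V_α`, where `A'` is the
set of `α` whose `V_α` is Galois-conjugate-isomorphic to `V_{α₀}`. -/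
theorem stmt4
    (k F : Type*) [Field k] [Field F] [Algebra k F] [FiniteDimensional k F] [IsGalois k F]
    (𝔤 : Type*) [LieRing 𝔤] [LieAlgebra k 𝔤] [Module.Finite k 𝔤]
    (W : Type*)
    [AddCommGroup W] [Module k W] [LieRingModule 𝔤 W] [LieModule k 𝔤 W] [Module.Finite k W]
    (Γ A : Type)
    (Wfam : Γ → LieSubmodule k 𝔤 W)
    (hWatom : ∀ γ, IsAtom (Wfam γ)) (hWindep : iSupIndep Wfam) (hWsup : (⨆ γ, Wfam γ) = ⊤)
    (Vfam : A → LieSubmodule F (F ⊗[k] 𝔤) (F ⊗[k] W))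
    (hVatom : ∀ α, IsAtom (Vfam α)) (hVindep : iSupIndep Vfam) (hVsup : (⨆ α, Vfam α) = ⊤)
    (γ₀ : Γ) (α₀ : A) (hα₀ : Vfam α₀ ≤ (Wfam γ₀).baseChange F) :
    Nat.card {γ : Γ // Nonempty (↥(Wfam γ) ≃ₗ⁅k, 𝔤⁆ ↥(Wfam γ₀))}
        * Module.finrank k ↥(Wfam γ₀)
      = ∑ᶠ α ∈ {α' : A | ∃ σ τ : F ≃ₐ[k] F, GalConjIso k F 𝔤 τ σ (Vfam α₀) (Vfam α')},
          Module.finrank F ↥(Vfam α) := by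
  classical
  have hΓ : Finite Γ := WellFoundedGT.finite_of_iSupIndep hWindep fun γ => (hWatom γ).1
  have hA : Finite A := WellFoundedGT.finite_of_iSupIndep hVindep fun α => (hVatom α).1
  have := Fintype.ofFinite Γ
  have := Fintype.ofFinite A
  obtain ⟨q, hq, hq1⟩ := hlp_proj Wfam hWindep hWsup
  obtain ⟨v0, hv0, hv0ne⟩ : ∃ v ∈ Vfam α₀,
      (q γ₀ : W →ₗ[k] Wfam γ₀).baseChange F v ≠ 0 := by
    by_contra! hcon
    apply (hVatom α₀).1
    rw [eq_bot_iff]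
    intro v hv
    have h1 : ∀ v ∈ ((Wfam γ₀ : Submodule k W)).baseChange F,
        ((Wfam γ₀).incl : Wfam γ₀ →ₗ[k] W).baseChange F
          ((q γ₀ : W →ₗ[k] Wfam γ₀).baseChange F v) = v := by
      intro v hv
      rw [Submodule.baseChange_eq_span] at hv
      induction hv using Submodule.span_induction with
      | zero => simp
      | add a b _ _ ha hb => simp only [map_add, ha, hb]
      | smul c a _ ha => rw [map_smul, map_smul, ha]
      | mem w hw =>
        obtain ⟨w, hw, rfl⟩ := hw
        have h2 := hq1 γ₀ ⟨w, hw⟩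
        change (1 : F) ⊗ₜ[k] ((q γ₀ w : Wfam γ₀) : W) = (1 : F) ⊗ₜ[k] w
        congr 1
        exact congrArg Subtype.val h2
    have h3 := h1 v (hα₀ hv)
    rw [hcon v hv, map_zero] at h3
    exact (LieSubmodule.mem_bot _).2 h3.symm
  let T : Γ → Prop := fun γ => Nonempty (↥(Wfam γ) ≃ₗ⁅k, 𝔤⁆ ↥(Wfam γ₀))
  let S : A → Prop := fun α' => ∃ σ τ : F ≃ₐ[k] F, GalConjIso k F 𝔤 τ σ (Vfam α₀) (Vfam α')
  have hc1 : ∀ α, S α → ∀ γ, ¬ T γ → ∀ v ∈ Vfam α,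
      (q γ : W →ₗ[k] Wfam γ).baseChange F v = 0 := by
    rintro α ⟨σ, τ, h⟩ γ hT v hv
    by_contra hne
    obtain ⟨e⟩ := hlp_claim1 (hlp_atom _ (hWatom γ₀)) (hlp_atom _ (hWatom γ)) (Vfam α₀) (Vfam α)
      (hVatom α₀) (q γ₀) v0 hv0 hv0ne (q γ) v hv hne σ τ h
    exact hT ⟨e.symm⟩
  have hc2 : ∀ α, ¬ S α → ∀ γ, ¬ ¬ T γ → ∀ v ∈ Vfam α,
      (q γ : W →ₗ[k] Wfam γ).baseChange F v = 0 := by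
    intro α hS γ hT v hv
    by_contra hne
    obtain ⟨e⟩ := not_not.1 hT
    apply hS
    obtain ⟨c, hc⟩ := hlpT_ne _ hne
    let i : Vfam α →ₗ[k] F ⊗[k] W :=
      ((Vfam α : Submodule F (F ⊗[k] W)).subtype).restrictScalars k
    refine hlp_claim2 (hlp_atom _ (hWatom γ₀)) (Vfam α₀) (Vfam α) (hVatom α₀) (hVatom α) (q γ₀)
      v0 hv0 hv0ne ((e.toLieModuleHom : Wfam γ →ₗ[k] Wfam γ₀) ∘ₗ
        hlpf (q γ : W →ₗ[k] Wfam γ) c ∘ₗ i) ?_ ?_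
    · intro h0
      have h1 : e (hlpf (q γ : W →ₗ[k] Wfam γ) c v) = 0 := LinearMap.congr_fun h0 ⟨v, hv⟩
      exact hc (e.injective (h1.trans (map_zero e.toLieModuleHom).symm))
    · intro x m
      refine Eq.trans ?_ (e.toLieModuleHom.map_lie x _)
      exact congrArg e (hlpf_lie (q γ) c x (m : F ⊗[k] W))
  have d1 := hlp_dim Wfam q hq Vfam hVindep S T hc1
  have d2 := hlp_dim Wfam q hq Vfam hVindep (fun α => ¬ S α) (fun γ => ¬ T γ) hc2
  have s1 := hlp_finrank_sum (fun α => (Vfam α : Submodule F (F ⊗[k] W)))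
    (LieSubmodule.iSupIndep_toSubmodule.mpr hVindep)
    (LieSubmodule.iSup_toSubmodule_eq_top.mpr hVsup)
  have s2 := hlp_finrank_sum (fun γ => (Wfam γ : Submodule k W))
    (LieSubmodule.iSupIndep_toSubmodule.mpr hWindep)
    (LieSubmodule.iSup_toSubmodule_eq_top.mpr hWsup)
  rw [Module.finrank_baseChange, ← s2] at s1
  have t1 := Fintype.sum_subtype_add_sum_subtype S (fun α => Module.finrank F (Vfam α))
  have t2 := Fintype.sum_subtype_add_sum_subtype T (fun γ => Module.finrank k (Wfam γ))
  have s3 : ∑ α, Module.finrank F (Vfam α) = ∑ γ, Module.finrank k (Wfam γ) := s1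
  have e1 : ∑ γ : {γ // T γ}, Module.finrank k (Wfam γ)
      = Nat.card {γ // T γ} * Module.finrank k (Wfam γ₀) := by
    rw [Finset.sum_congr rfl (g := fun _ => Module.finrank k (Wfam γ₀)), Finset.sum_const,
      smul_eq_mul, Finset.card_univ, Nat.card_eq_fintype_card]
    rintro ⟨γ, ⟨e⟩⟩ _
    exact e.toLinearEquiv.finrank_eq
  have e2 : ∑ᶠ α ∈ {α' : A | S α'}, Module.finrank F ↥(Vfam α)
      = ∑ α : {α // S α}, Module.finrank F (Vfam α) := by
    rw [← finsum_set_coe_eq_finsum_mem]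
    exact finsum_eq_sum_of_fintype _
  change Nat.card {γ // T γ} * Module.finrank k (Wfam γ₀)
    = ∑ᶠ α ∈ {α' : A | S α'}, Module.finrank F ↥(Vfam α)
  rw [e2, ← e1]
  omega
end

section
/- Suppose g, h₁, h₂, h₃ ∈ Gal(F/ℚ) satisfy: g(z₁) = z₂, g(z₂) = z₃, g(z₃) = z₁; and for each i, hᵢ(zᵢ) = −zᵢ while hᵢ(z_j) = z_j for j ≠ i. Then the fixed field of the subgroup of Gal(F/ℚ) generated by g, h₁h₂ and h₂h₃ is ℚ(i) = ℚ(√−1), a quadratic extension of ℚ. -/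
open IntermediateField in
theorem core_aux {F : Type*} [Field F] [hAlg : Algebra ℚ F] (r z₁ z₂ z₃ : F)
    (hr : r ^ 3 - 3 * r + 1 = 0) (h1 : z₁ ^ 2 = r) (h2 : z₂ ^ 2 = 2 - r - r ^ 2)
    (h3 : z₃ ^ 2 = r ^ 2 - 2) (htop : IntermediateField.adjoin ℚ {z₁, z₂, z₃} = ⊤)
    (g p q : F ≃ₐ[ℚ] F)
    (hg₁ : g z₁ = z₂) (hg₂ : g z₂ = z₃) (hg₃ : g z₃ = z₁)
    (hp₁ : p z₁ = -z₁) (hp₂ : p z₂ = -z₂) (hp₃ : p z₃ = z₃)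
    (hq₁ : q z₁ = z₁) (hq₂ : q z₂ = -z₂) (hq₃ : q z₃ = -z₃) :
    IntermediateField.fixedField (Subgroup.closure {g, p, q}) = ℚ⟮z₁ * z₂ * z₃⟯ := by
  have hle : ∀ s ∈ ({g, p, q} : Set (F ≃ₐ[ℚ] F)), s (z₁ * z₂ * z₃) = z₁ * z₂ * z₃ := by
    rintro s (rfl | rfl | rfl) <;> simp only [map_mul, *] <;> ring
  have hw : z₁ * z₂ * z₃ ∈ IntermediateField.fixedField (Subgroup.closure {g, p, q}) := by
    rw [IntermediateField.mem_fixedField_iff]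
    intro s hs
    induction hs using Subgroup.closure_induction with
    | mem x hx => exact hle x hx
    | one => rfl
    | mul x y _ _ hx hy => rw [AlgEquiv.mul_apply, hy, hx]
    | inv x _ hx =>
      have := congrArg (fun t => (x⁻¹ : F ≃ₐ[ℚ] F) t) hx
      simp only [← AlgEquiv.mul_apply, inv_mul_cancel, AlgEquiv.one_apply] at this
      exact this.symm
  have hK : ℚ⟮z₁ * z₂ * z₃⟯ ≤ IntermediateField.fixedField (Subgroup.closure {g, p, q}) := by
    rw [IntermediateField.adjoin_simple_le_iff]; exact hw
  apply le_antisymm _ hK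
  have hfix : ∀ s ∈ ({g, p, q} : Set (F ≃ₐ[ℚ] F)), ∀ x ∈ ℚ⟮z₁ * z₂ * z₃⟯, s x = x := by
    intro s hs x hx
    exact (IntermediateField.mem_fixedField_iff _ _).1 (hK hx) s (Subgroup.subset_closure hs)
  set K := ℚ⟮z₁ * z₂ * z₃⟯ with hKdef
  have hwK : z₁ * z₂ * z₃ ∈ K := IntermediateField.mem_adjoin_simple_self _ _
  obtain ⟨w, hwd⟩ : ∃ w, w = z₁ * z₂ * z₃ := ⟨_, rfl⟩
  rw [← hwd] at hwK
  let R : F → Prop := fun y => ∃ a ∈ K, ∃ b ∈ K, ∃ c ∈ K, y = a + b * r + c * r ^ 2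
  have RK : ∀ a ∈ K, R a := fun a ha => ⟨a, ha, 0, K.zero_mem, 0, K.zero_mem, by ring⟩
  have Rr : R r := ⟨0, K.zero_mem, 1, K.one_mem, 0, K.zero_mem, by ring⟩
  have Radd : ∀ x y, R x → R y → R (x + y) := by
    rintro _ _ ⟨a, ha, b, hb, c, hc, rfl⟩ ⟨a', ha', b', hb', c', hc', rfl⟩
    exact ⟨a + a', K.add_mem ha ha', b + b', K.add_mem hb hb', c + c', K.add_mem hc hc', by ring⟩
  have hK3 : (3 : F) ∈ K := by simpa using K.algebraMap_mem 3
  have Rmul : ∀ x y, R x → R y → R (x * y) := by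
    rintro _ _ ⟨a, ha, b, hb, c, hc, rfl⟩ ⟨a', ha', b', hb', c', hc', rfl⟩
    have hM := fun {x y} (hx : x ∈ K) (hy : y ∈ K) => K.mul_mem hx hy
    refine ⟨a * a' - (b * c' + c * b'), ?_, a * b' + b * a' + 3 * (b * c' + c * b') - c * c', ?_,
      a * c' + b * b' + c * a' + 3 * (c * c'), ?_, ?_⟩
    · exact K.sub_mem (hM ha ha') (K.add_mem (hM hb hc') (hM hc hb'))
    · exact K.sub_mem (K.add_mem (K.add_mem (hM ha hb') (hM hb ha'))
        (hM hK3 (K.add_mem (hM hb hc') (hM hc hb')))) (hM hc hc')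
    · exact K.add_mem (K.add_mem (K.add_mem (hM ha hc') (hM hb hb')) (hM hc ha'))
        (hM hK3 (hM hc hc'))
    · linear_combination (b * c' + c * b' + c * c' * r) * hr
  have R0 := RK 0 K.zero_mem
  have R1 := RK 1 K.one_mem
  have Rn1 := RK (-1) (K.neg_mem K.one_mem)
  have Rn2 : R 2 := by simpa using RK _ (K.algebraMap_mem 2)
  have Rn3 := RK 3 hK3
  have Rw := RK w hwK
  have Rs2 : R (2 - r - r ^ 2) := by
    have := Radd _ _ Rn2 (Rmul _ _ Rn1 (Radd _ _ Rr (Rmul _ _ Rr Rr)))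
    convert this using 1; ring
  have Rs3 : R (r ^ 2 - 2) := by
    have := Radd _ _ (Rmul _ _ Rr Rr) (Rmul _ _ Rn1 Rn2)
    convert this using 1; ring
  -- inverses
  have Ri1 : R (w * (3 - r ^ 2)) := by
    have := Rmul _ _ Rw (Radd _ _ Rn3 (Rmul _ _ Rn1 (Rmul _ _ Rr Rr)))
    convert this using 1; ring
  have Ri2 : R (w * (1 - r)) := by
    have := Rmul _ _ Rw (Radd _ _ R1 (Rmul _ _ Rn1 Rr))
    convert this using 1; ring
  have Ri3 : R (w * (3 - (r ^ 2 - 2) ^ 2)) := by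
    have := Rmul _ _ Rw (Radd _ _ Rn3 (Rmul _ _ Rn1 (Rmul _ _ Rs3 Rs3)))
    convert this using 1; ring
  have e23 : z₂ * z₃ = w * (3 - r ^ 2) * z₁ := by
    rw [hwd]; linear_combination (-z₂ * z₃ * (3 - r ^ 2)) * h1 + z₂ * z₃ * hr
  have e13 : z₁ * z₃ = w * (1 - r) * z₂ := by
    rw [hwd]; linear_combination (-z₁ * z₃ * (1 - r)) * h2 - z₁ * z₃ * hr
  have e12 : z₁ * z₂ = w * (3 - (r ^ 2 - 2) ^ 2) * z₃ := by
    rw [hwd]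
    linear_combination (-z₁ * z₂ * (3 - (r ^ 2 - 2) ^ 2)) * h3 + z₁ * z₂ * (r ^ 3 - 3 * r - 1) * hr
  generalize hs1 : w * (3 - r ^ 2) = i₁ at *
  generalize hs2 : w * (1 - r) = i₂ at *
  generalize hs3 : w * (3 - (r ^ 2 - 2) ^ 2) = i₃ at *
  let P : F → Prop := fun x => ∃ A B C D, R A ∧ R B ∧ R C ∧ R D ∧
    x = A + B * z₁ + C * z₂ + D * z₃
  have hP : ∀ x : F, P x := by
    intro x
    have hi1 : IsIntegral ℚ z₁ := by
      refine ⟨Polynomial.X ^ 6 - 3 * Polynomial.X ^ 2 + 1, ?_, ?_⟩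
      · monicity!
      · simp only [Polynomial.eval₂_add, Polynomial.eval₂_sub, Polynomial.eval₂_mul,
          Polynomial.eval₂_pow, Polynomial.eval₂_X, Polynomial.eval₂_one, Polynomial.eval₂_ofNat]
        rw [← hr, ← h1]; ring
    have hir : IsIntegral ℚ r := h1 ▸ hi1.pow 2
    have hi_two : IsIntegral ℚ (2 : F) := by simpa using isIntegral_algebraMap (R := ℚ) (A := F) (x := 2)
    have hi2 : IsIntegral ℚ z₂ := by
      apply IsIntegral.of_pow (n := 2) (by norm_num)
      rw [h2]; exact (hi_two.sub hir).sub (hir.pow 2)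
    have hi3 : IsIntegral ℚ z₃ := by
      apply IsIntegral.of_pow (n := 2) (by norm_num)
      rw [h3]; exact (hir.pow 2).sub hi_two
    have hx : x ∈ Algebra.adjoin ℚ ({z₁, z₂, z₃} : Set F) := by
      rw [← IntermediateField.adjoin_toSubalgebra_of_isAlgebraic, htop]
      · trivial
      · rintro y (rfl | rfl | rfl)
        exacts [hi1.isAlgebraic, hi2.isAlgebraic, hi3.isAlgebraic]
    induction hx using Algebra.adjoin_induction with
    | mem x hx =>
      rcases hx with rfl | rfl | rfl
      · exact ⟨0, 1, 0, 0, R0, R1, R0, R0, by ring⟩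
      · exact ⟨0, 0, 1, 0, R0, R0, R1, R0, by ring⟩
      · exact ⟨0, 0, 0, 1, R0, R0, R0, R1, by ring⟩
    | algebraMap t => exact ⟨_, 0, 0, 0, RK _ (K.algebraMap_mem t), R0, R0, R0, by ring⟩
    | add x y _ _ hx hy =>
      obtain ⟨A, B, C, D, hA, hB, hC, hD, rfl⟩ := hx
      obtain ⟨A', B', C', D', hA', hB', hC', hD', rfl⟩ := hy
      exact ⟨_, _, _, _, Radd _ _ hA hA', Radd _ _ hB hB', Radd _ _ hC hC', Radd _ _ hD hD', by ring⟩
    | mul x y _ _ hx hy =>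
      obtain ⟨A, B, C, D, hA, hB, hC, hD, rfl⟩ := hx
      obtain ⟨A', B', C', D', hA', hB', hC', hD', rfl⟩ := hy
      refine ⟨A * A' + (B * B' * r + (C * C' * (2 - r - r ^ 2) + D * D' * (r ^ 2 - 2))),
        A * B' + (B * A' + (C * D' + D * C') * i₁),
        A * C' + (C * A' + (B * D' + D * B') * i₂),
        A * D' + (D * A' + (B * C' + C * B') * i₃), ?_, ?_, ?_, ?_, ?_⟩
      · exact Radd _ _ (Rmul _ _ hA hA') (Radd _ _ (Rmul _ _ (Rmul _ _ hB hB') Rr)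
          (Radd _ _ (Rmul _ _ (Rmul _ _ hC hC') Rs2) (Rmul _ _ (Rmul _ _ hD hD') Rs3)))
      · exact Radd _ _ (Rmul _ _ hA hB') (Radd _ _ (Rmul _ _ hB hA') (Rmul _ _
          (Radd _ _ (Rmul _ _ hC hD') (Rmul _ _ hD hC')) Ri1))
      · exact Radd _ _ (Rmul _ _ hA hC') (Radd _ _ (Rmul _ _ hC hA') (Rmul _ _
          (Radd _ _ (Rmul _ _ hB hD') (Rmul _ _ hD hB')) Ri2))
      · exact Radd _ _ (Rmul _ _ hA hD') (Radd _ _ (Rmul _ _ hD hA') (Rmul _ _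
          (Radd _ _ (Rmul _ _ hB hC') (Rmul _ _ hC hB')) Ri3))
      · linear_combination B * B' * h1 + C * C' * h2 + D * D' * h3 + (C * D' + D * C') * e23 +
          (B * D' + D * B') * e13 + (B * C' + C * B') * e12
  intro x hx
  rw [IntermediateField.mem_fixedField_iff] at hx
  have xg : g x = x := hx g (Subgroup.subset_closure (by simp))
  have xp : p x = x := hx p (Subgroup.subset_closure (by simp))
  have xq : q x = x := hx q (Subgroup.subset_closure (by simp))
  have c2 : CharZero F := algebraRat.charZero F
  have hpr : p r = r := by rw [← h1, map_pow, hp₁]; ring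
  have hqr : q r = r := by rw [← h1, map_pow, hq₁]
  have hgr : g r = 2 - r - r ^ 2 := by rw [← h2, ← h1, map_pow, hg₁]
  have hpR : ∀ y, R y → p y = y := by
    rintro _ ⟨a, ha, b, hb, c, hc, rfl⟩
    simp [hfix p (by simp) _ ha, hfix p (by simp) _ hb, hfix p (by simp) _ hc, hpr]
  have hqR : ∀ y, R y → q y = y := by
    rintro _ ⟨a, ha, b, hb, c, hc, rfl⟩
    simp [hfix q (by simp) _ ha, hfix q (by simp) _ hb, hfix q (by simp) _ hc, hqr]
  obtain ⟨A, B, C, D, hA, hB, hC, hD, hxe⟩ := hP x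
  have x1 : x = A - B * z₁ - C * z₂ + D * z₃ := by
    rw [hxe] at xp
    simp only [map_add, map_mul, hpR _ hA, hpR _ hB, hpR _ hC, hpR _ hD, hp₁, hp₂, hp₃] at xp
    rw [hxe, ← xp]; ring
  have x2 : x = A + B * z₁ - C * z₂ - D * z₃ := by
    rw [hxe] at xq
    simp only [map_add, map_mul, hqR _ hA, hqR _ hB, hqR _ hC, hqR _ hD, hq₁, hq₂, hq₃] at xq
    rw [hxe, ← xq]; ring
  have x3 : x = A - B * z₁ + C * z₂ - D * z₃ := by
    have := congrArg p x2
    simp only [map_add, map_sub, map_mul, hpR _ hA, hpR _ hB, hpR _ hC, hpR _ hD, hp₁, hp₂, hp₃, xp] at this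
    rw [this]; ring
  have xA : x = A := by
    have : 4 * x = 4 * A := by linear_combination hxe + x1 + x2 + x3
    exact mul_left_cancel₀ (by norm_num) this
  obtain ⟨a, ha, b, hb, c, hc, hAe⟩ := hA
  rw [← xA] at hAe
  have ga := hfix g (by simp) _ ha
  have gb := hfix g (by simp) _ hb
  have gc := hfix g (by simp) _ hc
  have y1 : x = a + b * (2 - r - r ^ 2) + c * (2 - r - r ^ 2) ^ 2 := by
    have := congrArg g hAe
    simpa only [map_add, map_mul, map_pow, ga, gb, gc, hgr, xg] using this
  have hgr2 : g (2 - r - r ^ 2) = r ^ 2 - 2 := by rw [← h2, ← h3, map_pow, hg₂]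
  have y2 : x = a + b * (r ^ 2 - 2) + c * (r ^ 2 - 2) ^ 2 := by
    have := congrArg g y1
    simpa only [map_add, map_mul, map_pow, ga, gb, gc, hgr2, xg] using this
  have : x = a + 2 * c := by
    have : 3 * x = 3 * (a + 2 * c) := by
      linear_combination hAe + y1 + y2 + c * (2 * r + 2) * hr
    exact mul_left_cancel₀ (by norm_num) this
  rw [this]
  have hK2 : (2 : F) ∈ K := by simpa using K.algebraMap_mem 2
  exact K.add_mem ha (K.mul_mem hK2 hc)

/-- For `g, h₁, h₂, h₃ ∈ Gal(F/ℚ)` acting on the square roots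
`z₁, z₂, z₃` as specified, the fixed field of the subgroup generated by `g, h₁h₂, h₂h₃`
is `ℚ(i)`, a quadratic extension of `ℚ`. -/
theorem stmt13 (ρ ρ₂ ρ₃ : ℝ) (hρroot : ρ ^ 3 - 3 * ρ + 1 = 0) (hρneg : ρ < 0)
    (hρ₂ : ρ₂ = 1 / (1 - ρ)) (hρ₃ : ρ₃ = 1 - 1 / ρ)
    (z₁ z₂ z₃ : ℂ) (hz₁ : z₁ ^ 2 = (ρ : ℂ)) (hz₂ : z₂ ^ 2 = (ρ₂ : ℂ)) (hz₃ : z₃ ^ 2 = (ρ₃ : ℂ))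
    (F : IntermediateField ℚ ℂ) (hF : F = IntermediateField.adjoin ℚ {z₁, z₂, z₃})
    (hm₁ : z₁ ∈ F) (hm₂ : z₂ ∈ F) (hm₃ : z₃ ∈ F)
    (g h₁ h₂ h₃ : F ≃ₐ[ℚ] F)
    (hg₁ : (g ⟨z₁, hm₁⟩ : ℂ) = z₂) (hg₂ : (g ⟨z₂, hm₂⟩ : ℂ) = z₃)
    (hg₃ : (g ⟨z₃, hm₃⟩ : ℂ) = z₁)
    (hh₁₁ : (h₁ ⟨z₁, hm₁⟩ : ℂ) = -z₁) (hh₁₂ : (h₁ ⟨z₂, hm₂⟩ : ℂ) = z₂)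
    (hh₁₃ : (h₁ ⟨z₃, hm₃⟩ : ℂ) = z₃)
    (hh₂₁ : (h₂ ⟨z₁, hm₁⟩ : ℂ) = z₁) (hh₂₂ : (h₂ ⟨z₂, hm₂⟩ : ℂ) = -z₂)
    (hh₂₃ : (h₂ ⟨z₃, hm₃⟩ : ℂ) = z₃)
    (hh₃₁ : (h₃ ⟨z₁, hm₁⟩ : ℂ) = z₁) (hh₃₂ : (h₃ ⟨z₂, hm₂⟩ : ℂ) = z₂)
    (hh₃₃ : (h₃ ⟨z₃, hm₃⟩ : ℂ) = -z₃) :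
    (IntermediateField.fixedField (Subgroup.closure {g, h₁ * h₂, h₂ * h₃})).map F.val
        = IntermediateField.adjoin ℚ {Complex.I} ∧
    Module.finrank ℚ (IntermediateField.adjoin ℚ {Complex.I}) = 2 := by
  have hρ0 : ρ ≠ 0 := hρneg.ne
  have hρ1 : 1 - ρ ≠ 0 := by linarith
  have r2 : ρ₂ = 2 - ρ - ρ ^ 2 := by
    rw [hρ₂]; field_simp; linear_combination -hρroot
  have r3 : ρ₃ = ρ ^ 2 - 2 := by
    rw [hρ₃]; field_simp; linear_combination -hρroot
  have hrC : (ρ : ℂ) ^ 3 - 3 * ρ + 1 = 0 := by exact_mod_cast hρroot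
  have h2C : z₂ ^ 2 = 2 - (ρ : ℂ) - (ρ : ℂ) ^ 2 := by rw [hz₂, r2]; push_cast; ring
  have h3C : z₃ ^ 2 = (ρ : ℂ) ^ 2 - 2 := by rw [hz₃, r3]; push_cast; ring
  have hwsq : (z₁ * z₂ * z₃) ^ 2 = Complex.I ^ 2 := by
    rw [mul_pow, mul_pow, hz₁, h2C, h3C, Complex.I_sq]
    linear_combination (-(ρ : ℂ) ^ 2 - ρ + 1) * hrC
  constructor
  · refine (congrArg (IntermediateField.map F.val) (core_aux (hAlg := F.algebra') (⟨z₁, hm₁⟩ ^ 2) ⟨z₁, hm₁⟩ ⟨z₂, hm₂⟩ ⟨z₃, hm₃⟩ ?_ rfl ?_ ?_ ?_ g (h₁ * h₂) (h₂ * h₃)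
      (Subtype.ext hg₁) (Subtype.ext hg₂) (Subtype.ext hg₃) ?_ ?_ ?_ ?_ ?_ ?_)).trans ?_
    · apply Subtype.ext
      change (z₁ ^ 2) ^ 3 - 3 * z₁ ^ 2 + 1 = 0
      rw [hz₁]; exact hrC
    · apply Subtype.ext
      change z₂ ^ 2 = 2 - z₁ ^ 2 - (z₁ ^ 2) ^ 2
      rw [hz₁]; exact h2C
    · apply Subtype.ext
      change z₃ ^ 2 = (z₁ ^ 2) ^ 2 - 2
      rw [hz₁]; exact h3C
    · apply IntermediateField.map_injective F.val
      rw [IntermediateField.adjoin_map, ← AlgHom.fieldRange_eq_map, IntermediateField.fieldRange_val,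
        Set.image_insert_eq, Set.image_insert_eq, Set.image_singleton]
      exact hF.symm
    · change h₁ (h₂ ⟨z₁, hm₁⟩) = -⟨z₁, hm₁⟩
      rw [show h₂ ⟨z₁, hm₁⟩ = ⟨z₁, hm₁⟩ from Subtype.ext hh₂₁]; exact Subtype.ext hh₁₁
    · change h₁ (h₂ ⟨z₂, hm₂⟩) = -⟨z₂, hm₂⟩
      rw [show h₂ ⟨z₂, hm₂⟩ = -⟨z₂, hm₂⟩ from Subtype.ext hh₂₂, map_neg]
      rw [show h₁ ⟨z₂, hm₂⟩ = ⟨z₂, hm₂⟩ from Subtype.ext hh₁₂]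
    · change h₁ (h₂ ⟨z₃, hm₃⟩) = ⟨z₃, hm₃⟩
      rw [show h₂ ⟨z₃, hm₃⟩ = ⟨z₃, hm₃⟩ from Subtype.ext hh₂₃]; exact Subtype.ext hh₁₃
    · change h₂ (h₃ ⟨z₁, hm₁⟩) = ⟨z₁, hm₁⟩
      rw [show h₃ ⟨z₁, hm₁⟩ = ⟨z₁, hm₁⟩ from Subtype.ext hh₃₁]; exact Subtype.ext hh₂₁
    · change h₂ (h₃ ⟨z₂, hm₂⟩) = -⟨z₂, hm₂⟩
      rw [show h₃ ⟨z₂, hm₂⟩ = ⟨z₂, hm₂⟩ from Subtype.ext hh₃₂]; exact Subtype.ext hh₂₂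
    · change h₂ (h₃ ⟨z₃, hm₃⟩) = -⟨z₃, hm₃⟩
      rw [show h₃ ⟨z₃, hm₃⟩ = -⟨z₃, hm₃⟩ from Subtype.ext hh₃₃, map_neg]
      rw [show h₂ ⟨z₃, hm₃⟩ = ⟨z₃, hm₃⟩ from Subtype.ext hh₂₃]
    · rw [IntermediateField.adjoin_map, Set.image_singleton]
      have hv : F.val (⟨z₁, hm₁⟩ * ⟨z₂, hm₂⟩ * ⟨z₃, hm₃⟩) = z₁ * z₂ * z₃ := rfl
      rw [hv]
      rcases sq_eq_sq_iff_eq_or_eq_neg.1 hwsq with h | h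
      · rw [h]
      · rw [h]
        apply le_antisymm <;> rw [IntermediateField.adjoin_simple_le_iff]
        · exact neg_mem (IntermediateField.mem_adjoin_simple_self _ _)
        · exact neg_mem_iff.1 (IntermediateField.mem_adjoin_simple_self _ _)
  · have hi : IsIntegral ℚ Complex.I := by
      refine ⟨Polynomial.X ^ 2 + 1, by monicity!, by simp⟩
    rw [IntermediateField.adjoin.finrank hi]
    have : minpoly ℚ Complex.I = Polynomial.X ^ 2 + 1 := by
      symm
      apply minpoly.eq_of_irreducible_of_monic
      · have hd : (Polynomial.X ^ 2 + 1 : Polynomial ℚ).natDegree = 2 := by compute_degree!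
        rw [Polynomial.irreducible_iff_roots_eq_zero_of_degree_le_three (by rw [hd]) (by rw [hd]; norm_num)]
        apply Multiset.eq_zero_of_forall_notMem
        intro t ht
        have := Polynomial.isRoot_of_mem_roots ht
        simp at this
        nlinarith [sq_nonneg t]
      · simp
      · monicity!
    rw [this]; compute_degree!
end

section
/- Suppose h₁, h₂, h₃ ∈ Gal(F/ℚ) satisfy: for each i, hᵢ(zᵢ) = −zᵢ while hᵢ(z_j) = z_j for j ≠ i. Then the fixed field of the subgroup of Gal(F/ℚ) generated by h₁h₂ and h₂h₃ is ℚ(i, ρ) = ℚ(√−1, ρ), an extension of ℚ of degree 6. -/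
open IntermediateField Polynomial in
theorem aux_deg (ρ : ℝ) (hρroot : ρ ^ 3 - 3 * ρ + 1 = 0) :
    Module.finrank ℚ (IntermediateField.adjoin ℚ {Complex.I, (ρ : ℂ)}) = 6 := by
  have hI : Module.finrank ℚ ℚ⟮Complex.I⟯ = 2 := by
    have hm : (X ^ 2 + 1 : ℚ[X]).Monic := by monicity!
    have hd : (X ^ 2 + 1 : ℚ[X]).natDegree = 2 := by compute_degree!
    have he : aeval Complex.I (X ^ 2 + 1 : ℚ[X]) = 0 := by simp
    have hirr : Irreducible (X ^ 2 + 1 : ℚ[X]) := by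
      rw [hm.irreducible_iff_roots_eq_zero_of_degree_le_three (by rw [hd]) (by rw [hd]; norm_num)]
      rw [Multiset.eq_zero_iff_forall_notMem]
      intro r hr
      have := (mem_roots'.1 hr).2
      simp at this
      nlinarith
    rw [adjoin.finrank ⟨_, hm, he⟩, ← minpoly.eq_of_irreducible_of_monic hirr he hm, hd]
  have hR : Module.finrank ℚ ℚ⟮(ρ : ℂ)⟯ = 3 := by
    have hm : (X ^ 3 - 3 * X + 1 : ℚ[X]).Monic := by monicity!
    have hmZ : (X ^ 3 - 3 * X + 1 : ℤ[X]).Monic := by monicity!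
    have hd : (X ^ 3 - 3 * X + 1 : ℚ[X]).natDegree = 3 := by compute_degree!
    have he : aeval (ρ : ℂ) (X ^ 3 - 3 * X + 1 : ℚ[X]) = 0 := by
      have h3 : aeval (ρ : ℂ) (3 : ℚ[X]) = 3 := map_ofNat _ 3
      simp [h3]
      exact_mod_cast hρroot
    have hirr : Irreducible (X ^ 3 - 3 * X + 1 : ℚ[X]) := by
      rw [hm.irreducible_iff_roots_eq_zero_of_degree_le_three (by rw [hd]; norm_num) (by rw [hd])]
      rw [Multiset.eq_zero_iff_forall_notMem]
      intro r hr
      have := (mem_roots'.1 hr).2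
      simp at this
      obtain ⟨n, hn⟩ := isInteger_of_is_root_of_monic (K := ℚ) hmZ (r := r) (by
        have h3 : aeval r (3 : ℤ[X]) = 3 := map_ofNat _ 3
        simpa [h3] using this)
      have hn : (n : ℚ) = r := by rw [← hn]; rfl
      subst hn
      have h2 : n ^ 3 - 3 * n + 1 = 0 := by
        have h4 : ((n ^ 3 - 3 * n + 1 : ℤ) : ℚ) = 0 := by push_cast; exact this
        exact_mod_cast h4
      have h3 : n ∣ 1 := ⟨3 - n ^ 2, by linarith⟩
      rcases Int.isUnit_iff.1 (isUnit_of_dvd_one h3) with rfl | rfl <;> norm_num at h2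
    rw [adjoin.finrank ⟨_, hm, he⟩, ← minpoly.eq_of_irreducible_of_monic hirr he hm, hd]
  have hLD : (ℚ⟮Complex.I⟯).LinearDisjoint ℚ⟮(ρ : ℂ)⟯ :=
    LinearDisjoint.of_finrank_coprime (by rw [hI, hR]; norm_num)
  have := hLD.finrank_sup
  rw [hI, hR, ← adjoin_union, Set.singleton_union] at this
  exact this

theorem aux_rep (K : IntermediateField ℚ ℂ) (z₁ z₂ z₃ : ℂ) (hz₁ : z₁ ^ 2 ∈ K) (hz₂ : z₂ ^ 2 ∈ K)
    (hz₃ : ∃ d ∈ K, z₃ = d * (z₁ * z₂)) (hK : ∀ x ∈ K, IsAlgebraic ℚ x)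
    (x : ℂ) (hx : x ∈ IntermediateField.adjoin ℚ {z₁, z₂, z₃}) :
    ∃ a ∈ K, ∃ b ∈ K, ∃ c ∈ K, ∃ d ∈ K, x = a + b * z₁ + c * z₂ + d * (z₁ * z₂) := by
  have a1 : IsAlgebraic ℚ z₁ := (hK _ hz₁).of_pow (by norm_num)
  have a2 : IsAlgebraic ℚ z₂ := (hK _ hz₂).of_pow (by norm_num)
  obtain ⟨e, he, rfl⟩ := hz₃
  have a3 : IsAlgebraic ℚ (e * (z₁ * z₂)) := (hK _ he).mul (a1.mul a2)
  have hx' : x ∈ Algebra.adjoin ℚ {z₁, z₂, e * (z₁ * z₂)} := by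
    rw [← IntermediateField.adjoin_toSubalgebra_of_isAlgebraic]
    · exact hx
    · rintro y (rfl | rfl | rfl) <;> assumption
  clear hx a3
  induction hx' using Algebra.adjoin_induction with
  | mem y hy =>
    rcases hy with rfl | rfl | rfl
    · exact ⟨0, zero_mem K, 1, one_mem K, 0, zero_mem K, 0, zero_mem K, by ring⟩
    · exact ⟨0, zero_mem K, 0, zero_mem K, 1, one_mem K, 0, zero_mem K, by ring⟩
    · exact ⟨0, zero_mem K, 0, zero_mem K, 0, zero_mem K, e, he, by ring⟩
  | algebraMap r =>
    exact ⟨_, K.algebraMap_mem r, 0, zero_mem K, 0, zero_mem K, 0, zero_mem K, by ring⟩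
  | add x y hx hy ihx ihy =>
    obtain ⟨a, ha, b, hb, c, hc, d, hd, rfl⟩ := ihx
    obtain ⟨a', ha', b', hb', c', hc', d', hd', rfl⟩ := ihy
    exact ⟨_, add_mem ha ha', _, add_mem hb hb', _, add_mem hc hc', _, add_mem hd hd', by ring⟩
  | mul x y hx hy ihx ihy =>
    obtain ⟨a, ha, b, hb, c, hc, d, hd, rfl⟩ := ihx
    obtain ⟨a', ha', b', hb', c', hc', d', hd', rfl⟩ := ihy
    refine ⟨a * a' + b * b' * z₁ ^ 2 + c * c' * z₂ ^ 2 + d * d' * (z₁ ^ 2 * z₂ ^ 2), ?_,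
      a * b' + b * a' + (c * d' + d * c') * z₂ ^ 2, ?_,
      a * c' + c * a' + (b * d' + d * b') * z₁ ^ 2, ?_,
      a * d' + d * a' + b * c' + c * b', ?_, by ring⟩ <;>
    apply_rules [add_mem, mul_mem]


/-- For `h₁, h₂, h₃ ∈ Gal(F/ℚ)` acting on the square roots
`z₁, z₂, z₃` as specified, the fixed field of the subgroup generated by `h₁h₂, h₂h₃`
is `ℚ(i, ρ)`, an extension of `ℚ` of degree `6`. -/
theorem stmt14 (ρ ρ₂ ρ₃ : ℝ) (hρroot : ρ ^ 3 - 3 * ρ + 1 = 0) (hρneg : ρ < 0)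
    (hρ₂ : ρ₂ = 1 / (1 - ρ)) (hρ₃ : ρ₃ = 1 - 1 / ρ)
    (z₁ z₂ z₃ : ℂ) (hz₁ : z₁ ^ 2 = (ρ : ℂ)) (hz₂ : z₂ ^ 2 = (ρ₂ : ℂ)) (hz₃ : z₃ ^ 2 = (ρ₃ : ℂ))
    (F : IntermediateField ℚ ℂ) (hF : F = IntermediateField.adjoin ℚ {z₁, z₂, z₃})
    (hm₁ : z₁ ∈ F) (hm₂ : z₂ ∈ F) (hm₃ : z₃ ∈ F)
    (h₁ h₂ h₃ : F ≃ₐ[ℚ] F)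
    (hh₁₁ : (h₁ ⟨z₁, hm₁⟩ : ℂ) = -z₁) (hh₁₂ : (h₁ ⟨z₂, hm₂⟩ : ℂ) = z₂)
    (hh₁₃ : (h₁ ⟨z₃, hm₃⟩ : ℂ) = z₃)
    (hh₂₁ : (h₂ ⟨z₁, hm₁⟩ : ℂ) = z₁) (hh₂₂ : (h₂ ⟨z₂, hm₂⟩ : ℂ) = -z₂)
    (hh₂₃ : (h₂ ⟨z₃, hm₃⟩ : ℂ) = z₃)
    (hh₃₁ : (h₃ ⟨z₁, hm₁⟩ : ℂ) = z₁) (hh₃₂ : (h₃ ⟨z₂, hm₂⟩ : ℂ) = z₂)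
    (hh₃₃ : (h₃ ⟨z₃, hm₃⟩ : ℂ) = -z₃) :
    (IntermediateField.fixedField (Subgroup.closure {h₁ * h₂, h₂ * h₃})).map F.val
        = IntermediateField.adjoin ℚ {Complex.I, (ρ : ℂ)} ∧
    Module.finrank ℚ (IntermediateField.adjoin ℚ {Complex.I, (ρ : ℂ)}) = 6 := by
  refine ⟨?_, aux_deg ρ hρroot⟩
  set K := IntermediateField.adjoin ℚ {Complex.I, (ρ : ℂ)} with hKdef
  have hIK : Complex.I ∈ K := IntermediateField.subset_adjoin _ _ (by simp)
  have hρK : (ρ : ℂ) ∈ K := IntermediateField.subset_adjoin _ _ (by simp)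
  have hρ0 : (ρ : ℂ) ≠ 0 := by exact_mod_cast hρneg.ne
  have hρ1 : (1 - ρ : ℂ) ≠ 0 := by
    have : (1 - ρ : ℝ) ≠ 0 := by linarith
    exact_mod_cast this
  have hρ₂' : (ρ₂ : ℂ) = 1 / (1 - ρ) := by rw [hρ₂]; push_cast; rfl
  have hρ₃' : (ρ₃ : ℂ) = 1 - 1 / ρ := by rw [hρ₃]; push_cast; rfl
  have hρ₂K : (ρ₂ : ℂ) ∈ K := by
    rw [hρ₂']; exact div_mem (one_mem K) (sub_mem (one_mem K) hρK)
  have hρ₂0 : (ρ₂ : ℂ) ≠ 0 := by rw [hρ₂']; exact one_div_ne_zero hρ1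
  have hfd : FiniteDimensional ℚ K :=
    Module.finite_of_finrank_pos (by rw [aux_deg ρ hρroot]; norm_num)
  have hKalg : ∀ x ∈ K, IsAlgebraic ℚ x := fun x hx => by
    have := (Algebra.IsAlgebraic.isAlgebraic (R := ℚ) (⟨x, hx⟩ : K)).algebraMap (A := ℂ)
    exact this
  have hprod : (z₁ * z₂ * z₃) ^ 2 = -1 := by
    rw [mul_pow, mul_pow, hz₁, hz₂, hz₃, hρ₂', hρ₃']
    field_simp
    ring
  have hprod' : z₁ * z₂ * z₃ = Complex.I ∨ z₁ * z₂ * z₃ = -Complex.I := by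
    rw [← Complex.I_sq] at hprod
    exact sq_eq_sq_iff_eq_or_eq_neg.1 hprod
  have hpK : z₁ * z₂ * z₃ ∈ K := by
    rcases hprod' with h | h <;> rw [h]
    · exact hIK
    · exact neg_mem hIK
  have hz₃K : ∃ d ∈ K, z₃ = d * (z₁ * z₂) := by
    refine ⟨(z₁ * z₂ * z₃) / (ρ * ρ₂), div_mem hpK (mul_mem hρK hρ₂K), ?_⟩
    rw [← hz₁, ← hz₂] at *
    have : z₁ ≠ 0 := by rintro rfl; simp at hρ0
    have : z₂ ≠ 0 := by rintro rfl; simp at hρ₂0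
    field_simp
  set H := Subgroup.closure {h₁ * h₂, h₂ * h₃} with hH
  set Z₁ : F := ⟨z₁, hm₁⟩ with hZ₁
  set Z₂ : F := ⟨z₂, hm₂⟩ with hZ₂
  set Z₃ : F := ⟨z₃, hm₃⟩ with hZ₃
  have e11 : h₁ Z₁ = -Z₁ := Subtype.ext hh₁₁
  have e12 : h₁ Z₂ = Z₂ := Subtype.ext hh₁₂
  have e13 : h₁ Z₃ = Z₃ := Subtype.ext hh₁₃
  have e21 : h₂ Z₁ = Z₁ := Subtype.ext hh₂₁
  have e22 : h₂ Z₂ = -Z₂ := Subtype.ext hh₂₂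
  have e23 : h₂ Z₃ = Z₃ := Subtype.ext hh₂₃
  have e31 : h₃ Z₁ = Z₁ := Subtype.ext hh₃₁
  have e32 : h₃ Z₂ = Z₂ := Subtype.ext hh₃₂
  have e33 : h₃ Z₃ = -Z₃ := Subtype.ext hh₃₃
  have hfix : ∀ x : F, x ∈ IntermediateField.fixedField H ↔
      ((h₁ * h₂) x = x ∧ (h₂ * h₃) x = x) := by
    intro x
    rw [IntermediateField.mem_fixedField_iff]
    constructor
    · intro h
      exact ⟨h _ (Subgroup.subset_closure (by simp)), h _ (Subgroup.subset_closure (by simp))⟩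
    · rintro ⟨ha, hb⟩ f hf
      have : H ≤ MulAction.stabilizer (F ≃ₐ[ℚ] F) x := by
        rw [hH, Subgroup.closure_le]
        rintro g (rfl | rfl)
        · exact ha
        · exact hb
      exact this hf
  have hKle : K ≤ (IntermediateField.fixedField H).map F.val := by
    have hp : z₁ * z₂ * z₃ ∈ (IntermediateField.fixedField H).map F.val := by
      refine ⟨Z₁ * Z₂ * Z₃, (hfix _).2 ⟨?_, ?_⟩, rfl⟩ <;>
      simp [AlgEquiv.mul_apply, e11, e12, e13, e21, e22, e23, e31, e32, e33]
    rw [hKdef, IntermediateField.adjoin_le_iff]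
    rintro y (rfl | rfl)
    · rcases hprod' with h | h
      · rw [← h]; exact hp
      · rw [← neg_neg Complex.I, ← h]; exact neg_mem hp
    · refine ⟨Z₁ ^ 2, (hfix _).2 ⟨?_, ?_⟩, hz₁⟩ <;>
      simp [AlgEquiv.mul_apply, e11, e21, e31]
  apply le_antisymm _ hKle
  rintro _ ⟨x, hx, rfl⟩
  obtain ⟨a, ha, b, hb, c, hc, d, hd, h⟩ := aux_rep K z₁ z₂ z₃ (hz₁ ▸ hρK) (hz₂ ▸ hρ₂K) hz₃K hKalg
    x (hF ▸ x.2)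
  obtain ⟨A, hA, rfl⟩ := hKle ha
  obtain ⟨B, hB, rfl⟩ := hKle hb
  obtain ⟨C, hC, rfl⟩ := hKle hc
  obtain ⟨D, hD, rfl⟩ := hKle hd
  have hX : x = A + B * Z₁ + C * Z₂ + D * (Z₁ * Z₂) := Subtype.ext h
  obtain ⟨hA1, hA2⟩ := (hfix A).1 hA
  obtain ⟨hB1, hB2⟩ := (hfix B).1 hB
  obtain ⟨hC1, hC2⟩ := (hfix C).1 hC
  obtain ⟨hD1, hD2⟩ := (hfix D).1 hD
  obtain ⟨hx1, hx2⟩ := (hfix x).1 hx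
  have s1 : (h₁ * h₂) Z₁ = -Z₁ := by simp [AlgEquiv.mul_apply, e11, e21]
  have s2 : (h₁ * h₂) Z₂ = -Z₂ := by simp [AlgEquiv.mul_apply, e12, e22]
  have t1 : (h₂ * h₃) Z₁ = Z₁ := by simp [AlgEquiv.mul_apply, e21, e31]
  have t2 : (h₂ * h₃) Z₂ = -Z₂ := by simp [AlgEquiv.mul_apply, e22, e32]
  have y1 : x = A - B * Z₁ - C * Z₂ + D * (Z₁ * Z₂) := by
    rw [← hx1, hX]
    simp only [map_add, map_mul, hA1, hB1, hC1, hD1, s1, s2]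
    ring
  have y2 : x = A + B * Z₁ - C * Z₂ - D * (Z₁ * Z₂) := by
    rw [← hx2, hX]
    simp only [map_add, map_mul, hA2, hB2, hC2, hD2, t1, t2]
    ring
  have y3 : x = A - B * Z₁ + C * Z₂ - D * (Z₁ * Z₂) := by
    have : x = (h₂ * h₃) (A - B * Z₁ - C * Z₂ + D * (Z₁ * Z₂)) := by rw [← y1, hx2]
    rw [this]
    simp only [map_add, map_sub, map_mul, hA2, hB2, hC2, hD2, t1, t2]
    ring
  have : x = A := by linear_combination (hX + y1 + y2 + y3) / 4
  rw [this]
  exact ha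
end

section
/- Suppose g, h₁, h₂, h₃ ∈ Gal(F'/ℚ) satisfy: g(w₁) = w₂, g(w₂) = w₃, g(w₃) = w₁ and g(i) = i; and for each i ∈ {1,2,3}, hᵢ(wᵢ) = −wᵢ, hᵢ(w_j) = w_j for j ≠ i, and hᵢ(i) = i. Then the fixed field of the subgroup of Gal(F'/ℚ) generated by g, h₁h₂ and h₂h₃ equals ℚ(i, w₁w₂w₃) = ℚ(√−1, √(1 + 3a − a³)), an extension of ℚ of degree 4 whose Galois group is isomorphic to ℤ/2ℤ × ℤ/2ℤ. -/
open IntermediateField in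
lemma aux_sup (E : IntermediateField ℚ ℂ) [FiniteDimensional ℚ E] (x : ℂ) (hx : x ^ 2 ∈ E) :
    FiniteDimensional ℚ (E ⊔ ℚ⟮x⟯ : IntermediateField ℚ ℂ) ∧
    Module.finrank ℚ (E ⊔ ℚ⟮x⟯ : IntermediateField ℚ ℂ) ≤ 2 * Module.finrank ℚ E := by
  have hq : Polynomial.aeval x (Polynomial.X ^ 2 - Polynomial.C (⟨x ^ 2, hx⟩ : E)) = 0 := by
    simp [IntermediateField.algebraMap_apply]
  have hm : (Polynomial.X ^ 2 - Polynomial.C (⟨x ^ 2, hx⟩ : E)).Monic :=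
    Polynomial.monic_X_pow_sub_C _ (by norm_num)
  have hint : IsIntegral E x := ⟨_, hm, hq⟩
  have hdeg : Module.finrank E E⟮x⟯ ≤ 2 := by
    rw [IntermediateField.adjoin.finrank hint]
    have := Polynomial.natDegree_le_of_dvd (minpoly.dvd E x hq) hm.ne_zero
    rwa [Polynomial.natDegree_X_pow_sub_C] at this
  have : FiniteDimensional E E⟮x⟯ := IntermediateField.adjoin.finiteDimensional hint
  have hr : E⟮x⟯.restrictScalars ℚ = E ⊔ ℚ⟮x⟯ := restrictScalars_adjoin_eq_sup ..
  rw [← hr]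
  have : FiniteDimensional ℚ E⟮x⟯ := FiniteDimensional.trans ℚ E _
  refine ⟨this, ?_⟩
  have h := Module.finrank_mul_finrank ℚ E E⟮x⟯
  change Module.finrank ℚ E⟮x⟯ ≤ _
  nlinarith

lemma aux_card {G : Type*} [Group G] [Finite G] (H : Subgroup G) (x y : G) (hx : x ∈ H) (hy : y ∈ H)
    (hxx : x * x = 1) (hyy : y * y = 1) (hc : x * y = y * x) (hx1 : x ≠ 1) (hy1 : y ≠ 1)
    (hxy : x ≠ y) : 4 ∣ Nat.card H := by
  have e1 : ∀ z, x * (x * z) = z := fun z => by rw [← mul_assoc, hxx, one_mul]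
  have e2 : ∀ z, y * (y * z) = z := fun z => by rw [← mul_assoc, hyy, one_mul]
  have e3 : ∀ z, y * (x * z) = x * (y * z) := fun z => by rw [← mul_assoc, ← hc, mul_assoc]
  let V : Subgroup G :=
    { carrier := {1, x, y, x * y}
      one_mem' := by simp
      mul_mem' := by
        rintro a b (rfl | rfl | rfl | rfl) (rfl | rfl | rfl | rfl) <;>
          simp [mul_assoc, hxx, hyy, e1, e3, ← hc]
      inv_mem' := by
        have i1 : x⁻¹ = x := inv_eq_of_mul_eq_one_left hxx
        have i2 : y⁻¹ = y := inv_eq_of_mul_eq_one_left hyy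
        rintro a (rfl | rfl | rfl | rfl) <;> simp [i1, i2, ← hc] }
  have hV : V ≤ H := by
    rintro a (rfl | rfl | rfl | rfl)
    exacts [H.one_mem, hx, hy, H.mul_mem hx hy]
  have hcard : Nat.card V = 4 := by
    change Nat.card (({1, x, y, x * y} : Set G)) = 4
    rw [Nat.card_coe_set_eq]
    have hxy1 : 1 ≠ x * y := fun h => hxy (by
      have := congrArg (x * ·) h
      simpa [e1] using this)
    rw [Set.ncard_insert_of_notMem, Set.ncard_insert_of_notMem, Set.ncard_insert_of_notMem,
      Set.ncard_singleton]
    · simpa using hx1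
    · simpa using ⟨hxy, hy1⟩
    · simpa using ⟨hx1.symm, hy1.symm, hxy1⟩
  rw [← hcard]
  exact Subgroup.card_dvd_of_le hV

open IntermediateField in
lemma aux_quad (x : ℂ) (d : ℚ) (hx : x ^ 2 = (d : ℂ)) (hn : ¬ ∃ q : ℚ, q ^ 2 = d) :
    Module.finrank ℚ ℚ⟮x⟯ = 2 := by
  have hb : x ^ 2 ∈ (⊥ : IntermediateField ℚ ℂ) := by
    rw [hx]; exact IntermediateField.mem_bot.2 ⟨d, rfl⟩
  obtain ⟨h1, h2⟩ := aux_sup ⊥ x hb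
  rw [bot_sup_eq] at h1 h2
  rw [IntermediateField.finrank_bot] at h2
  have h0 : 0 < Module.finrank ℚ ℚ⟮x⟯ := Module.finrank_pos
  have h3 : Module.finrank ℚ ℚ⟮x⟯ ≠ 1 := by
    intro h
    rw [IntermediateField.finrank_adjoin_simple_eq_one_iff] at h
    obtain ⟨q, rfl⟩ := IntermediateField.mem_bot.1 h
    refine hn ⟨q, ?_⟩
    have : ((q : ℂ)) ^ 2 = d := hx
    exact_mod_cast this
  omega

lemma aux_normal {F K : Type*} [Field F] [Field K] [Algebra F K] (A B : IntermediateField F K)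
    (hA : Module.finrank F A = 2) (hB : Module.finrank F B = 2) :
    Normal F (A ⊔ B : IntermediateField F K) := by
  have : Algebra.IsQuadraticExtension F A := ⟨hA⟩
  have : Algebra.IsQuadraticExtension F B := ⟨hB⟩
  infer_instance

open IntermediateField in
lemma aux_K (s : ℝ) (d : ℚ) (hs : s ^ 2 = d) (hn : ¬ ∃ q : ℚ, q ^ 2 = d) :
    IsGalois ℚ (adjoin ℚ {Complex.I, (s : ℂ)}) ∧
    FiniteDimensional ℚ (adjoin ℚ {Complex.I, (s : ℂ)}) ∧
    Module.finrank ℚ (adjoin ℚ {Complex.I, (s : ℂ)}) = 4 := by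
  have e : adjoin ℚ {Complex.I, (s : ℂ)} = ℚ⟮(s:ℂ)⟯ ⊔ ℚ⟮Complex.I⟯ := by
    rw [Set.insert_eq, adjoin_union, sup_comm]
  have hs2 : Module.finrank ℚ ℚ⟮(s:ℂ)⟯ = 2 := aux_quad _ d (by exact_mod_cast hs) hn
  have hi2 : Module.finrank ℚ ℚ⟮Complex.I⟯ = 2 := aux_quad _ (-1) (by simp) (by
    rintro ⟨q, hq⟩; nlinarith [sq_nonneg q])
  have : FiniteDimensional ℚ ℚ⟮(s:ℂ)⟯ := Module.finite_of_finrank_pos (by omega)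
  have hI : Complex.I ^ 2 ∈ ℚ⟮(s:ℂ)⟯ := by
    rw [Complex.I_sq]; exact neg_mem (one_mem _)
  obtain ⟨hf, hle⟩ := aux_sup ℚ⟮(s:ℂ)⟯ Complex.I hI
  rw [e]
  have hN : Normal ℚ (ℚ⟮(s:ℂ)⟯ ⊔ ℚ⟮Complex.I⟯ : IntermediateField ℚ ℂ) := by
    convert aux_normal ℚ⟮(s:ℂ)⟯ ℚ⟮Complex.I⟯ hs2 hi2
    exact Subsingleton.elim _ _
  refine ⟨⟨⟩, hf, ?_⟩
  have hlt : ¬ (Module.finrank ℚ (ℚ⟮(s:ℂ)⟯ ⊔ ℚ⟮Complex.I⟯ : IntermediateField ℚ ℂ) ≤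
      Module.finrank ℚ ℚ⟮(s:ℂ)⟯) := by
    intro h
    have heq := eq_of_le_of_finrank_le (le_sup_left : ℚ⟮(s:ℂ)⟯ ≤ ℚ⟮(s:ℂ)⟯ ⊔ ℚ⟮Complex.I⟯) h
    have hmem : Complex.I ∈ ℚ⟮(s:ℂ)⟯ := by
      rw [heq]
      exact (le_sup_right : ℚ⟮Complex.I⟯ ≤ ℚ⟮(s:ℂ)⟯ ⊔ ℚ⟮Complex.I⟯) (mem_adjoin_simple_self ℚ _)
    have hreal : ℚ⟮(s:ℂ)⟯ ≤ (IsScalarTower.toAlgHom ℚ ℝ ℂ).fieldRange := by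
      rw [adjoin_simple_le_iff]
      exact ⟨s, rfl⟩
    obtain ⟨r, hr⟩ := hreal hmem
    have := congrArg Complex.im hr
    simp at this
  have hdvd : Module.finrank ℚ ℚ⟮(s:ℂ)⟯ ∣
      Module.finrank ℚ (ℚ⟮(s:ℂ)⟯ ⊔ ℚ⟮Complex.I⟯ : IntermediateField ℚ ℂ) :=
    finrank_dvd_of_le_right le_sup_left
  obtain ⟨k, hk⟩ := hdvd
  rw [hs2] at hk hle hlt
  omega

open IntermediateField in
lemma aux_klein (s : ℝ) (d : ℚ) (hs : s ^ 2 = d) (hn : ¬ ∃ q : ℚ, q ^ 2 = d) :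
    Nonempty (((adjoin ℚ {Complex.I, (s : ℂ)}) ≃ₐ[ℚ] (adjoin ℚ {Complex.I, (s : ℂ)})) ≃*
      (Multiplicative (ZMod 2) × Multiplicative (ZMod 2))) := by
  obtain ⟨h1, h2, h3⟩ := aux_K s d hs hn
  have hcard := IsGalois.card_aut_eq_finrank ℚ (adjoin ℚ {Complex.I, (s : ℂ)})
  rw [h3] at hcard
  have hsq : ∀ σ : (adjoin ℚ {Complex.I, (s : ℂ)}) ≃ₐ[ℚ] (adjoin ℚ {Complex.I, (s : ℂ)}),
      σ ^ 2 = 1 := by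
    intro σ
    have key : ∀ (z : adjoin ℚ {Complex.I, (s : ℂ)}) (q : ℚ), z ^ 2 = algebraMap ℚ _ q →
        σ (σ z) = z := by
      intro z q hz
      have : (σ z) ^ 2 = z ^ 2 := by rw [← map_pow, hz, AlgEquiv.commutes]
      rcases sq_eq_sq_iff_eq_or_eq_neg.1 this with h | h <;> simp [h]
    have hhom : ((σ ^ 2 : (adjoin ℚ {Complex.I, (s : ℂ)}) ≃ₐ[ℚ] _) : _ →ₐ[ℚ] _) =
        AlgHom.id ℚ (adjoin ℚ {Complex.I, (s : ℂ)}) := by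
      apply IntermediateField.algHom_ext_of_eq_adjoin (S := adjoin ℚ {Complex.I, (s : ℂ)}) _ rfl
      rintro x hx
      have hx' := hx
      rcases hx' with rfl | rfl
      · refine key _ (-1) ?_
        apply Subtype.ext
        simp
      · refine key _ d ?_
        apply Subtype.ext
        change (s : ℂ) ^ 2 = ((d : ℚ) : ℂ)
        exact_mod_cast hs
    ext x
    exact congrArg Subtype.val (DFunLike.congr_fun hhom x)
  have : IsKleinFour ((adjoin ℚ {Complex.I, (s : ℂ)}) ≃ₐ[ℚ] (adjoin ℚ {Complex.I, (s : ℂ)})) := by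
    refine ⟨hcard, ?_⟩
    have hd := Monoid.exponent_dvd_of_forall_pow_eq_one hsq
    rcases (Nat.dvd_prime Nat.prime_two).1 hd with h | h
    · rw [Monoid.exp_eq_one_iff] at h
      have h1 : Nat.card ((adjoin ℚ {Complex.I, (s : ℂ)}) ≃ₐ[ℚ] (adjoin ℚ {Complex.I, (s : ℂ)})) ≤ 1 :=
        Finite.card_le_one_iff_subsingleton.2 h
      omega
    · exact h
  have : IsKleinFour (Multiplicative (ZMod 2) × Multiplicative (ZMod 2)) :=
    ⟨by simp, by simp [Monoid.exponent_prod]⟩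
  exact IsKleinFour.nonempty_mulEquiv

/-- For `g, h₁, h₂, h₃ ∈ Gal(F'/ℚ)` acting on `w₁, w₂, w₃, i` as
specified, the fixed field of the subgroup generated by `g, h₁h₂, h₂h₃` equals
`ℚ(i, w₁w₂w₃) = ℚ(√−1, √(1+3a−a³))`, an extension of `ℚ` of degree `4` with Galois group
`ℤ/2ℤ × ℤ/2ℤ`. -/
theorem stmt17 (ρ ρ₂ ρ₃ : ℝ) (hρroot : ρ ^ 3 - 3 * ρ + 1 = 0) (hρneg : ρ < 0)
    (hρ₂ : ρ₂ = 1 / (1 - ρ)) (hρ₃ : ρ₃ = 1 - 1 / ρ)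
    (a : ℚ) (ha₀ : 0 < a) (ha₁ : (a : ℝ) < -ρ)
    (hans : ¬∃ q : ℚ, q ^ 2 = 1 + 3 * a - a ^ 3)
    (w₁ w₂ w₃ : ℂ) (hw₁ : w₁ ^ 2 = ((a : ℝ) + ρ : ℝ)) (hw₂ : w₂ ^ 2 = ((a : ℝ) + ρ₂ : ℝ))
    (hw₃ : w₃ ^ 2 = ((a : ℝ) + ρ₃ : ℝ))
    (F' : IntermediateField ℚ ℂ)
    (hF' : F' = IntermediateField.adjoin ℚ {w₁, w₂, w₃, Complex.I})
    (hm₁ : w₁ ∈ F') (hm₂ : w₂ ∈ F') (hm₃ : w₃ ∈ F') (hmi : Complex.I ∈ F')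
    (g h₁ h₂ h₃ : F' ≃ₐ[ℚ] F')
    (hg₁ : (g ⟨w₁, hm₁⟩ : ℂ) = w₂) (hg₂ : (g ⟨w₂, hm₂⟩ : ℂ) = w₃)
    (hg₃ : (g ⟨w₃, hm₃⟩ : ℂ) = w₁) (hgi : (g ⟨Complex.I, hmi⟩ : ℂ) = Complex.I)
    (hh₁₁ : (h₁ ⟨w₁, hm₁⟩ : ℂ) = -w₁) (hh₁₂ : (h₁ ⟨w₂, hm₂⟩ : ℂ) = w₂)
    (hh₁₃ : (h₁ ⟨w₃, hm₃⟩ : ℂ) = w₃) (hh₁i : (h₁ ⟨Complex.I, hmi⟩ : ℂ) = Complex.I)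
    (hh₂₁ : (h₂ ⟨w₁, hm₁⟩ : ℂ) = w₁) (hh₂₂ : (h₂ ⟨w₂, hm₂⟩ : ℂ) = -w₂)
    (hh₂₃ : (h₂ ⟨w₃, hm₃⟩ : ℂ) = w₃) (hh₂i : (h₂ ⟨Complex.I, hmi⟩ : ℂ) = Complex.I)
    (hh₃₁ : (h₃ ⟨w₁, hm₁⟩ : ℂ) = w₁) (hh₃₂ : (h₃ ⟨w₂, hm₂⟩ : ℂ) = w₂)
    (hh₃₃ : (h₃ ⟨w₃, hm₃⟩ : ℂ) = -w₃) (hh₃i : (h₃ ⟨Complex.I, hmi⟩ : ℂ) = Complex.I) :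
    (IntermediateField.fixedField (Subgroup.closure {g, h₁ * h₂, h₂ * h₃})).map F'.val
        = IntermediateField.adjoin ℚ {Complex.I, w₁ * w₂ * w₃} ∧
    IntermediateField.adjoin ℚ {Complex.I, w₁ * w₂ * w₃}
        = IntermediateField.adjoin ℚ
            {Complex.I, ((Real.sqrt (1 + 3 * (a : ℝ) - (a : ℝ) ^ 3) : ℝ) : ℂ)} ∧
    Module.finrank ℚ (IntermediateField.adjoin ℚ {Complex.I, w₁ * w₂ * w₃}) = 4 ∧
    Nonempty
      ((IntermediateField.adjoin ℚ {Complex.I, w₁ * w₂ * w₃} ≃ₐ[ℚ]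
          IntermediateField.adjoin ℚ {Complex.I, w₁ * w₂ * w₃}) ≃*
        (Multiplicative (ZMod 2) × Multiplicative (ZMod 2))) := by
  have hρ0 : ρ ≠ 0 := hρneg.ne
  have hρ1 : (1 - ρ) ≠ 0 := by linarith
  have hp1 : (a : ℝ) + ρ < 0 := by linarith
  have ha0 : (0 : ℝ) < a := by exact_mod_cast ha₀
  have hp2 : 0 < (a : ℝ) + ρ₂ := by
    have : 0 < ρ₂ := by rw [hρ₂]; apply one_div_pos.2; linarith
    linarith
  have hp3 : 0 < (a : ℝ) + ρ₃ := by
    have : 1 / ρ < 0 := one_div_neg.2 hρneg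
    rw [hρ₃]; linarith
  have hprod : ((a : ℝ) + ρ) * (a + ρ₂) * (a + ρ₃) = -(1 + 3 * (a : ℝ) - (a : ℝ) ^ 3) := by
    rw [hρ₂, hρ₃]
    field_simp
    linear_combination (-((a : ℝ) ^ 2 + a)) * hρroot
  have hDpos : 0 < 1 + 3 * (a : ℝ) - (a : ℝ) ^ 3 := by
    have := mul_neg_of_neg_of_pos (mul_neg_of_neg_of_pos hp1 hp2) hp3
    linarith
  set s : ℝ := Real.sqrt (1 + 3 * (a : ℝ) - (a : ℝ) ^ 3) with hs
  have hs2 : s ^ 2 = 1 + 3 * (a : ℝ) - (a : ℝ) ^ 3 := Real.sq_sqrt hDpos.le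
  have hs2' : s ^ 2 = ((1 + 3 * a - a ^ 3 : ℚ) : ℝ) := by rw [hs2]; push_cast; ring
  have hu2 : (w₁ * w₂ * w₃) ^ 2 = (Complex.I * s) ^ 2 := by
    rw [mul_pow, mul_pow, mul_pow, hw₁, hw₂, hw₃, Complex.I_sq, ← Complex.ofReal_pow, hs2,
      ← Complex.ofReal_mul, ← Complex.ofReal_mul, hprod]
    push_cast; ring
  have hu := sq_eq_sq_iff_eq_or_eq_neg.1 hu2
  have hKeq : IntermediateField.adjoin ℚ {Complex.I, w₁ * w₂ * w₃}
        = IntermediateField.adjoin ℚ {Complex.I, (s : ℂ)} := by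
    have hI : ∀ z, Complex.I ∈ IntermediateField.adjoin ℚ {Complex.I, (z : ℂ)} := fun z =>
      IntermediateField.subset_adjoin ℚ _ (by simp)
    have hz : ∀ z, z ∈ IntermediateField.adjoin ℚ {Complex.I, (z : ℂ)} := fun z =>
      IntermediateField.subset_adjoin ℚ _ (by simp)
    apply le_antisymm
    · rw [IntermediateField.adjoin_le_iff]
      rintro x (rfl | rfl)
      · exact hI _
      · have := mul_mem (hI (s : ℂ)) (hz (s : ℂ))
        rcases hu with h | h
        · rw [h]; exact this
        · rw [h]; exact neg_mem this
    · rw [IntermediateField.adjoin_le_iff]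
      rintro x (rfl | rfl)
      · exact hI _
      · have := mul_mem (hI (w₁ * w₂ * w₃)) (hz (w₁ * w₂ * w₃))
        rcases hu with h | h
        · have e : (s : ℂ) = -(Complex.I * (w₁ * w₂ * w₃)) := by
            rw [h]; linear_combination (s : ℂ) * Complex.I_sq
          rw [e]; exact neg_mem this
        · have e : (s : ℂ) = (Complex.I * (w₁ * w₂ * w₃)) := by
            rw [h]; linear_combination (s : ℂ) * Complex.I_sq
          rw [e]; exact this
  refine ⟨?_, hKeq, ?_, ?_⟩
  rotate_left
  · rw [hKeq]; exact (aux_K s _ hs2' hans).2.2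
  · rw [hKeq]; exact aux_klein s _ hs2' hans
  -- upper bound on the degree of F'
  have hρint : IsIntegral ℚ (ρ : ℂ) ∧ Module.finrank ℚ (IntermediateField.adjoin ℚ {(ρ : ℂ)}) ≤ 3 := by
    have hm : (Polynomial.X ^ 3 - 3 * Polynomial.X + 1 : Polynomial ℚ).Monic := by monicity!
    have hd : (Polynomial.X ^ 3 - 3 * Polynomial.X + 1 : Polynomial ℚ).natDegree = 3 := by
      compute_degree!
    have hz : Polynomial.aeval (ρ : ℂ) (Polynomial.X ^ 3 - 3 * Polynomial.X + 1 : Polynomial ℚ) = 0 := by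
      have h3 : (3 : Polynomial ℚ) = Polynomial.C 3 := rfl
      rw [h3]
      simp
      have := congrArg (fun r : ℝ => (r : ℂ)) hρroot
      push_cast at this
      exact this
    have hint : IsIntegral ℚ (ρ : ℂ) := ⟨_, hm, hz⟩
    refine ⟨hint, ?_⟩
    rw [IntermediateField.adjoin.finrank hint, ← hd]
    exact Polynomial.natDegree_le_of_dvd (minpoly.dvd ℚ _ hz) hm.ne_zero
  obtain ⟨hρint, hρdeg⟩ := hρint
  have hf0 : FiniteDimensional ℚ (IntermediateField.adjoin ℚ {(ρ : ℂ)}) :=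
    IntermediateField.adjoin.finiteDimensional hρint
  set E0 := IntermediateField.adjoin ℚ {(ρ : ℂ)} with hE0
  have hρm : (ρ : ℂ) ∈ E0 := IntermediateField.mem_adjoin_simple_self ℚ _
  have ham : ((a : ℝ) : ℂ) ∈ E0 := by
    have := E0.algebraMap_mem a
    simpa using this
  have m1 : w₁ ^ 2 ∈ E0 := by
    rw [hw₁, Complex.ofReal_add]; exact add_mem ham hρm
  have m2 : w₂ ^ 2 ∈ E0 := by
    rw [hw₂, hρ₂, Complex.ofReal_add]
    refine add_mem ham ?_
    push_cast
    exact div_mem (one_mem _) (sub_mem (one_mem _) hρm)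
  have m3 : w₃ ^ 2 ∈ E0 := by
    rw [hw₃, hρ₃, Complex.ofReal_add]
    refine add_mem ham ?_
    push_cast
    exact sub_mem (one_mem _) (div_mem (one_mem _) hρm)
  have m4 : Complex.I ^ 2 ∈ E0 := by
    rw [Complex.I_sq]; exact neg_mem (one_mem _)
  obtain ⟨f1, d1⟩ := aux_sup E0 w₁ m1
  set E1 := E0 ⊔ IntermediateField.adjoin ℚ {w₁} with hE1
  have l1 : E0 ≤ E1 := le_sup_left
  obtain ⟨f2, d2⟩ := aux_sup E1 w₂ (l1 m2)
  set E2 := E1 ⊔ IntermediateField.adjoin ℚ {w₂} with hE2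
  have l2 : E1 ≤ E2 := le_sup_left
  obtain ⟨f3, d3⟩ := aux_sup E2 w₃ (l2 (l1 m3))
  set E3 := E2 ⊔ IntermediateField.adjoin ℚ {w₃} with hE3
  have l3 : E2 ≤ E3 := le_sup_left
  obtain ⟨f4, d4⟩ := aux_sup E3 Complex.I (l3 (l2 (l1 m4)))
  set E4 := E3 ⊔ IntermediateField.adjoin ℚ {Complex.I} with hE4
  have l4 : E3 ≤ E4 := le_sup_left
  have hFle : F' ≤ E4 := by
    have hself : ∀ (E : IntermediateField ℚ ℂ) (x : ℂ), x ∈ E ⊔ IntermediateField.adjoin ℚ {x} :=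
      fun E x => (le_sup_right : _ ≤ E ⊔ IntermediateField.adjoin ℚ {x})
        (IntermediateField.mem_adjoin_simple_self ℚ x)
    rw [hF', IntermediateField.adjoin_le_iff]
    rintro x (rfl | rfl | rfl | rfl)
    · exact l4 (l3 (l2 (hself _ _)))
    · exact l4 (l3 (hself _ _))
    · exact l4 (hself _ _)
    · exact hself _ _
  have hFfin : FiniteDimensional ℚ F' :=
    Submodule.finiteDimensional_of_le (S₁ := F'.toSubalgebra.toSubmodule)
      (S₂ := E4.toSubalgebra.toSubmodule) hFle
  have hFdeg : Module.finrank ℚ F' ≤ 48 := by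
    have : Module.finrank ℚ F' ≤ Module.finrank ℚ E4 :=
      Submodule.finrank_mono (s := F'.toSubalgebra.toSubmodule)
        (t := E4.toSubalgebra.toSubmodule) hFle
    omega
  -- the automorphisms
  have hw1 : w₁ ≠ 0 := by
    rintro rfl
    have : (0 : ℝ) = (a : ℝ) + ρ := by
      rw [zero_pow two_ne_zero] at hw₁
      exact_mod_cast hw₁
    linarith
  have hw2 : w₂ ≠ 0 := by
    rintro rfl
    have : (0 : ℝ) = (a : ℝ) + ρ₂ := by
      rw [zero_pow two_ne_zero] at hw₂
      exact_mod_cast hw₂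
    linarith
  have hw12 : w₂ ≠ w₁ := by
    rintro rfl
    rw [hw₁] at hw₂
    have : (a : ℝ) + ρ = (a : ℝ) + ρ₂ := by exact_mod_cast hw₂
    linarith
  have hext : ∀ σ τ : F' ≃ₐ[ℚ] F', σ ⟨w₁, hm₁⟩ = τ ⟨w₁, hm₁⟩ → σ ⟨w₂, hm₂⟩ = τ ⟨w₂, hm₂⟩ →
      σ ⟨w₃, hm₃⟩ = τ ⟨w₃, hm₃⟩ → σ ⟨Complex.I, hmi⟩ = τ ⟨Complex.I, hmi⟩ → σ = τ := by
    intro σ τ e1 e2 e3 e4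
    have hhom : (σ : F' →ₐ[ℚ] F') = τ := by
      apply IntermediateField.algHom_ext_of_eq_adjoin (S := F') _ hF'
      rintro x hx
      rcases id hx with rfl | rfl | rfl | rfl
      exacts [e1, e2, e3, e4]
    ext x
    exact congrArg Subtype.val (DFunLike.congr_fun hhom x)
  have G1 : g ⟨w₁, hm₁⟩ = ⟨w₂, hm₂⟩ := Subtype.ext hg₁
  have G2 : g ⟨w₂, hm₂⟩ = ⟨w₃, hm₃⟩ := Subtype.ext hg₂
  have G3 : g ⟨w₃, hm₃⟩ = ⟨w₁, hm₁⟩ := Subtype.ext hg₃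
  have Gi : g ⟨Complex.I, hmi⟩ = ⟨Complex.I, hmi⟩ := Subtype.ext hgi
  have A1 : h₁ ⟨w₁, hm₁⟩ = -⟨w₁, hm₁⟩ := Subtype.ext hh₁₁
  have A2 : h₁ ⟨w₂, hm₂⟩ = ⟨w₂, hm₂⟩ := Subtype.ext hh₁₂
  have A3 : h₁ ⟨w₃, hm₃⟩ = ⟨w₃, hm₃⟩ := Subtype.ext hh₁₃
  have Ai : h₁ ⟨Complex.I, hmi⟩ = ⟨Complex.I, hmi⟩ := Subtype.ext hh₁i
  have B1 : h₂ ⟨w₁, hm₁⟩ = ⟨w₁, hm₁⟩ := Subtype.ext hh₂₁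
  have B2 : h₂ ⟨w₂, hm₂⟩ = -⟨w₂, hm₂⟩ := Subtype.ext hh₂₂
  have B3 : h₂ ⟨w₃, hm₃⟩ = ⟨w₃, hm₃⟩ := Subtype.ext hh₂₃
  have Bi : h₂ ⟨Complex.I, hmi⟩ = ⟨Complex.I, hmi⟩ := Subtype.ext hh₂i
  have C1 : h₃ ⟨w₁, hm₁⟩ = ⟨w₁, hm₁⟩ := Subtype.ext hh₃₁
  have C2 : h₃ ⟨w₂, hm₂⟩ = ⟨w₂, hm₂⟩ := Subtype.ext hh₃₂
  have C3 : h₃ ⟨w₃, hm₃⟩ = -⟨w₃, hm₃⟩ := Subtype.ext hh₃₃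
  have Ci : h₃ ⟨Complex.I, hmi⟩ = ⟨Complex.I, hmi⟩ := Subtype.ext hh₃i
  have hn1 : (⟨w₁, hm₁⟩ : F') ≠ 0 := fun h => hw1 (congrArg Subtype.val h)
  have hn2 : (⟨w₂, hm₂⟩ : F') ≠ 0 := fun h => hw2 (congrArg Subtype.val h)
  have hn12 : (⟨w₂, hm₂⟩ : F') ≠ ⟨w₁, hm₁⟩ := fun h => hw12 (congrArg Subtype.val h)
  generalize hv1 : (⟨w₁, hm₁⟩ : F') = v1 at *
  generalize hv2 : (⟨w₂, hm₂⟩ : F') = v2 at *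
  generalize hv3 : (⟨w₃, hm₃⟩ : F') = v3 at *
  generalize hvi : (⟨Complex.I, hmi⟩ : F') = vi at *
  set H := Subgroup.closure {g, h₁ * h₂, h₂ * h₃} with hH
  have mg : g ∈ H := Subgroup.subset_closure (by simp)
  have mx : h₁ * h₂ ∈ H := Subgroup.subset_closure (by simp)
  have my : h₂ * h₃ ∈ H := Subgroup.subset_closure (by simp)
  have hg3 : orderOf g = 3 := by
    refine orderOf_eq_prime ?_ ?_
    · apply hext <;> simp [pow_succ, G1, G2, G3, Gi]
    · intro h
      rw [h] at G1
      exact hn12 G1.symm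
  have h3 : 3 ∣ Nat.card H := by
    rw [← hg3, ← Subgroup.orderOf_mk g mg]
    exact orderOf_dvd_natCard _
  have h4 : 4 ∣ Nat.card H := by
    refine aux_card H (h₁ * h₂) (h₂ * h₃) mx my ?_ ?_ ?_ ?_ ?_ ?_
    · apply hext <;> simp [A1, A2, A3, Ai, B1, B2, B3, Bi]
    · apply hext <;> simp [C1, C2, C3, Ci, B1, B2, B3, Bi]
    · apply hext <;> simp [A1, A2, A3, Ai, C1, C2, C3, Ci, B1, B2, B3, Bi]
    · intro h
      have := DFunLike.congr_fun h v1
      simp [B1, A1] at this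
      exact hn1 (self_eq_neg.1 this.symm)
    · intro h
      have := DFunLike.congr_fun h v2
      simp [B2, C2] at this
      exact hn2 (self_eq_neg.1 this.symm)
    · intro h
      have := DFunLike.congr_fun h v1
      simp [B1, A1, C1] at this
      exact hn1 (self_eq_neg.1 this.symm)
  have h12 : 12 ≤ Nat.card H := by
    have := Nat.card_pos (α := H)
    omega
  have hfix := IntermediateField.finrank_fixedField_eq_card (F := ℚ) (E := F') H
  have hmul := Module.finrank_mul_finrank ℚ (IntermediateField.fixedField H) F'
  have hfix4 : Module.finrank ℚ (IntermediateField.fixedField H) ≤ 4 := by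
    rw [hfix] at hmul
    by_contra hcon
    have : 5 * 12 ≤ 48 := by
      calc 5 * 12 ≤ Module.finrank ℚ (IntermediateField.fixedField H) * Nat.card H := Nat.mul_le_mul (by omega) h12
        _ ≤ 48 := by rw [hmul]; exact hFdeg
    omega
  have hmem : ∀ z : F', g z = z → h₁ (h₂ z) = z → h₂ (h₃ z) = z →
      (z : ℂ) ∈ (IntermediateField.fixedField H).map F'.val := by
    intro z z1 z2 z3
    refine ⟨z, ?_, rfl⟩
    change z ∈ IntermediateField.fixedField H
    rw [IntermediateField.mem_fixedField_iff]
    intro σ hσ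
    have hle : H ≤ MulAction.stabilizer (F' ≃ₐ[ℚ] F') z := by
      rw [hH, Subgroup.closure_le]
      rintro τ (rfl | rfl | rfl)
      exacts [z1, z2, z3]
    exact hle hσ
  symm
  have hfinmap : Module.finrank ℚ ((IntermediateField.fixedField H).map F'.val) =
      Module.finrank ℚ (IntermediateField.fixedField H) :=
    ((IntermediateField.fixedField H).equivMap F'.val).toLinearEquiv.finrank_eq.symm
  have : FiniteDimensional ℚ ((IntermediateField.fixedField H).map F'.val) :=
    Module.Finite.equiv ((IntermediateField.fixedField H).equivMap F'.val).toLinearEquiv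
  apply IntermediateField.eq_of_le_of_finrank_le
  · rw [IntermediateField.adjoin_le_iff]
    rintro x (rfl | rfl)
    · have := hmem vi Gi (by rw [Bi, Ai]) (by rw [Ci, Bi])
      rwa [← hvi] at this
    · have := hmem (v1 * v2 * v3) (by simp only [map_mul, G1, G2, G3]; ring)
        (by simp only [map_mul, map_neg, A1, A2, A3, B1, B2, B3]; ring)
        (by simp only [map_mul, map_neg, C1, C2, C3, B1, B2, B3]; ring)
      rwa [← hv1, ← hv2, ← hv3] at this
  · rw [hfinmap, hKeq, (aux_K s _ hs2' hans).2.2]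
    exact hfix4
end
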